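/- arXiv:2506.23970 — 2 statements merged into one kernel-verified Lean document; each statement's English description precedes it below -/
import Mathlib

section
/- Let p : ℕ → [0,1] satisfy n·p(n)/log n → ∞ as n → ∞. Then for every ε > 0, with high probability the Erdős–Rényi random graph G ~ G(n, p(n)) has the following property: for every vertex r of G, there exist at least ⌊(1-ε)·n·p(n)⌋ independent spanning trees of G rooted at r. -/
open Filter

/-- The spanning trees `T 0, …, T (t-1)` of `G` are independent spanning trees rooted at `r`:
each `T i` is a spanning tree of `G` (a tree on the whole vertex set, all of whose edges lie
in `G`), and for every vertex `v ≠ r`, the paths from `v` to `r` in any two distinct trees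
share only the vertices `v` and `r`. -/
def IsIST {n : ℕ} (G : SimpleGraph (Fin n)) (r : Fin n) {t : ℕ}
    (T : Fin t → SimpleGraph (Fin n)) : Prop :=
  (∀ i, T i ≤ G ∧ (T i).IsTree) ∧
  ∀ v : Fin n, v ≠ r → ∀ i j : Fin t, i ≠ j →
    ∀ p : (T i).Walk v r, ∀ q : (T j).Walk v r, p.IsPath → q.IsPath →
      ∀ x : Fin n, x ∈ p.support → x ∈ q.support → x = v ∨ x = r

/-- `G` contains (at least) `t` independent spanning trees rooted at `r`. -/
def HasISTs {n : ℕ} (G : SimpleGraph (Fin n)) (r : Fin n) (t : ℕ) : Prop :=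
  ∃ T : Fin t → SimpleGraph (Fin n), IsIST G r T

open Classical in
/-- Probability that the Erdős–Rényi random graph `G(n,p)` satisfies the property `A`:
each graph `G` on `[n]` receives probability `p^{e(G)} (1-p)^{C(n,2)-e(G)}`. -/
noncomputable def erProb (n : ℕ) (p : ℝ) (A : SimpleGraph (Fin n) → Prop) : ℝ :=
  ∑ G : SimpleGraph (Fin n),
    if A G then p ^ (Nat.card G.edgeSet) * (1 - p) ^ (n.choose 2 - Nat.card G.edgeSet)
    else 0

/-!
Fix a root `r`. Suppose that `C 1, …, C t` are disjoint sets of vertices, the *cores*, each of which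
induces a connected graph together with `r`. In the `i`-th tree, a vertex in or adjacent to `C i`
walks to `r` inside `C i`; any other vertex `v` first steps to a *gateway*, a common neighbour of
`v` and `C i`. If for each `v` the gateways are distinct and avoid all cores, the trees are
independent. By Hall's theorem such gateways exist unless some cores have too few neighbours among
the neighbours of `v`. This has probability at most `n⁻³` when the edges at `r`, at `v` and inside
the cores are revealed first, since the remaining pairs are still independent of them.

For `p ≥ ε / 40` the cores are single neighbours of `r`. For smaller `p` a single vertex has too few
neighbours, so the cores are connected sets of about `ε / (10 p)` vertices, found inside a small
reservoir `B`, each attached to `r` through its own neighbour of `r` outside of `B` (again by Hall's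
theorem).
-/

open Finset

section RandomGraph

variable {n : ℕ} {p : ℝ}

/-- The probability of the single outcome `G` in `G(n, p)`. -/
noncomputable def erWeight (n : ℕ) (p : ℝ) (G : SimpleGraph (Fin n)) : ℝ :=
  p ^ Nat.card G.edgeSet * (1 - p) ^ (n.choose 2 - Nat.card G.edgeSet)

open Classical in
lemma erProb_eq_sum_erWeight (A : SimpleGraph (Fin n) → Prop) :
    erProb n p A = ∑ G, if A G then erWeight n p G else 0 := by
  unfold erProb erWeight
  congr!

lemma erWeight_nonneg (h0 : 0 ≤ p) (h1 : p ≤ 1) (G : SimpleGraph (Fin n)) :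
    0 ≤ erWeight n p G :=
  mul_nonneg (pow_nonneg h0 _) (pow_nonneg (sub_nonneg.2 h1) _)

lemma card_edgeSet_le_choose_two (G : SimpleGraph (Fin n)) :
    Nat.card G.edgeSet ≤ n.choose 2 := by
  classical
  rw [Nat.card_eq_fintype_card, ← SimpleGraph.edgeFinset_card]
  exact G.card_edgeFinset_le_card_choose_two.trans_eq (by rw [Fintype.card_fin])

open Classical in
lemma sum_edgeFinset_eq_sum_powerset {V M : Type*} [Fintype V] [DecidableEq V]
    [AddCommMonoid M] (φ : Finset (Sym2 V) → M) :
    ∑ G : SimpleGraph V, φ G.edgeFinset =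
      ∑ S ∈ (⊤ : SimpleGraph V).edgeFinset.powerset, φ S := by
  refine sum_bij' (fun G _ => G.edgeFinset) (fun S _ => SimpleGraph.fromEdgeSet (S : Set (Sym2 V)))
    (fun G _ => mem_powerset.2 (SimpleGraph.edgeFinset_mono le_top)) (by simp) (by simp) ?_
    (fun _ _ => rfl)
  intro S hS
  have hdiag : ∀ e ∈ S, ¬ e.IsDiag := fun e he => by
    simpa using mem_powerset.1 hS he
  ext e
  simpa using hdiag e

open Classical in
lemma sum_erWeight_mul_prod_edgeFinset (n : ℕ) (p : ℝ) (f : Sym2 (Fin n) → ℝ) :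
    ∑ G, erWeight n p G * ∏ e ∈ G.edgeFinset, f e =
      ∏ e ∈ (⊤ : SimpleGraph (Fin n)).edgeFinset, (p * f e + (1 - p)) := by
  rw [prod_add, ← sum_edgeFinset_eq_sum_powerset]
  refine sum_congr rfl fun G _ => ?_
  have hcard : #((⊤ : SimpleGraph (Fin n)).edgeFinset \ G.edgeFinset) =
      n.choose 2 - Nat.card G.edgeSet := by
    rw [card_sdiff_of_subset (SimpleGraph.edgeFinset_mono le_top),
      SimpleGraph.card_edgeFinset_top_eq_card_choose_two, Fintype.card_fin,
      SimpleGraph.edgeFinset_card, Nat.card_eq_fintype_card]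
  rw [prod_mul_distrib, prod_const, prod_const, hcard, SimpleGraph.edgeFinset_card,
    ← Nat.card_eq_fintype_card, erWeight]
  ring

open Classical in
lemma sum_erWeight_mul_pow_card_filter (p x : ℝ) {F : Finset (Sym2 (Fin n))}
    (hF : ∀ e ∈ F, ¬ e.IsDiag) :
    ∑ G, erWeight n p G * x ^ #{e ∈ F | e ∈ G.edgeSet} = (1 - p + p * x) ^ #F := by
  have hFtop : F ⊆ (⊤ : SimpleGraph (Fin n)).edgeFinset := fun e he => by simpa using hF e he
  calc ∑ G, erWeight n p G * x ^ #{e ∈ F | e ∈ G.edgeSet}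
      = ∑ G, erWeight n p G * ∏ e ∈ G.edgeFinset, if e ∈ F then x else 1 := by
        refine sum_congr rfl fun G _ => ?_
        have hinter : ({e ∈ F | e ∈ G.edgeSet} : Finset _) = G.edgeFinset ∩ F := by
          ext e; simp [and_comm]
        rw [hinter, prod_ite_mem, prod_const]
    _ = ∏ e ∈ (⊤ : SimpleGraph (Fin n)).edgeFinset, if e ∈ F then 1 - p + p * x else 1 := by
        rw [sum_erWeight_mul_prod_edgeFinset]
        refine prod_congr rfl fun e _ => ?_
        split_ifs <;> ring
    _ = (1 - p + p * x) ^ #F := by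
        rw [prod_ite_mem, inter_eq_right.2 hFtop, prod_const]

lemma sum_erWeight (n : ℕ) (p : ℝ) : ∑ G, erWeight n p G = 1 := by
  simpa using sum_erWeight_mul_pow_card_filter (n := n) p 1 (F := ∅) (by simp)

lemma erProb_mono (h0 : 0 ≤ p) (h1 : p ≤ 1) {A B : SimpleGraph (Fin n) → Prop}
    (h : ∀ G, A G → B G) : erProb n p A ≤ erProb n p B := by
  simp only [erProb_eq_sum_erWeight]
  refine sum_le_sum fun G _ => ?_
  have := erWeight_nonneg h0 h1 G
  have := h G
  split_ifs <;> tauto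

lemma erProb_nonneg (h0 : 0 ≤ p) (h1 : p ≤ 1) (A : SimpleGraph (Fin n) → Prop) :
    0 ≤ erProb n p A := by
  rw [erProb_eq_sum_erWeight]
  refine sum_nonneg fun G _ => ?_
  split_ifs
  exacts [erWeight_nonneg h0 h1 G, le_rfl]

lemma erProb_not (A : SimpleGraph (Fin n) → Prop) :
    erProb n p (fun G => ¬ A G) = 1 - erProb n p A := by
  rw [eq_sub_iff_add_eq, erProb_eq_sum_erWeight, erProb_eq_sum_erWeight, ← sum_erWeight n p,
    ← sum_add_distrib]
  refine sum_congr rfl fun G _ => ?_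
  by_cases hA : A G <;> simp [hA]

lemma erProb_le_one (h0 : 0 ≤ p) (h1 : p ≤ 1) (A : SimpleGraph (Fin n) → Prop) :
    erProb n p A ≤ 1 := by
  linarith [erProb_not (p := p) A, erProb_nonneg h0 h1 (fun G => ¬ A G)]

lemma erProb_or_le (h0 : 0 ≤ p) (h1 : p ≤ 1) (A B : SimpleGraph (Fin n) → Prop) :
    erProb n p (fun G => A G ∨ B G) ≤ erProb n p A + erProb n p B := by
  simp only [erProb_eq_sum_erWeight, ← sum_add_distrib]
  refine sum_le_sum fun G _ => ?_
  have := erWeight_nonneg h0 h1 G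
  by_cases hA : A G <;> by_cases hB : B G <;> simp [hA, hB, this]

lemma erProb_exists_mem_le (h0 : 0 ≤ p) (h1 : p ≤ 1) {ι : Type*} (s : Finset ι)
    (A : ι → SimpleGraph (Fin n) → Prop) :
    erProb n p (fun G => ∃ i ∈ s, A i G) ≤ ∑ i ∈ s, erProb n p (A i) := by
  classical
  simp only [erProb_eq_sum_erWeight]
  rw [sum_comm]
  refine sum_le_sum fun G _ => ?_
  have hterm : ∀ i ∈ s, 0 ≤ if A i G then erWeight n p G else 0 := by
    intro i _
    split_ifs
    exacts [erWeight_nonneg h0 h1 G, le_rfl]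
  split_ifs with h
  · obtain ⟨i, hi, hA⟩ := h
    simpa [hA] using single_le_sum hterm hi
  · exact sum_nonneg hterm

lemma erProb_exists_mem_le_card_mul (h0 : 0 ≤ p) (h1 : p ≤ 1) {ι : Type*} {s : Finset ι}
    {A : ι → SimpleGraph (Fin n) → Prop} {c : ℝ} (h : ∀ i ∈ s, erProb n p (A i) ≤ c) :
    erProb n p (fun G => ∃ i ∈ s, A i G) ≤ #s * c :=
  (erProb_exists_mem_le h0 h1 s A).trans <| (sum_le_sum h).trans_eq <| by simp

lemma erProb_exists_pair_le (h0 : 0 ≤ p) (h1 : p ≤ 1)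
    {A : Fin n → Fin n → SimpleGraph (Fin n) → Prop}
    (h : ∀ r v, erProb n p (A r v) ≤ 1 / (n : ℝ) ^ 3) :
    erProb n p (fun G => ∃ r v, A r v G) ≤ 1 / n := by
  calc erProb n p (fun G => ∃ r v, A r v G)
      ≤ erProb n p (fun G => ∃ x ∈ (univ : Finset (Fin n × Fin n)), A x.1 x.2 G) :=
        erProb_mono h0 h1 fun G ⟨r, v, hG⟩ => ⟨(r, v), mem_univ _, hG⟩
    _ ≤ #(univ : Finset (Fin n × Fin n)) * (1 / (n : ℝ) ^ 3) :=
        erProb_exists_mem_le_card_mul h0 h1 fun x _ => h x.1 x.2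
    _ = 1 / n := by
        rcases Nat.eq_zero_or_pos n with rfl | hn
        · simp
        · have : (0 : ℝ) < n := by exact_mod_cast hn
          simp only [card_univ, Fintype.card_prod, Fintype.card_fin, Nat.cast_mul]
          field_simp

lemma one_sub_pow_le_exp (h1 : p ≤ 1) (N : ℕ) : (1 - p) ^ N ≤ Real.exp (-(p * N)) :=
  calc (1 - p) ^ N ≤ Real.exp (-p) ^ N :=
        pow_le_pow_left₀ (sub_nonneg.2 h1) (Real.one_sub_le_exp_neg p) N
    _ = Real.exp (-(p * N)) := by rw [← Real.exp_nat_mul]; ring_nf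

lemma erProb_forall_notMem_edgeSet (p : ℝ) {F : Finset (Sym2 (Fin n))}
    (hF : ∀ e ∈ F, ¬ e.IsDiag) :
    erProb n p (fun G => ∀ e ∈ F, e ∉ G.edgeSet) = (1 - p) ^ #F := by
  classical
  have hmgf := sum_erWeight_mul_pow_card_filter p 0 hF
  rw [mul_zero, add_zero] at hmgf
  rw [erProb_eq_sum_erWeight, ← hmgf]
  refine sum_congr rfl fun G _ => ?_
  simp [zero_pow_eq, filter_eq_empty_iff]

lemma erProb_no_adj_between_le (h1 : p ≤ 1) {A B : Finset (Fin n)}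
    (hAB : Disjoint A B) :
    erProb n p (fun G => ∀ x ∈ A, ∀ y ∈ B, ¬ G.Adj x y) ≤ Real.exp (-(p * (#A * #B))) := by
  set F : Finset (Sym2 (Fin n)) := (A ×ˢ B).image fun q => s(q.1, q.2)
  have hcard : #F = #A * #B := by
    rw [card_image_of_injOn, card_product]
    rintro ⟨x, y⟩ hxy ⟨x', y'⟩ hxy' h
    simp only [coe_product, Set.mem_prod, mem_coe] at hxy hxy'
    rcases Sym2.eq_iff.1 h with ⟨rfl, rfl⟩ | ⟨rfl, rfl⟩
    · rfl
    · exact absurd hxy'.2 (disjoint_left.1 hAB hxy.1)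
  have hF : ∀ e ∈ F, ¬ e.IsDiag := by
    simp only [F, forall_mem_image, mem_product, Sym2.mk_isDiag_iff]
    exact fun q hq => disjoint_iff_ne.1 hAB _ hq.1 _ hq.2
  have hevent : (fun G : SimpleGraph (Fin n) => ∀ x ∈ A, ∀ y ∈ B, ¬ G.Adj x y) =
      fun G => ∀ e ∈ F, e ∉ G.edgeSet := by
    funext G
    simp only [F, forall_mem_image, mem_product, SimpleGraph.mem_edgeSet, Prod.forall, and_imp,
      eq_iff_iff]
    exact ⟨fun h x y hx hy => h x hx y hy, fun h x hx y hy => h x y hx hy⟩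
  rw [hevent, erProb_forall_notMem_edgeSet p hF]
  exact (one_sub_pow_le_exp h1 _).trans_eq (by rw [hcard, Nat.cast_mul])

lemma exp_neg_le_one_sub_add_sq {l : ℝ} (hl : 0 ≤ l) : Real.exp (-l) ≤ 1 - l + l ^ 2 / 2 := by
  have hquad := Real.quadratic_le_exp_of_nonneg hl
  have hpos : 0 ≤ 1 - l + l ^ 2 / 2 := by nlinarith [sq_nonneg (l - 1)]
  rw [Real.exp_neg, inv_le_iff_one_le_mul₀ (Real.exp_pos l)]
  nlinarith [mul_le_mul_of_nonneg_left hquad hpos, sq_nonneg (l ^ 2)]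

lemma one_sub_add_mul_exp_neg_pow_le (h0 : 0 ≤ p) (h1 : p ≤ 1) {l : ℝ} (hl : 0 ≤ l) (N : ℕ) :
    (1 - p + p * Real.exp (-l)) ^ N ≤ Real.exp (-(N * p * (l - l ^ 2 / 2))) := by
  have hbase : 1 - p + p * Real.exp (-l) ≤ Real.exp (-(p * (l - l ^ 2 / 2))) := by
    have := Real.add_one_le_exp (-(p * (l - l ^ 2 / 2)))
    nlinarith [mul_le_mul_of_nonneg_left (exp_neg_le_one_sub_add_sq hl) h0]
  have hnonneg : 0 ≤ 1 - p + p * Real.exp (-l) :=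
    add_nonneg (sub_nonneg.2 h1) (mul_nonneg h0 (Real.exp_pos _).le)
  calc (1 - p + p * Real.exp (-l)) ^ N
      ≤ Real.exp (-(p * (l - l ^ 2 / 2))) ^ N := pow_le_pow_left₀ hnonneg hbase N
    _ = Real.exp (-(N * p * (l - l ^ 2 / 2))) := by rw [← Real.exp_nat_mul]; ring_nf

open Classical in
lemma erProb_card_filter_le_le_exp (h0 : 0 ≤ p) (h1 : p ≤ 1) {F : Finset (Sym2 (Fin n))}
    (hF : ∀ e ∈ F, ¬ e.IsDiag) (a : ℝ) {l : ℝ} (hl : 0 ≤ l) :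
    erProb n p (fun G => (#{e ∈ F | e ∈ G.edgeSet} : ℝ) ≤ a) ≤
      Real.exp (l * a - #F * p * (l - l ^ 2 / 2)) := by
  have hmarkov : erProb n p (fun G => (#{e ∈ F | e ∈ G.edgeSet} : ℝ) ≤ a) ≤
      Real.exp (l * a) * ∑ G, erWeight n p G * Real.exp (-l) ^ #{e ∈ F | e ∈ G.edgeSet} := by
    rw [erProb_eq_sum_erWeight, mul_sum]
    refine sum_le_sum fun G _ => ?_
    have hw := erWeight_nonneg h0 h1 G
    split_ifs with hle
    · have hone : 1 ≤ Real.exp (l * a) * Real.exp (-l) ^ #{e ∈ F | e ∈ G.edgeSet} := by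
        rw [← Real.exp_nat_mul, ← Real.exp_add]
        exact Real.one_le_exp (by nlinarith)
      nlinarith
    · positivity
  calc erProb n p (fun G => (#{e ∈ F | e ∈ G.edgeSet} : ℝ) ≤ a)
      ≤ Real.exp (l * a) * (1 - p + p * Real.exp (-l)) ^ #F := by
        rwa [sum_erWeight_mul_pow_card_filter p _ hF] at hmarkov
    _ ≤ Real.exp (l * a) * Real.exp (-(#F * p * (l - l ^ 2 / 2))) := by
        gcongr
        exact one_sub_add_mul_exp_neg_pow_le h0 h1 hl _
    _ = Real.exp (l * a - #F * p * (l - l ^ 2 / 2)) := by rw [← Real.exp_add]; ring_nf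

end RandomGraph

section Degrees

variable {V : Type*} {n : ℕ} {p : ℝ}

open Classical in
/-- The neighbours of `v` in `G` that lie in `A`. -/
noncomputable def nbrIn (G : SimpleGraph V) (A : Finset V) (v : V) : Finset V :=
  {w ∈ A | G.Adj v w}

@[simp]
lemma mem_nbrIn {G : SimpleGraph V} {A : Finset V} {v w : V} :
    w ∈ nbrIn G A v ↔ w ∈ A ∧ G.Adj v w := by
  simp [nbrIn]

lemma exp_neg_mul_log (k : ℕ) (hn : 0 < n) :
    Real.exp (-(k * Real.log n)) = 1 / (n : ℝ) ^ k := by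
  rw [Real.exp_neg, ← Real.log_pow, Real.exp_log (by positivity), one_div]

lemma erProb_card_nbrIn_le_le_exp (h0 : 0 ≤ p) (h1 : p ≤ 1) (A : Finset (Fin n)) (v : Fin n)
    (a : ℝ) {l : ℝ} (hl : 0 ≤ l) :
    erProb n p (fun G => (#(nbrIn G A v) : ℝ) ≤ a) ≤
      Real.exp (l * a - #(A.erase v) * p * (l - l ^ 2 / 2)) := by
  classical
  have hinj : Function.Injective (fun w : Fin n => s(v, w)) := fun x y => Sym2.congr_right.1
  set F : Finset (Sym2 (Fin n)) := (A.erase v).image (fun w => s(v, w))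
  have hdiag : ∀ e ∈ F, ¬ e.IsDiag := by
    simp only [F, forall_mem_image, Sym2.mk_isDiag_iff]
    exact fun w hw => (ne_of_mem_erase hw).symm
  have hfilter : ∀ G : SimpleGraph (Fin n), #{e ∈ F | e ∈ G.edgeSet} ≤ #(nbrIn G A v) := by
    intro G
    rw [← card_image_of_injective (nbrIn G A v) hinj]
    refine card_le_card fun e he => ?_
    obtain ⟨heF, heG⟩ := mem_filter.1 he
    obtain ⟨w, hw, rfl⟩ := mem_image.1 heF
    exact mem_image_of_mem _ (mem_nbrIn.2 ⟨mem_of_mem_erase hw, heG⟩)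
  calc erProb n p (fun G => (#(nbrIn G A v) : ℝ) ≤ a)
      ≤ erProb n p (fun G => (#{e ∈ F | e ∈ G.edgeSet} : ℝ) ≤ a) :=
        erProb_mono h0 h1 fun G hG => le_trans (by exact_mod_cast hfilter G) hG
    _ ≤ Real.exp (l * a - #(A.erase v) * p * (l - l ^ 2 / 2)) := by
        rw [← card_image_of_injective (A.erase v) hinj]
        exact erProb_card_filter_le_le_exp h0 h1 hdiag a hl

lemma erProb_card_nbrIn_le_le_one_div_cube (h0 : 0 ≤ p) (h1 : p ≤ 1) {ε : ℝ} (hε0 : 0 ≤ ε)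
    (hε1 : ε ≤ 1) (hn : 0 < n) {A : Finset (Fin n)} {v : Fin n}
    (hA : (1 - ε / 3) * n ≤ #(A.erase v)) (hnp : 3 * Real.log n ≤ ε ^ 2 * (n * p) / 72) :
    erProb n p (fun G => (#(nbrIn G A v) : ℝ) ≤ (1 - ε / 2) * (n * p)) ≤ 1 / (n : ℝ) ^ 3 := by
  have hrate : 0 ≤ ε / 6 - (ε / 6) ^ 2 / 2 := by nlinarith
  have hmean : (1 - ε / 3) * n * p * (ε / 6 - (ε / 6) ^ 2 / 2) ≤
      #(A.erase v) * p * (ε / 6 - (ε / 6) ^ 2 / 2) := by gcongr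
  have hexponent : ε / 6 * ((1 - ε / 2) * (n * p)) -
      (1 - ε / 3) * n * p * (ε / 6 - (ε / 6) ^ 2 / 2) ≤ -(ε ^ 2 * (n * p) / 72) := by
    have : 0 ≤ ε ^ 3 * ((n : ℝ) * p) := by positivity
    nlinarith
  calc erProb n p (fun G => (#(nbrIn G A v) : ℝ) ≤ (1 - ε / 2) * (n * p))
      ≤ _ := erProb_card_nbrIn_le_le_exp h0 h1 A v _ (l := ε / 6) (by positivity)
    _ ≤ Real.exp (-((3 : ℕ) * Real.log n)) := by
        rw [Real.exp_le_exp]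
        push_cast
        linarith
    _ = 1 / (n : ℝ) ^ 3 := exp_neg_mul_log 3 hn

end Degrees

section Resampling

variable {V : Type*} {n : ℕ} {p : ℝ}

/-- The graph that agrees with `H` on the pairs of vertices in `K` and with `G` elsewhere. Swapping
the `K`-parts of two independent random graphs this way preserves their joint law. -/
def resample (K G H : SimpleGraph V) : SimpleGraph V :=
  (G \ K) ⊔ (H ⊓ K)

lemma resample_sdiff (K G H : SimpleGraph V) : resample K G H \ K = G \ K := by
  ext
  simp only [resample, SimpleGraph.sup_adj, SimpleGraph.inf_adj, SimpleGraph.sdiff_adj]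
  tauto

lemma resample_inf (K G H : SimpleGraph V) : resample K G H ⊓ K = H ⊓ K := by
  ext
  simp only [resample, SimpleGraph.sup_adj, SimpleGraph.inf_adj, SimpleGraph.sdiff_adj]
  tauto

lemma resample_resample (K G H : SimpleGraph V) :
    resample K (resample K G H) (resample K H G) = G := by
  rw [resample, resample_sdiff, resample_inf, sup_comm, sup_inf_sdiff]

lemma card_edgeSet_resample [Finite V] (K G H : SimpleGraph V) :
    Nat.card (resample K G H).edgeSet =
      Nat.card (G \ K).edgeSet + Nat.card (H ⊓ K).edgeSet := by
  simp only [resample, SimpleGraph.edgeSet_sup, SimpleGraph.edgeSet_sdiff, SimpleGraph.edgeSet_inf,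
    Nat.card_coe_set_eq]
  exact Set.ncard_union_eq (Set.disjoint_left.2 fun e hG hH => hG.2 hH.2)

lemma erWeight_resample_mul_erWeight_resample (p : ℝ) (K G H : SimpleGraph (Fin n)) :
    erWeight n p (resample K G H) * erWeight n p (resample K H G) =
      erWeight n p G * erWeight n p H := by
  have hmul : ∀ a b c d : ℕ, p ^ a * (1 - p) ^ b * (p ^ c * (1 - p) ^ d) =
      p ^ (a + c) * (1 - p) ^ (b + d) := by intros; ring
  have hGH := card_edgeSet_resample K G H
  have hHG := card_edgeSet_resample K H G
  have hG := card_edgeSet_resample K G G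
  have hH := card_edgeSet_resample K H H
  simp only [resample, sup_comm (_ \ _), sup_inf_sdiff] at hG hH
  have := card_edgeSet_le_choose_two G
  have := card_edgeSet_le_choose_two H
  have := card_edgeSet_le_choose_two (resample K G H)
  have := card_edgeSet_le_choose_two (resample K H G)
  simp only [erWeight, hmul]
  congr 2 <;> omega

lemma sum_erWeight_mul_erWeight_resample (p : ℝ) (K : SimpleGraph (Fin n))
    (φ : SimpleGraph (Fin n) → SimpleGraph (Fin n) → ℝ) :
    ∑ x : SimpleGraph (Fin n) × SimpleGraph (Fin n),
        erWeight n p x.1 * erWeight n p x.2 * φ (resample K x.1 x.2) (resample K x.2 x.1) =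
      ∑ x : SimpleGraph (Fin n) × SimpleGraph (Fin n),
        erWeight n p x.1 * erWeight n p x.2 * φ x.1 x.2 := by
  have hinvol : Function.Involutive fun x : SimpleGraph (Fin n) × SimpleGraph (Fin n) =>
      (resample K x.1 x.2, resample K x.2 x.1) := fun x => by simp only [resample_resample]
  rw [← Equiv.sum_comp hinvol.toPerm]
  simp only [Function.Involutive.coe_toPerm, resample_resample,
    erWeight_resample_mul_erWeight_resample]

/-- Deferred decisions: an event whose first argument ignores the pairs in `K` and whose second
argument only sees them may be evaluated on two independent copies of the random graph. -/
lemma erProb_diag_le (h0 : 0 ≤ p) (h1 : p ≤ 1) (K : SimpleGraph (Fin n))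
    {A : SimpleGraph (Fin n) → SimpleGraph (Fin n) → Prop} {c : ℝ}
    (hsdiff : ∀ H G, A (H \ K) G ↔ A H G) (hinf : ∀ H G, A H (G ⊓ K) ↔ A H G)
    (hA : ∀ H, erProb n p (A H) ≤ c) :
    erProb n p (fun G => A G G) ≤ c := by
  classical
  have hresample : ∀ H G, A H G ↔ A (resample K H G) (resample K H G) := fun H G => by
    rw [← hsdiff (resample K H G), resample_sdiff, hsdiff, ← hinf _ (resample K H G),
      resample_inf, hinf]
  calc erProb n p (fun G => A G G)
      = ∑ G, ∑ H, erWeight n p G * erWeight n p H * (if A G G then 1 else 0) := by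
        simp only [erProb_eq_sum_erWeight, mul_ite, mul_one, mul_zero]
        refine sum_congr rfl fun G _ => ?_
        split_ifs <;> simp [← mul_sum, sum_erWeight]
    _ = ∑ G, ∑ H, erWeight n p G * erWeight n p H * (if A G H then 1 else 0) := by
        have hswap := sum_erWeight_mul_erWeight_resample p K fun G _ => if A G G then 1 else 0
        simp only [← hresample, Fintype.sum_prod_type] at hswap
        exact hswap.symm
    _ = ∑ G, erWeight n p G * erProb n p (A G) := by
        simp only [erProb_eq_sum_erWeight, mul_sum, mul_ite, mul_one, mul_zero]
    _ ≤ ∑ G, erWeight n p G * c :=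
        sum_le_sum fun G _ => mul_le_mul_of_nonneg_left (hA G) (erWeight_nonneg h0 h1 G)
    _ = c := by rw [← sum_mul, sum_erWeight, one_mul]

end Resampling

section ParentTrees

variable {V : Type*} {G : SimpleGraph V} {r : V} {f : V → V}

/-- The graph joining every vertex `v ≠ r` to its parent `f v`; it is a tree rooted at `r` as soon
as iterating `f` leads every vertex to `r`. -/
def parentGraph (r : V) (f : V → V) : SimpleGraph V :=
  SimpleGraph.fromEdgeSet ((fun v => s(v, f v)) '' {r}ᶜ)

lemma parentGraph_le (hf : ∀ v, v ≠ r → G.Adj v (f v)) : parentGraph r f ≤ G := by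
  intro a b hab
  obtain ⟨⟨v, hv, hvab⟩, -⟩ := hab
  rw [← SimpleGraph.mem_edgeSet, ← hvab]
  exact hf v hv

lemma exists_walk_parentGraph (hf : ∀ v, v ≠ r → f v ≠ v) {S : Set V}
    (hS : ∀ x ∈ S, x ≠ r → f x ∈ S) {k : ℕ} {v : V} (hv : v ∈ S) (hk : f^[k] v = r) :
    ∃ w : (parentGraph r f).Walk v r, ∀ x ∈ w.support, x ∈ S := by
  induction k generalizing v with
  | zero =>
    obtain rfl : v = r := hk
    exact ⟨.nil, by simpa using hv⟩
  | succ k ih =>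
    by_cases hvr : v = r
    · subst hvr
      exact ⟨.nil, by simpa using hv⟩
    · obtain ⟨w, hw⟩ := ih (hS v hv hvr) hk
      have hadj : (parentGraph r f).Adj v (f v) := ⟨⟨v, hvr, rfl⟩, (hf v hvr).symm⟩
      refine ⟨.cons hadj w, ?_⟩
      simpa only [SimpleGraph.Walk.support_cons, List.forall_mem_cons] using ⟨hv, hw⟩

lemma isTree_parentGraph [Finite V] (hf : ∀ v, v ≠ r → f v ≠ v) (hr : ∀ v, ∃ k, f^[k] v = r) :
    (parentGraph r f).IsTree := by
  have hreach : ∀ v, (parentGraph r f).Reachable v r := fun v =>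
    let ⟨_, hk⟩ := hr v
    let ⟨w, _⟩ := exists_walk_parentGraph hf (S := Set.univ) (by simp) trivial hk
    ⟨w⟩
  have hconn : (parentGraph r f).Connected :=
    { preconnected := fun a b => (hreach a).trans (hreach b).symm
      nonempty := ⟨r⟩ }
  have hcard : (parentGraph r f).edgeSet.ncard + 1 ≤ Nat.card V :=
    calc (parentGraph r f).edgeSet.ncard + 1
        ≤ ((fun v => s(v, f v)) '' {r}ᶜ).ncard + 1 := by
          rw [parentGraph, SimpleGraph.edgeSet_fromEdgeSet]
          exact Nat.succ_le_succ (Set.ncard_le_ncard Set.sdiff_subset)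
      _ ≤ ({r}ᶜ : Set V).ncard + 1 := Nat.succ_le_succ Set.ncard_image_le
      _ = Nat.card V := by rw [← Set.ncard_add_ncard_compl {r}, Set.ncard_singleton, add_comm]
  rw [SimpleGraph.isTree_iff_connected_and_card]
  exact ⟨hconn, le_antisymm (by rwa [Nat.card_coe_set_eq]) hconn.card_vert_le_card_edgeSet_add_one⟩

lemma support_subset_of_isPath_parentGraph [Finite V] (hf : ∀ v, v ≠ r → f v ≠ v)
    (hr : ∀ v, ∃ k, f^[k] v = r) {S : Set V} (hS : ∀ x ∈ S, x ≠ r → f x ∈ S) {v : V} (hv : v ∈ S)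
    {w : (parentGraph r f).Walk v r} (hw : w.IsPath) : ∀ x ∈ w.support, x ∈ S := by
  classical
  obtain ⟨k, hk⟩ := hr v
  obtain ⟨q, hq⟩ := exists_walk_parentGraph hf hS hv hk
  have hunique : w = q.toPath :=
    congrArg Subtype.val <|
      ((isTree_parentGraph hf hr).isAcyclic.subsingleton_path v r).elim ⟨w, hw⟩ q.toPath
  rw [hunique]
  exact fun x hx => hq x (SimpleGraph.Walk.support_toPath_subset_support q hx)

lemma exists_adj_dist_lt_of_connected (hG : G.Connected) {v : V} (hv : v ≠ r) :
    ∃ u, G.Adj v u ∧ G.dist u r < G.dist v r := by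
  obtain ⟨w, hw⟩ := hG.exists_walk_length_eq_dist v r
  cases w with
  | nil => exact absurd rfl hv
  | cons hadj q =>
    refine ⟨_, hadj, ?_⟩
    rw [← hw, SimpleGraph.Walk.length_cons]
    exact Nat.lt_succ_of_le (SimpleGraph.dist_le q)

lemma exists_parent_of_connected (hG : G.Connected) (r : V) :
    ∃ f : V → V, (∀ v, v ≠ r → G.Adj v (f v)) ∧ ∀ v, ∃ k, f^[k] v = r := by
  choose! f hadj hdist using fun v => exists_adj_dist_lt_of_connected (r := r) (v := v) hG
  refine ⟨f, hadj, fun v => ?_⟩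
  induction h : G.dist v r using Nat.strong_induction_on generalizing v with
  | _ d ih =>
    by_cases hv : v = r
    · exact ⟨0, hv⟩
    · obtain ⟨k, hk⟩ := ih _ (h ▸ hdist v hv) _ rfl
      exact ⟨k + 1, hk⟩

lemma exists_parent_of_connected_induce {s : Set V} (hs : (G.induce s).Connected) (hr : r ∈ s) :
    ∃ f : V → V, Set.MapsTo f s s ∧ (∀ v ∈ s, v ≠ r → G.Adj v (f v)) ∧
      ∀ v ∈ s, ∃ k, f^[k] v = r := by
  classical
  obtain ⟨f, hadj, hiter⟩ := exists_parent_of_connected hs ⟨r, hr⟩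
  set F : V → V := fun v => if h : v ∈ s then f ⟨v, h⟩ else v
  have hF : ∀ v : s, F v = f v := fun v => dif_pos v.2
  have hsemi : Function.Semiconj Subtype.val f F := fun v => (hF v).symm
  refine ⟨F, fun v hv => hF ⟨v, hv⟩ ▸ (f ⟨v, hv⟩).2, fun v hv hvr => ?_, fun v hv => ?_⟩
  · exact hF ⟨v, hv⟩ ▸ hadj ⟨v, hv⟩ fun h => hvr (congrArg Subtype.val h)
  · obtain ⟨k, hk⟩ := hiter ⟨v, hv⟩
    exact ⟨k, by rw [← (hsemi.iterate_right k).eq ⟨v, hv⟩, hk]⟩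

lemma exists_iterate_piecewise_eq {s : Set V} [DecidablePred (· ∈ s)] (hs : Set.MapsTo f s s)
    (hr : ∀ v ∈ s, ∃ k, f^[k] v = r) (g : V → V) {v : V} (hv : v ∈ s ∨ g v ∈ s) :
    ∃ k, (s.piecewise f g)^[k] v = r := by
  have hagree : ∀ k, ∀ u ∈ s, (s.piecewise f g)^[k] u = f^[k] u := by
    intro k
    induction k with
    | zero => exact fun _ _ => rfl
    | succ k ih =>
      intro u hu
      simp only [Function.iterate_succ_apply, s.piecewise_eq_of_mem f g hu, ih (f u) (hs hu)]
  by_cases hvs : v ∈ s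
  · obtain ⟨k, hk⟩ := hr v hvs
    exact ⟨k, (hagree k v hvs).trans hk⟩
  · have hgv := hv.resolve_left hvs
    obtain ⟨k, hk⟩ := hr (g v) hgv
    refine ⟨k + 1, ?_⟩
    rw [Function.iterate_succ_apply, s.piecewise_eq_of_notMem f g hvs, hagree k _ hgv, hk]

end ParentTrees

section Cores

variable {V : Type*} {G : SimpleGraph V} {r : V}

/-- `v` lies in `C` or has a neighbour in `C`, so that it can enter the core `C` directly. -/
def Touches (G : SimpleGraph V) (C : Set V) (v : V) : Prop :=
  v ∈ C ∨ ∃ c ∈ C, G.Adj v c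

/-- Vertices touching the core `C` step directly towards `r` through `C`; every other vertex `v`
first steps to its gateway `g v`. -/
lemma exists_parent_of_core {C : Set V} (hC : (G.induce (insert r C)).Connected) {g : V → V}
    (hg : ∀ v, v ≠ r → ¬ Touches G C v → G.Adj v (g v) ∧ ∃ c ∈ C, G.Adj (g v) c) :
    ∃ f : V → V, (∀ v, v ≠ r → G.Adj v (f v)) ∧ (∀ v, ∃ k, f^[k] v = r) ∧
      (∀ v, Touches G C v → f v ∈ insert r C) ∧
      ∀ v, v ≠ r → ¬ Touches G C v → f v = g v := by
  classical
  obtain ⟨f₀, hmaps, hadj, hiter⟩ := exists_parent_of_connected_induce hC (Set.mem_insert r C)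
  choose! c hcC hadjc using fun v (h : ∃ c ∈ C, G.Adj v c) => h
  set s : Set V := insert r {v | Touches G C v}
  have hCs : insert r C ⊆ s := Set.insert_subset_insert fun v hv => .inl hv
  have hstep : ∀ v ∈ s, v ∉ insert r C → ∃ c ∈ C, G.Adj v c := fun v hv hvC =>
    (hv.resolve_left (not_or.1 hvC).1).resolve_left (not_or.1 hvC).2
  set f₁ : V → V := (insert r C).piecewise f₀ c
  have hf₁ : ∀ v ∈ s, f₁ v ∈ insert r C ∧ (v ≠ r → G.Adj v (f₁ v)) := by
    intro v hv
    by_cases hvC : v ∈ insert r C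
    · rw [show f₁ v = f₀ v from Set.piecewise_eq_of_mem _ _ _ hvC]
      exact ⟨hmaps hvC, hadj v hvC⟩
    · rw [show f₁ v = c v from Set.piecewise_eq_of_notMem _ _ _ hvC]
      exact ⟨.inr (hcC v (hstep v hv hvC)), fun _ => hadjc v (hstep v hv hvC)⟩
  have hiter₁ : ∀ v ∈ s, ∃ k, f₁^[k] v = r := fun v hv =>
    exists_iterate_piecewise_eq hmaps hiter c <|
      or_iff_not_imp_left.2 fun hvC => .inr (hcC v (hstep v hv hvC))
  have hfar : ∀ v ∉ s, v ≠ r ∧ ¬ Touches G C v := fun v hv => not_or.1 hv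
  refine ⟨s.piecewise f₁ g, fun v hvr => ?_, fun v => ?_, fun v hv => ?_, fun v hvr hv => ?_⟩
  · by_cases hvs : v ∈ s
    · rw [Set.piecewise_eq_of_mem _ _ _ hvs]
      exact (hf₁ v hvs).2 hvr
    · rw [Set.piecewise_eq_of_notMem _ _ _ hvs]
      exact (hg v hvr (hfar v hvs).2).1
  · refine exists_iterate_piecewise_eq (fun u hu => hCs (hf₁ u hu).1) hiter₁ g ?_
    exact or_iff_not_imp_left.2 fun hvs => .inr (.inr (hg v (hfar v hvs).1 (hfar v hvs).2).2)
  · rw [Set.piecewise_eq_of_mem _ _ _ (show v ∈ s from .inr hv)]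
    exact (hf₁ v (.inr hv)).1
  · exact Set.piecewise_eq_of_notMem _ _ _ (not_or.2 ⟨hvr, hv⟩)

lemma exists_isTree_of_core [Finite V] {C : Set V} (hC : (G.induce (insert r C)).Connected)
    {g : V → V} (hg : ∀ v, v ≠ r → ¬ Touches G C v → G.Adj v (g v) ∧ ∃ c ∈ C, G.Adj (g v) c) :
    ∃ T ≤ G, T.IsTree ∧ ∀ v, v ≠ r → ∀ w : T.Walk v r, w.IsPath →
      ∀ x ∈ w.support, x = v ∨ x = r ∨ x ∈ C ∨ (x = g v ∧ ¬ Touches G C v) := by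
  obtain ⟨f, hadj, hiter, hnear, hfar⟩ := exists_parent_of_core hC hg
  have hne : ∀ v, v ≠ r → f v ≠ v := fun v hv => (hadj v hv).ne'
  refine ⟨parentGraph r f, parentGraph_le hadj, isTree_parentGraph hne hiter,
    fun v hvr w hw => ?_⟩
  refine support_subset_of_isPath_parentGraph hne hiter
    (S := {x | x = v ∨ x = r ∨ x ∈ C ∨ (x = g v ∧ ¬ Touches G C v)}) ?_ (.inl rfl) hw
  intro x hx hxr
  by_cases hxC : Touches G C x
  · exact .inr ((hnear x hxC).imp_right .inl)
  · rcases hx with rfl | rfl | hx | ⟨rfl, hv⟩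
    · exact .inr (.inr (.inr ⟨hfar x hxr hxC, hxC⟩))
    · exact absurd rfl hxr
    · exact absurd (.inl hx) hxC
    · exact absurd (.inr (hg v hvr hv).2) hxC

lemma hasISTs_of_cores {n t : ℕ} {G : SimpleGraph (Fin n)} {r : Fin n} {C : Fin t → Set (Fin n)}
    (hdisj : Pairwise fun i j => Disjoint (C i) (C j))
    (hconn : ∀ i, (G.induce (insert r (C i))).Connected)
    (hgate : ∀ v, v ≠ r → ∃ g : Fin t → Fin n, Set.InjOn g {i | ¬ Touches G (C i) v} ∧
      ∀ i, ¬ Touches G (C i) v →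
        G.Adj v (g i) ∧ (∀ j, g i ∉ C j) ∧ ∃ c ∈ C i, G.Adj (g i) c) :
    HasISTs G r t := by
  choose! g hinj hg using hgate
  choose T hTG hTree hpath using fun i =>
    exists_isTree_of_core (g := fun v => g v i) (hconn i) fun v hvr hv =>
      ⟨(hg v hvr i hv).1, (hg v hvr i hv).2.2⟩
  refine ⟨T, fun i => ⟨hTG i, hTree i⟩, fun v hvr i j hij w q hw hq x hxw hxq => ?_⟩
  by_contra hx
  obtain ⟨hxv, hxr⟩ := not_or.1 hx
  rcases ((hpath i v hvr w hw x hxw).resolve_left hxv).resolve_left hxr with hxi | ⟨hxi, hi⟩ <;>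
    rcases ((hpath j v hvr q hq x hxq).resolve_left hxv).resolve_left hxr with hxj | ⟨hxj, hj⟩
  · exact Set.disjoint_left.1 (hdisj hij) hxi hxj
  · exact (hg v hvr j hj).2.1 i (hxj ▸ hxi)
  · exact (hg v hvr i hi).2.1 j (hxi ▸ hxj)
  · exact hij (hinj v hvr hi hj (hxi.symm.trans hxj))

end Cores

section ConnectedSegments

variable {V : Type*} {G : SimpleGraph V} {k m : ℕ}

/-- Any two disjoint sets of `k` vertices are joined by an edge; this forces large vertex sets to
contain connected subsets of prescribed size. -/
def IsKJoined (G : SimpleGraph V) (k : ℕ) : Prop :=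
  ∀ S T : Finset V, Disjoint S T → #S = k → #T = k → ∃ x ∈ S, ∃ y ∈ T, G.Adj x y

/-- No edge leaves `U` inside `B`: if `U ⊆ B`, it is a union of connected components of `G[B]`. -/
def IsClosedIn (G : SimpleGraph V) (B U : Finset V) : Prop :=
  ∀ x ∈ U, ∀ y ∈ B, y ∉ U → ¬ G.Adj x y

lemma connected_induce_insert {S : Set V} (hS : (G.induce S).Connected) {x y : V}
    (hx : x ∈ S) (hxy : G.Adj x y) : (G.induce (insert y S)).Connected := by
  have hunion : {x, y} ∪ S = insert y S := by
    rw [Set.insert_union, Set.singleton_union, Set.insert_comm, Set.insert_eq_of_mem hx]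
  exact hunion ▸ SimpleGraph.induce_union_connected
    (SimpleGraph.induce_pair_connected_of_adj hxy).preconnected hS.preconnected
    ⟨x, Set.mem_insert x _, hx⟩

lemma exists_connected_card_eq_or_isClosedIn {B : Finset V} (hB : B.Nonempty) (hm : 1 ≤ m) :
    (∃ S ⊆ B, #S = m ∧ (G.induce (S : Set V)).Connected) ∨
      ∃ S ⊆ B, S.Nonempty ∧ #S < m ∧ IsClosedIn G B S := by
  classical
  induction m, hm using Nat.le_induction with
  | base =>
    obtain ⟨x, hx⟩ := hB
    refine .inl ⟨{x}, singleton_subset_iff.2 hx, card_singleton x, ?_⟩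
    rw [coe_singleton, SimpleGraph.induce_singleton_eq_top]
    exact SimpleGraph.connected_top
  | succ m hm ih =>
    rcases ih with ⟨S, hSB, hcard, hconn⟩ | ⟨S, hSB, hne, hcard, hclosed⟩
    · by_cases hclosed : IsClosedIn G B S
      · exact .inr ⟨S, hSB, card_pos.1 (by omega), by omega, hclosed⟩
      · simp only [IsClosedIn, not_forall, not_not] at hclosed
        obtain ⟨x, hx, y, hyB, hyS, hxy⟩ := hclosed
        refine .inl ⟨insert y S, insert_subset hyB hSB, ?_, ?_⟩
        · rw [card_insert_of_notMem hyS, hcard]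
        · rw [coe_insert]
          exact connected_induce_insert hconn hx hxy
    · exact .inr ⟨S, hSB, hne, hcard.trans m.lt_succ_self, hclosed⟩

lemma exists_isClosedIn_of_no_connected {B : Finset V} (hm : 1 ≤ m)
    (hno : ∀ S ⊆ B, #S = m → ¬ (G.induce (S : Set V)).Connected) {j : ℕ} (hj : j ≤ #B) :
    ∃ U ⊆ B, j ≤ #U ∧ #U < j + m ∧ IsClosedIn G B U := by
  classical
  induction j with
  | zero => exact ⟨∅, empty_subset B, by simp, by rw [card_empty]; omega, by simp [IsClosedIn]⟩
  | succ j ih =>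
    obtain ⟨U, hUB, hjU, hUj, hU⟩ := ih (by omega)
    by_cases hlarge : j + 1 ≤ #U
    · exact ⟨U, hUB, hlarge, by omega, hU⟩
    have hrest : (B \ U).Nonempty := by
      rw [← card_pos, card_sdiff_of_subset hUB]
      omega
    rcases exists_connected_card_eq_or_isClosedIn (G := G) hrest hm with
      ⟨S, hSB, hcard, hconn⟩ | ⟨S, hSB, hne, hcard, hS⟩
    · exact absurd hconn (hno S (hSB.trans sdiff_subset) hcard)
    have hdisj : Disjoint U S := disjoint_of_subset_right hSB disjoint_sdiff
    have := hne.card_pos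
    refine ⟨U ∪ S, union_subset hUB (hSB.trans sdiff_subset), ?_, ?_, fun x hx y hy hyUS => ?_⟩
    · rw [card_union_of_disjoint hdisj]
      omega
    · rw [card_union_of_disjoint hdisj]
      omega
    · obtain ⟨hyU, hyS⟩ := not_or.1 (mt mem_union.2 hyUS)
      rcases mem_union.1 hx with hxU | hxS
      · exact hU x hxU y hy hyU
      · exact hS x hxS y (by simp [hy, hyU]) hyS

lemma exists_connected_card_eq_of_isKJoined (hG : IsKJoined G k) (hm : 1 ≤ m) (hmk : m ≤ k)
    {B : Finset V} (hB : 3 * k ≤ #B) :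
    ∃ S ⊆ B, #S = m ∧ (G.induce (S : Set V)).Connected := by
  classical
  by_contra! hno
  obtain ⟨U, hUB, hkU, hUk, hclosed⟩ := exists_isClosedIn_of_no_connected hm hno (j := k) (by omega)
  obtain ⟨S, hSU, hS⟩ := exists_subset_card_eq hkU
  obtain ⟨T, hTU, hT⟩ := exists_subset_card_eq (s := B \ U) (n := k) <| by
    rw [card_sdiff_of_subset hUB]
    omega
  obtain ⟨x, hx, y, hy, hxy⟩ :=
    hG S T (disjoint_of_subset_left hSU (disjoint_of_subset_right hTU disjoint_sdiff)) hS hT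
  exact hclosed x (hSU hx) y (sdiff_subset (hTU hy)) (Finset.mem_sdiff.1 (hTU hy)).2 hxy

/-- Pairwise disjoint connected subsets of `B` of size `m`, out of which the cores of the trees are
built in the sparse case. -/
structure IsSegmentFamily {ι : Type*} (G : SimpleGraph V) (B : Finset V) (m : ℕ)
    (D : ι → Finset V) : Prop where
  subset : ∀ i, D i ⊆ B
  card_eq : ∀ i, #(D i) = m
  connected : ∀ i, (G.induce (D i : Set V)).Connected
  disjoint : Pairwise fun i j => Disjoint (D i) (D j)

lemma exists_isSegmentFamily_of_isKJoined (hG : IsKJoined G k) (hm : 1 ≤ m) (hmk : m ≤ k) {t : ℕ}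
    {B : Finset V} (hB : 3 * k + t * m ≤ #B) :
    ∃ D : Fin t → Finset V, IsSegmentFamily G B m D := by
  classical
  induction t generalizing B with
  | zero => exact ⟨fun i => i.elim0, by constructor <;> exact fun i => i.elim0⟩
  | succ t ih =>
    obtain ⟨S, hSB, hcard, hconn⟩ := exists_connected_card_eq_of_isKJoined hG hm hmk
      (B := B) (by omega)
    obtain ⟨D, hD⟩ := ih (B := B \ S) <| by
      rw [card_sdiff_of_subset hSB, hcard]
      rw [add_mul, one_mul] at hB
      omega
    have hSD : ∀ i, Disjoint S (D i) := fun i =>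
      disjoint_of_subset_right (hD.subset i) disjoint_sdiff
    refine ⟨Fin.cons S D, ?_, ?_, ?_, ?_⟩
    · exact Fin.cases hSB fun i => (hD.subset i).trans sdiff_subset
    · exact Fin.cases hcard hD.card_eq
    · exact Fin.cases hconn hD.connected
    · refine Fin.cases (Fin.cases (fun h => absurd rfl h) fun j _ => hSD j) fun i => ?_
      exact Fin.cases (fun _ => (hSD i).symm) fun j hij => hD.disjoint (ne_of_apply_ne Fin.succ hij)

end ConnectedSegments

section Hall

variable {V ι : Type*} {n a m : ℕ} {p : ℝ}

/-- `X` and `Y` witness that Hall's condition nearly fails between the sets `D i` and `W`: the sets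
`D i` with `i ∈ X` have at least `m` elements but no neighbours in `W` outside of `Y`, where
`#Y = #X`. The bound `#X + a ≤ #W` leaves at least `a` elements of `W` outside of `Y`. -/
def IsHallDefect (G : SimpleGraph V) (a m : ℕ) (W : Finset V) (D : ι → Finset V) (X : Finset ι)
    (Y : Finset V) : Prop :=
  #Y = #X ∧ #X + a ≤ #W ∧ (∀ i ∈ X, m ≤ #(D i)) ∧
    ∀ i ∈ X, ∀ d ∈ D i, ∀ w ∈ W, w ∉ Y → ¬ G.Adj w d

/-- There is a nonempty set of indices at which Hall's condition nearly fails. -/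
def HasHallDefect (G : SimpleGraph V) (a m : ℕ) (W : Finset V) (D : ι → Finset V) : Prop :=
  ∃ X Y, X.Nonempty ∧ IsHallDefect G a m W D X Y

lemma exists_injOn_adj_of_not_hasHallDefect [Nonempty V] {G : SimpleGraph V}
    {W : Finset V} {D : ι → Finset V} (hG : ¬ HasHallDefect G a m W D) {M : Finset ι}
    (hD : ∀ i ∈ M, m ≤ #(D i)) (hM : #M + a ≤ #W) :
    ∃ g : ι → V, Set.InjOn g M ∧ ∀ i ∈ M, g i ∈ W ∧ ∃ d ∈ D i, G.Adj (g i) d := by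
  classical
  let N : M → Finset V := fun i => {w ∈ W | ∃ d ∈ D i, G.Adj w d}
  have hall : ∀ s : Finset M, #s ≤ #(s.biUnion N) := by
    intro s
    by_contra! hs
    have hsM : #s ≤ #M := by simpa using card_le_univ s
    obtain ⟨Y, hNY, -, hY⟩ := exists_subsuperset_card_eq
      (biUnion_subset.2 fun i _ => filter_subset _ W) hs.le (by omega : #s ≤ #W)
    refine hG ⟨s.map (.subtype _), Y, ?_, by rw [card_map, hY], by rw [card_map]; omega, ?_, ?_⟩
    · rw [map_nonempty, ← card_pos]
      omega
    · simp only [Finset.mem_map, Function.Embedding.subtype_apply]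
      rintro _ ⟨i, -, rfl⟩
      exact hD i i.2
    · simp only [Finset.mem_map, Function.Embedding.subtype_apply]
      rintro _ ⟨i, hi, rfl⟩ d hd w hw hwY hadj
      exact hwY (hNY (mem_biUnion.2 ⟨i, hi, mem_filter.2 ⟨hw, d, hd, hadj⟩⟩))
  obtain ⟨f, hf, hfN⟩ := (all_card_le_biUnion_card_iff_exists_injective N).1 hall
  obtain ⟨g, hg⟩ : ∃ g : ι → V, ∀ i (hi : i ∈ M), g i = f ⟨i, hi⟩ :=
    ⟨Function.extend Subtype.val f fun _ => Classical.arbitrary V,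
      fun i hi => Subtype.val_injective.extend_apply f _ ⟨i, hi⟩⟩
  refine ⟨g, fun i hi j hj hij => ?_, fun i hi => ?_⟩
  · rw [hg i hi, hg j hj] at hij
    exact congrArg Subtype.val (hf hij)
  · rw [hg i hi]
    exact mem_filter.1 (hfN ⟨i, hi⟩)

lemma HasHallDefect.of_comp {κ : Type*} {G : SimpleGraph V} {W : Finset V} {D : ι → Finset V}
    {f : κ → ι} (hf : Function.Injective f) (h : HasHallDefect G a m W (D ∘ f)) :
    HasHallDefect G a m W D := by
  obtain ⟨X, Y, hX, hY, hXW, hD, hadj⟩ := h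
  refine ⟨X.map ⟨f, hf⟩, Y, hX.map, ?_⟩
  rw [IsHallDefect, card_map]
  simp only [Finset.mem_map, Function.Embedding.coeFn_mk, forall_exists_index, and_imp,
    forall_apply_eq_imp_iff₂]
  exact ⟨hY, hXW, hD, hadj⟩

lemma hasHallDefect_inf {G K : SimpleGraph V} {W : Finset V} {D : ι → Finset V}
    (hK : ∀ i, ∀ d ∈ D i, ∀ w ∈ W, K.Adj w d) :
    HasHallDefect (G ⊓ K) a m W D ↔ HasHallDefect G a m W D := by
  have hadj : ∀ i, ∀ d ∈ D i, ∀ w ∈ W, ((G ⊓ K).Adj w d ↔ G.Adj w d) := fun i d hd w hw =>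
    and_iff_left (hK i d hd w hw)
  refine exists₂_congr fun X Y => and_congr_right fun _ => and_congr_right fun _ =>
    and_congr_right fun _ => and_congr_right fun _ => ?_
  exact forall₂_congr fun i _ => forall₂_congr fun d hd => forall₂_congr fun w hw =>
    imp_congr_right fun _ => not_congr (hadj i d hd w hw)

section Probability

variable {W : Finset (Fin n)} {D : ι → Finset (Fin n)}

lemma erProb_isHallDefect_le (h0 : 0 ≤ p) (h1 : p ≤ 1) (hn : 0 < n)
    (hpma : 6 * Real.log n ≤ p * m * a) (hWD : ∀ i, Disjoint W (D i))
    (hD : Pairwise fun i j => Disjoint (D i) (D j)) (X : Finset ι) (Y : Finset (Fin n)) :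
    erProb n p (fun G => IsHallDefect G a m W D X Y) ≤ (1 / (n : ℝ) ^ 6) ^ #X := by
  classical
  by_cases hXY : #Y = #X ∧ #X + a ≤ #W ∧ ∀ i ∈ X, m ≤ #(D i)
  swap
  · have : ∀ G, ¬ IsHallDefect G a m W D X Y := fun G h => hXY ⟨h.1, h.2.1, h.2.2.1⟩
    simp only [erProb_eq_sum_erWeight, this, if_false, sum_const_zero]
    positivity
  obtain ⟨hY, hXW, hm⟩ := hXY
  have hcardW : a ≤ #(W \ Y) := by have := le_card_sdiff Y W; omega
  have hcardD : #X * m ≤ #(X.biUnion D) := by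
    rw [card_biUnion fun i _ j _ hij => hD hij, ← smul_eq_mul]
    exact card_nsmul_le_sum _ _ _ hm
  have hdisj : Disjoint (W \ Y) (X.biUnion D) :=
    (disjoint_biUnion_right _ _ _).2 fun i _ => (hWD i).mono_left sdiff_subset
  calc erProb n p (fun G => IsHallDefect G a m W D X Y)
      ≤ erProb n p (fun G => ∀ w ∈ W \ Y, ∀ d ∈ X.biUnion D, ¬ G.Adj w d) := by
        refine erProb_mono h0 h1 fun G hG w hw d hd => ?_
        obtain ⟨i, hi, hdi⟩ := mem_biUnion.1 hd
        exact hG.2.2.2 i hi d hdi w (Finset.mem_sdiff.1 hw).1 (Finset.mem_sdiff.1 hw).2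
    _ ≤ Real.exp (-(p * (#(W \ Y) * #(X.biUnion D)))) := erProb_no_adj_between_le h1 hdisj
    _ ≤ Real.exp (-(p * (a * (#X * m : ℕ)))) := by gcongr
    _ ≤ Real.exp (#X * -((6 : ℕ) * Real.log n)) := by
        rw [Real.exp_le_exp]
        have := mul_le_mul_of_nonneg_left hpma (Nat.cast_nonneg (α := ℝ) #X)
        push_cast
        linarith
    _ = (1 / (n : ℝ) ^ 6) ^ #X := by rw [Real.exp_nat_mul, exp_neg_mul_log 6 hn]

variable [Fintype ι]

lemma erProb_exists_isHallDefect_card_eq_le (h0 : 0 ≤ p) (h1 : p ≤ 1) (hn : 0 < n)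
    (hι : Fintype.card ι ≤ n) (hpma : 6 * Real.log n ≤ p * m * a) (hWD : ∀ i, Disjoint W (D i))
    (hD : Pairwise fun i j => Disjoint (D i) (D j)) {x : ℕ} (hx : x ≠ 0) :
    erProb n p (fun G => ∃ XY ∈ powersetCard x (univ : Finset ι) ×ˢ
      powersetCard x (univ : Finset (Fin n)), IsHallDefect G a m W D XY.1 XY.2) ≤
      1 / (n : ℝ) ^ 4 := by
  have hn1 : (1 : ℝ) ≤ n := by exact_mod_cast hn
  have hpairs : #(powersetCard x (univ : Finset ι) ×ˢ powersetCard x (univ : Finset (Fin n))) ≤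
      (n ^ 2) ^ x := by
    rw [card_product, card_powersetCard, card_powersetCard, card_univ, card_univ, Fintype.card_fin,
      sq, mul_pow]
    exact Nat.mul_le_mul ((Nat.choose_le_pow _ x).trans (Nat.pow_le_pow_left hι x))
      (Nat.choose_le_pow n x)
  calc _ ≤ #(powersetCard x (univ : Finset ι) ×ˢ powersetCard x (univ : Finset (Fin n))) *
        (1 / (n : ℝ) ^ 6) ^ x := by
        refine erProb_exists_mem_le_card_mul h0 h1 fun XY hXY => ?_
        rw [← (mem_powersetCard.1 (mem_product.1 hXY).1).2]
        exact erProb_isHallDefect_le h0 h1 hn hpma hWD hD XY.1 XY.2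
    _ ≤ ((n : ℝ) ^ 2) ^ x * (1 / (n : ℝ) ^ 6) ^ x := by
        gcongr
        exact_mod_cast hpairs
    _ = (1 / (n : ℝ) ^ 4) ^ x := by
        rw [← mul_pow]
        congr 1
        field_simp
    _ ≤ 1 / (n : ℝ) ^ 4 :=
        pow_le_of_le_one (by positivity) (div_le_one_of_le₀ (one_le_pow₀ hn1) (by positivity)) hx

lemma erProb_hasHallDefect_le (h0 : 0 ≤ p) (h1 : p ≤ 1) (hn : 0 < n)
    (hι : Fintype.card ι ≤ n) (hpma : 6 * Real.log n ≤ p * m * a) (hWD : ∀ i, Disjoint W (D i))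
    (hD : Pairwise fun i j => Disjoint (D i) (D j)) :
    erProb n p (fun G => HasHallDefect G a m W D) ≤ 1 / (n : ℝ) ^ 3 := by
  calc erProb n p (fun G => HasHallDefect G a m W D)
      ≤ erProb n p (fun G => ∃ x ∈ Icc 1 (Fintype.card ι), ∃ XY ∈ powersetCard x (univ : Finset ι)
          ×ˢ powersetCard x (univ : Finset (Fin n)), IsHallDefect G a m W D XY.1 XY.2) := by
        refine erProb_mono h0 h1 fun G => ?_
        rintro ⟨X, Y, hX, hXY⟩
        refine ⟨#X, mem_Icc.2 ⟨hX.card_pos, card_le_univ X⟩, (X, Y), ?_, hXY⟩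
        simp [mem_powersetCard, hXY.1]
    _ ≤ #(Icc 1 (Fintype.card ι)) * (1 / (n : ℝ) ^ 4) :=
        erProb_exists_mem_le_card_mul h0 h1 fun x hx =>
          erProb_exists_isHallDefect_card_eq_le h0 h1 hn hι hpma hWD hD
            (Nat.one_le_iff_ne_zero.1 (mem_Icc.1 hx).1)
    _ ≤ n * (1 / (n : ℝ) ^ 4) := by
        gcongr
        simpa using hι
    _ = 1 / (n : ℝ) ^ 3 := by field_simp

lemma erProb_hasHallDefect_revealed_le (h0 : 0 ≤ p) (h1 : p ≤ 1) (hn : 0 < n)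
    (hι : Fintype.card ι ≤ n) (hpma : 6 * Real.log n ≤ p * m * a) (K : SimpleGraph (Fin n))
    {W : SimpleGraph (Fin n) → Finset (Fin n)} {D : SimpleGraph (Fin n) → ι → Finset (Fin n)}
    (hW : ∀ G, W (G \ K) = W G) (hD : ∀ G, D (G \ K) = D G)
    (hK : ∀ G i, ∀ d ∈ D G i, ∀ w ∈ W G, K.Adj w d)
    (hdisj : ∀ G, Pairwise fun i j => Disjoint (D G i) (D G j)) :
    erProb n p (fun G => HasHallDefect G a m (W G) (D G)) ≤ 1 / (n : ℝ) ^ 3 := by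
  refine erProb_diag_le h0 h1 K (A := fun H G => HasHallDefect G a m (W H) (D H))
    (fun H G => by rw [hW, hD]) (fun H G => hasHallDefect_inf (hK H)) fun H => ?_
  have hWD : ∀ i, Disjoint (W H) (D H i) := fun i =>
    disjoint_left.2 fun x hxW hxD => (hK H i x hxD x hxW).ne rfl
  exact erProb_hasHallDefect_le h0 h1 hn hι hpma hWD (hdisj H)

end Probability

end Hall

/-- The entrances `ρ i ∈ R` of the cores untouched by `v` are non-neighbours of `v`, so `v` keeps
enough neighbours outside of `R` to be matched to these cores. -/
lemma card_untouched_add_le_card_sdiff {V ι : Type*} [DecidableEq V] {G : SimpleGraph V} {v : V}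
    {R N : Finset V} {a : ℕ} {ρ : ι → V} (hρ : Function.Injective ρ) (hρR : ∀ i, ρ i ∈ R)
    {M : Finset ι} (hM : ∀ i ∈ M, ¬ G.Adj v (ρ i)) (hN : ∀ w ∈ N, G.Adj v w)
    (hdeg : #R + a ≤ #N) : #M + a ≤ #(N \ R) := by
  have hdisj : Disjoint (N ∩ R) (M.image ρ) := by
    refine disjoint_left.2 fun x hx hxM => ?_
    obtain ⟨i, hi, rfl⟩ := mem_image.1 hxM
    exact hM i hi (hN _ (mem_inter.1 hx).1)
  have hsub : N ∩ R ∪ M.image ρ ⊆ R :=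
    union_subset inter_subset_right (image_subset_iff.2 fun i _ => hρR i)
  have hcard := card_le_card hsub
  rw [card_union_of_disjoint hdisj, card_image_of_injective M hρ] at hcard
  have := card_sdiff_add_card_inter N R
  omega

lemma hasISTs_of_not_hasHallDefect {n t a m : ℕ} {G : SimpleGraph (Fin n)} {r : Fin n}
    {A R : Finset (Fin n)} {ρ : Fin t → Fin n} {D : Fin t → Finset (Fin n)}
    (hρ : Function.Injective ρ) (hρR : ∀ i, ρ i ∈ R)
    (hρD : ∀ i j, i ≠ j → ρ i ∉ D j) (hDA : ∀ i, D i ∩ A ⊆ R) (hm : ∀ i, m ≤ #(D i))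
    (hD : Pairwise fun i j => Disjoint (D i) (D j))
    (hconn : ∀ i, (G.induce (insert r (insert (ρ i) (D i : Set (Fin n))))).Connected)
    (hdeg : ∀ v, v ≠ r → #R + a ≤ #(nbrIn G A v))
    (hhall : ∀ v, v ≠ r → ¬ HasHallDefect G a m (nbrIn G A v \ R) fun i => (D i).erase v) :
    HasISTs G r t := by
  classical
  have : Nonempty (Fin n) := ⟨r⟩
  refine hasISTs_of_cores (C := fun i => insert (ρ i) (D i : Set (Fin n))) (fun i j hij => ?_)
    hconn fun v hvr => ?_
  · simp only [Set.disjoint_insert_left, Set.disjoint_insert_right, Set.mem_insert_iff, mem_coe,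
      disjoint_coe, not_or]
    exact ⟨⟨hρ.ne hij.symm, hρD j i hij.symm⟩, hρD i j hij, hD hij⟩
  · set M : Finset (Fin t) := {i | ¬ Touches G (insert (ρ i) (D i : Set (Fin n))) v} with hM
    have hcard : #M + a ≤ #(nbrIn G A v \ R) :=
      card_untouched_add_le_card_sdiff hρ hρR
        (fun i hi hadj => (mem_filter.1 hi).2 (.inr ⟨ρ i, Set.mem_insert _ _, hadj⟩))
        (fun w hw => (mem_nbrIn.1 hw).2) (hdeg v hvr)
    have hmM : ∀ i ∈ M, m ≤ #((D i).erase v) := fun i hi => by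
      rw [erase_eq_of_notMem fun hv => (mem_filter.1 hi).2 (.inl (Set.mem_insert_of_mem _ hv))]
      exact hm i
    obtain ⟨g, hinj, hg⟩ := exists_injOn_adj_of_not_hasHallDefect (hhall v hvr) hmM hcard
    refine ⟨g, by simpa [hM] using hinj, fun i hi => ?_⟩
    obtain ⟨hgi, d, hd, hadj⟩ := hg i (mem_filter.2 ⟨mem_univ i, hi⟩)
    obtain ⟨hgN, hgR⟩ := Finset.mem_sdiff.1 hgi
    obtain ⟨hgA, hvg⟩ := mem_nbrIn.1 hgN
    refine ⟨hvg, fun j => ?_, d, Set.mem_insert_of_mem _ (mem_of_mem_erase hd), hadj⟩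
    rintro (hj | hj)
    · exact hgR (hj ▸ hρR j)
    · exact hgR (hDA j (mem_inter.2 ⟨hj, hgA⟩))

lemma erProb_not_isKJoined_le {n k : ℕ} {p : ℝ} (h0 : 0 ≤ p) (h1 : p ≤ 1) (hn : 0 < n)
    (hk : 2 * n + Real.log n ≤ p * k ^ 2) :
    erProb n p (fun G => ¬ IsKJoined G k) ≤ 1 / n := by
  set pairs : Finset (Finset (Fin n) × Finset (Fin n)) :=
    {ST | Disjoint ST.1 ST.2 ∧ #ST.1 = k ∧ #ST.2 = k} with hpairs
  have hcard : (#pairs : ℝ) ≤ Real.exp (2 * n) := by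
    have htwo : (2 : ℝ) ≤ Real.exp 1 := by linarith [Real.add_one_le_exp 1]
    calc (#pairs : ℝ) ≤ 2 ^ n * 2 ^ n := by
          have : #pairs ≤ 2 ^ n * 2 ^ n := by simpa using card_le_univ pairs
          exact_mod_cast this
      _ ≤ Real.exp 1 ^ n * Real.exp 1 ^ n := by gcongr
      _ = Real.exp (2 * n) := by rw [← Real.exp_nat_mul, ← Real.exp_add]; ring_nf
  calc erProb n p (fun G => ¬ IsKJoined G k)
      ≤ erProb n p (fun G => ∃ ST ∈ pairs, ∀ x ∈ ST.1, ∀ y ∈ ST.2, ¬ G.Adj x y) := by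
        refine erProb_mono h0 h1 fun G hG => ?_
        simp only [IsKJoined, not_forall, not_exists, not_and] at hG
        obtain ⟨S, T, hST, hS, hT, hadj⟩ := hG
        exact ⟨(S, T), by simp [hpairs, hST, hS, hT], hadj⟩
    _ ≤ #pairs * Real.exp (-(p * k ^ 2)) := by
        refine erProb_exists_mem_le_card_mul h0 h1 fun ST hST => ?_
        obtain ⟨hdisj, hS, hT⟩ := (mem_filter.1 hST).2
        have := erProb_no_adj_between_le h1 hdisj
        rwa [hS, hT, ← sq] at this
    _ ≤ Real.exp (2 * n) * Real.exp (-(2 * n + (1 : ℕ) * Real.log n)) := by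
        push_cast
        rw [one_mul]
        gcongr
    _ = 1 / n := by rw [← Real.exp_add, neg_add, add_neg_cancel_left, exp_neg_mul_log 1 hn, pow_one]

section RevealedChoices

variable {V : Type*} {G H : SimpleGraph V} {r v : V} {B N : Finset V} {m s : ℕ}

/-- Some subset of `N` with `s` elements, or `N` itself if `N` has fewer than `s` elements. -/
noncomputable def subsetOfCard (N : Finset V) (s : ℕ) : Finset V :=
  (exists_subset_card_eq (min_le_right s #N)).choose

lemma subsetOfCard_subset (N : Finset V) (s : ℕ) : subsetOfCard N s ⊆ N :=
  (exists_subset_card_eq (min_le_right s #N)).choose_spec.1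

lemma card_subsetOfCard (h : s ≤ #N) : #(subsetOfCard N s) = s :=
  (exists_subset_card_eq (min_le_right s #N)).choose_spec.2.trans (min_eq_left h)

open Classical in
/-- Disjoint connected subsets of `B` of size `m`, chosen once and for all from the edges of `G`
inside `B`; all of them are empty if there is no such family. -/
noncomputable def segments (ι : Type*) (G : SimpleGraph V) (B : Finset V) (m : ℕ) :
    ι → Finset V :=
  if h : ∃ D : ι → Finset V, IsSegmentFamily G B m D then h.choose else fun _ => ∅

variable {ι : Type*}

lemma isSegmentFamily_segments (h : ∃ D : ι → Finset V, IsSegmentFamily G B m D) :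
    IsSegmentFamily G B m (segments ι G B m) := by
  rw [segments, dif_pos h]
  exact h.choose_spec

lemma segments_subset (G : SimpleGraph V) (B : Finset V) (m : ℕ) (i : ι) :
    segments ι G B m i ⊆ B := by
  by_cases h : ∃ D : ι → Finset V, IsSegmentFamily G B m D
  · exact (isSegmentFamily_segments h).subset i
  · simp [segments, h]

lemma pairwise_disjoint_segments (G : SimpleGraph V) (B : Finset V) (m : ℕ) :
    Pairwise fun i j => Disjoint (segments ι G B m i) (segments ι G B m j) := by
  by_cases h : ∃ D : ι → Finset V, IsSegmentFamily G B m D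
  · exact (isSegmentFamily_segments h).disjoint
  · simp [segments, h, Pairwise]

lemma segments_congr (h : ∀ x ∈ B, ∀ y ∈ B, (G.Adj x y ↔ H.Adj x y)) :
    segments ι G B m = segments ι H B m := by
  have hinduce : ∀ S ⊆ B, G.induce (S : Set V) = H.induce (S : Set V) := fun S hS => by
    ext x y
    exact h x (hS x.2) y (hS y.2)
  have hiff : IsSegmentFamily (ι := ι) G B m = IsSegmentFamily H B m := by
    funext D
    refine propext ⟨fun hD => ⟨hD.subset, hD.card_eq, fun i => ?_, hD.disjoint⟩,
      fun hD => ⟨hD.subset, hD.card_eq, fun i => ?_, hD.disjoint⟩⟩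
    · exact hinduce _ (hD.subset i) ▸ hD.connected i
    · exact (hinduce _ (hD.subset i)).symm ▸ hD.connected i
  rw [segments, hiff, segments]

/-- The pairs of vertices that are neither incident with `r` or `v` nor contained in `B`: they are
still undecided after the edges at `r`, at `v` and inside `B` have been revealed. -/
def hiddenPairs (B : Finset V) (r v : V) : SimpleGraph V where
  Adj x y := x ≠ y ∧ (x ≠ r ∧ x ≠ v) ∧ (y ≠ r ∧ y ≠ v) ∧ ¬ (x ∈ B ∧ y ∈ B)
  symm := ⟨fun _ _ h => ⟨h.1.symm, h.2.2.1, h.2.1, fun hB => h.2.2.2 hB.symm⟩⟩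
  loopless := ⟨fun _ h => h.1 rfl⟩

lemma nbrIn_sdiff_of_forall_not_adj {K : SimpleGraph V} (hK : ∀ w, ¬ K.Adj v w) (A : Finset V) :
    nbrIn (G \ K) A v = nbrIn G A v := by
  ext w
  simp [hK]

lemma nbrIn_sdiff_hiddenPairs_root (G : SimpleGraph V) (A B : Finset V) (r v : V) :
    nbrIn (G \ hiddenPairs B r v) A r = nbrIn G A r :=
  nbrIn_sdiff_of_forall_not_adj (K := hiddenPairs B r v) (fun _ h => h.2.1.1 rfl) A

lemma nbrIn_sdiff_hiddenPairs (G : SimpleGraph V) (A B : Finset V) (r v : V) :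
    nbrIn (G \ hiddenPairs B r v) A v = nbrIn G A v :=
  nbrIn_sdiff_of_forall_not_adj (K := hiddenPairs B r v) (fun _ h => h.2.1.2 rfl) A

lemma segments_sdiff_hiddenPairs [DecidableEq V] (G : SimpleGraph V) (B : Finset V) (m : ℕ)
    (r v : V) :
    segments ι (G \ hiddenPairs B r v) (B.erase r) m = segments ι G (B.erase r) m :=
  segments_congr fun _ hx _ hy =>
    and_iff_left fun hK => hK.2.2.2 ⟨mem_of_mem_erase hx, mem_of_mem_erase hy⟩

variable [Fintype V] [DecidableEq V]

/-- A set of `s` neighbours of `r` outside of `B` (all of them, if there are fewer than `s`),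
chosen once and for all from the edges of `G` at `r`. -/
noncomputable def rootNbrs (B : Finset V) (s : ℕ) (r : V) (G : SimpleGraph V) : Finset V :=
  subsetOfCard (nbrIn G (insert r B)ᶜ r) s

lemma rootNbrs_sdiff_hiddenPairs (B : Finset V) (s : ℕ) (r v : V) (G : SimpleGraph V) :
    rootNbrs B s r (G \ hiddenPairs B r v) = rootNbrs B s r G := by
  rw [rootNbrs, nbrIn_sdiff_hiddenPairs_root, rootNbrs]

lemma rootNbrs_subset (B : Finset V) (s : ℕ) (r : V) (G : SimpleGraph V) :
    rootNbrs B s r G ⊆ nbrIn G (insert r B)ᶜ r :=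
  subsetOfCard_subset _ _

lemma adj_of_mem_rootNbrs {w : V} (hw : w ∈ rootNbrs B s r G) : G.Adj r w :=
  (mem_nbrIn.1 (rootNbrs_subset B s r G hw)).2

lemma notMem_of_mem_rootNbrs {w : V} (hw : w ∈ rootNbrs B s r G) : w ∉ B := fun hB =>
  mem_compl.1 (mem_nbrIn.1 (rootNbrs_subset B s r G hw)).1 (mem_insert_of_mem hB)

end RevealedChoices

section Deterministic

variable {n t a m : ℕ} {G : SimpleGraph (Fin n)} {r : Fin n}

lemma hasISTs_of_rootNbrs (hdeg : ∀ v, t + a ≤ #(nbrIn G (insert r ∅)ᶜ v))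
    (hhall : ∀ v, ¬ HasHallDefect G a 1
      (nbrIn G (insert r ∅)ᶜ v \ rootNbrs ∅ t r G) fun x => (rootNbrs ∅ t r G ∩ {x}).erase v) :
    HasISTs G r t := by
  set R := rootNbrs ∅ t r G
  have hR : #R = t := card_subsetOfCard ((Nat.le_add_right t a).trans (hdeg r))
  obtain ⟨ρ, hρ, hρR⟩ : ∃ ρ : Fin t → Fin n, Function.Injective ρ ∧ ∀ i, ρ i ∈ R :=
    ⟨R.orderEmbOfFin hR, (R.orderEmbOfFin hR).injective, orderEmbOfFin_mem R hR⟩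
  refine hasISTs_of_not_hasHallDefect (A := (insert r ∅)ᶜ) (D := fun i => {ρ i}) (m := 1) hρ hρR
    (fun i j hij => ?_) (fun i => ?_) (fun i => (card_singleton _).ge) (fun i j hij => ?_)
    (fun i => ?_) (fun v _ => hR.symm ▸ hdeg v) fun v _ hdefect => ?_
  · exact notMem_singleton.2 (hρ.ne hij)
  · exact inter_subset_left.trans (singleton_subset_iff.2 (hρR i))
  · exact disjoint_singleton.2 (hρ.ne hij)
  · rw [coe_singleton, Set.pair_eq_singleton]
    exact SimpleGraph.induce_pair_connected_of_adj (adj_of_mem_rootNbrs (hρR i))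
  · refine hhall v (HasHallDefect.of_comp hρ ?_)
    simpa only [Function.comp_def, inter_singleton_of_mem (hρR _)] using hdefect

lemma hasISTs_of_isSegmentFamily {B : Finset (Fin n)} {D : Fin t → Finset (Fin n)}
    (hD : IsSegmentFamily G (B.erase r) m D)
    (hdeg : ∀ v, t + a + a ≤ #(nbrIn G (insert r B)ᶜ v))
    (hroot : ¬ HasHallDefect G a m (rootNbrs B (t + a) r G) D)
    (hhall : ∀ v, ¬ HasHallDefect G a m
      (nbrIn G (insert r B)ᶜ v \ rootNbrs B (t + a) r G) fun i => (D i).erase v) :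
    HasISTs G r t := by
  have : Nonempty (Fin n) := ⟨r⟩
  set R := rootNbrs B (t + a) r G
  have hR : #R = t + a := card_subsetOfCard ((Nat.le_add_right _ a).trans (hdeg r))
  have hDB : ∀ i, D i ⊆ B := fun i => (hD.subset i).trans (erase_subset r B)
  obtain ⟨ρ, hρ, hρD⟩ := exists_injOn_adj_of_not_hasHallDefect hroot (M := univ)
    (fun i _ => (hD.card_eq i).ge) (by rw [hR, card_univ, Fintype.card_fin])
  have hρR : ∀ i, ρ i ∈ R := fun i => (hρD i (mem_univ i)).1
  refine hasISTs_of_not_hasHallDefect (by simpa using hρ) hρR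
    (fun i j _ hi => notMem_of_mem_rootNbrs (hρR i) (hDB j hi)) (fun i x hx => ?_)
    (fun i => (hD.card_eq i).ge) hD.disjoint (fun i => ?_) (fun v _ => hR.symm ▸ hdeg v)
    fun v _ => hhall v
  · obtain ⟨hxD, hxA⟩ := mem_inter.1 hx
    exact absurd (mem_insert_of_mem (hDB i hxD)) (mem_compl.1 hxA)
  · obtain ⟨-, d, hd, hadj⟩ := hρD i (mem_univ i)
    exact connected_induce_insert (connected_induce_insert (hD.connected i) hd hadj.symm)
      (Set.mem_insert _ _) (adj_of_mem_rootNbrs (hρR i)).symm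

end Deterministic

section Probabilistic

variable {n t a m : ℕ} {p : ℝ}

lemma erProb_exists_card_nbrIn_lt_le (h0 : 0 ≤ p) (h1 : p ≤ 1) {ε : ℝ} (hε0 : 0 ≤ ε)
    (hε1 : ε ≤ 1) (hn : 0 < n) {B : Finset (Fin n)} (hB : #B + 2 ≤ ε / 3 * n)
    (hnp : 3 * Real.log n ≤ ε ^ 2 * (n * p) / 72) {s : ℕ} (hs : s ≤ (1 - ε / 2) * (n * p)) :
    erProb n p (fun G => ∃ r v, #(nbrIn G (insert r B)ᶜ v) < s) ≤ 1 / n := by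
  have hcard : ∀ r v : Fin n, (1 - ε / 3) * n ≤ #((insert r B)ᶜ.erase v) := fun r v => by
    have hle : n ≤ #((insert r B)ᶜ.erase v) + (#B + 2) := by
      have h₁ := pred_card_le_card_erase (s := (insert r B)ᶜ) (a := v)
      have h₂ := card_insert_le r B
      rw [card_compl, Fintype.card_fin] at h₁
      omega
    have : (n : ℝ) ≤ #((insert r B)ᶜ.erase v) + (#B + 2) := by exact_mod_cast hle
    linarith
  refine erProb_exists_pair_le h0 h1 fun r v => le_trans (erProb_mono h0 h1 fun G hG => ?_)
    (erProb_card_nbrIn_le_le_one_div_cube h0 h1 hε0 hε1 hn (hcard r v) hnp)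
  exact le_trans (by exact_mod_cast hG.le) hs

variable {ι : Type*} [Fintype ι]

lemma erProb_exists_hasHallDefect_nbrIn_le (h0 : 0 ≤ p) (h1 : p ≤ 1) (hn : 0 < n)
    (hι : Fintype.card ι ≤ n) (hpma : 6 * Real.log n ≤ p * m * a) (B : Finset (Fin n)) (s : ℕ)
    {D : Fin n → SimpleGraph (Fin n) → ι → Finset (Fin n)}
    (hD : ∀ r v G, D r (G \ hiddenPairs B r v) = D r G)
    (hsub : ∀ r G i, D r G i ⊆ rootNbrs B s r G ∪ B.erase r)
    (hdisj : ∀ r G, Pairwise fun i j => Disjoint (D r G i) (D r G j)) :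
    erProb n p (fun G => ∃ r v, HasHallDefect G a m
      (nbrIn G (insert r B)ᶜ v \ rootNbrs B s r G) fun i => (D r G i).erase v) ≤ 1 / n := by
  refine erProb_exists_pair_le h0 h1 fun r v => erProb_hasHallDefect_revealed_le h0 h1 hn hι hpma
    (hiddenPairs B r v) (fun G => ?_) (fun G => ?_) (fun G i d hd w hw => ?_)
    fun G i j hij => (hdisj r G hij).mono (erase_subset _ _) (erase_subset _ _)
  · rw [nbrIn_sdiff_hiddenPairs, rootNbrs_sdiff_hiddenPairs]
  · rw [hD]
  · obtain ⟨hdv, hdD⟩ := mem_erase.1 hd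
    obtain ⟨hwN, hwR⟩ := Finset.mem_sdiff.1 hw
    obtain ⟨hwA, hvw⟩ := mem_nbrIn.1 hwN
    obtain ⟨hwr, hwB⟩ := not_or.1 (mem_insert.not.1 (mem_compl.1 hwA))
    rcases mem_union.1 (hsub r G i hdD) with hdR | hdB
    · exact ⟨fun h => hwR (h ▸ hdR), ⟨hwr, hvw.ne'⟩, ⟨(adj_of_mem_rootNbrs hdR).ne', hdv⟩,
        fun h => hwB h.1⟩
    · exact ⟨fun h => hwB (h ▸ mem_of_mem_erase hdB), ⟨hwr, hvw.ne'⟩, ⟨ne_of_mem_erase hdB, hdv⟩,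
        fun h => hwB h.1⟩

lemma erProb_exists_hasHallDefect_rootNbrs_le (h0 : 0 ≤ p) (h1 : p ≤ 1) (hn : 0 < n)
    (hι : Fintype.card ι ≤ n) (hpma : 6 * Real.log n ≤ p * m * a) (B : Finset (Fin n)) (s : ℕ) :
    erProb n p (fun G => ∃ r : Fin n, HasHallDefect G a m (rootNbrs B s r G)
      (segments ι G (B.erase r) m)) ≤ 1 / n := by
  refine (erProb_mono h0 h1 fun G ⟨r, hr⟩ => ⟨r, r, hr⟩).trans <|
    erProb_exists_pair_le h0 h1 (A := fun r _ G => HasHallDefect G a m (rootNbrs B s r G)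
      (segments ι G (B.erase r) m)) fun r _ => ?_
  refine erProb_hasHallDefect_revealed_le h0 h1 hn hι hpma (hiddenPairs B r r)
    (fun G => rootNbrs_sdiff_hiddenPairs B s r r G) (fun G => segments_sdiff_hiddenPairs G B m r r)
    (fun G i d hd w hw => ?_) fun G => pairwise_disjoint_segments G _ m
  obtain ⟨hdr, hdB⟩ := mem_erase.1 (segments_subset G _ m i hd)
  have hwr := (adj_of_mem_rootNbrs hw).ne'
  have hwB := notMem_of_mem_rootNbrs hw
  exact ⟨fun h => hwB (h ▸ hdB), ⟨hwr, hwr⟩, ⟨hdr, hdr⟩, fun h => hwB h.1⟩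

end Probabilistic

section Parameters

variable {n t a m k : ℕ} {p ε : ℝ}

lemma one_sub_two_div_le_erProb_forall_hasISTs (h0 : 0 ≤ p) (h1 : p ≤ 1) (hε0 : 0 ≤ ε)
    (hε1 : ε ≤ 1) (hn : 0 < n) (hεn : 2 ≤ ε / 3 * n)
    (hnp : 3 * Real.log n ≤ ε ^ 2 * (n * p) / 72) (hta : (t + a : ℕ) ≤ (1 - ε / 2) * (n * p))
    (hpa : 6 * Real.log n ≤ p * a) :
    1 - 2 / n ≤ erProb n p (fun G => ∀ r : Fin n, HasISTs G r t) := by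
  have hdeg := erProb_exists_card_nbrIn_lt_le h0 h1 hε0 hε1 hn (B := ∅) (by simpa using hεn) hnp hta
  have hhall := erProb_exists_hasHallDefect_nbrIn_le (m := 1) (a := a) h0 h1 hn
    (Fintype.card_fin n).le (by simpa using hpa) ∅ t
    (D := fun r G x => rootNbrs ∅ t r G ∩ {x})
    (fun r v G => by rw [rootNbrs_sdiff_hiddenPairs])
    (fun r G x => inter_subset_left.trans subset_union_left)
    (fun r G x y hxy => (disjoint_singleton.2 hxy).mono inter_subset_right inter_subset_right)
  have hfail : erProb n p (fun G => ¬ ∀ r : Fin n, HasISTs G r t) ≤ 1 / n + 1 / n := by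
    refine le_trans (erProb_mono h0 h1 fun G => ?_)
      ((erProb_or_le h0 h1 _ _).trans (add_le_add hdeg hhall))
    contrapose!
    exact fun ⟨hG, hG'⟩ r => hasISTs_of_rootNbrs (hG r) (hG' r)
  rw [erProb_not, ← add_div] at hfail
  norm_num at hfail
  linarith

lemma one_sub_four_div_le_erProb_forall_hasISTs (h0 : 0 ≤ p) (h1 : p ≤ 1) (hε0 : 0 ≤ ε)
    (hε1 : ε ≤ 1) (hn : 0 < n) (htn : t ≤ n) {B : Finset (Fin n)} (hBn : #B + 2 ≤ ε / 3 * n)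
    (hm : 1 ≤ m) (hmk : m ≤ k) (hB : 3 * k + t * m + 1 ≤ #B)
    (hk : 2 * n + Real.log n ≤ p * k ^ 2) (hnp : 3 * Real.log n ≤ ε ^ 2 * (n * p) / 72)
    (hta : (t + a + a : ℕ) ≤ (1 - ε / 2) * (n * p)) (hpma : 6 * Real.log n ≤ p * m * a) :
    1 - 4 / n ≤ erProb n p (fun G => ∀ r : Fin n, HasISTs G r t) := by
  have htn : Fintype.card (Fin t) ≤ n := by rwa [Fintype.card_fin]
  have hjoined := erProb_not_isKJoined_le h0 h1 hn hk
  have hdeg := erProb_exists_card_nbrIn_lt_le h0 h1 hε0 hε1 hn hBn hnp hta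
  have hroot := erProb_exists_hasHallDefect_rootNbrs_le h0 h1 hn htn hpma B (t + a)
  have hhall := erProb_exists_hasHallDefect_nbrIn_le h0 h1 hn htn hpma B (t + a)
    (D := fun r G => segments (Fin t) G (B.erase r) m)
    (fun r v G => segments_sdiff_hiddenPairs G B m r v)
    (fun r G i => (segments_subset G _ m i).trans subset_union_right)
    (fun r G => pairwise_disjoint_segments G _ m)
  have hfail : erProb n p (fun G => ¬ ∀ r : Fin n, HasISTs G r t) ≤
      (1 / n + 1 / n) + (1 / n + 1 / n) := by
    refine le_trans (erProb_mono h0 h1 fun G => ?_) <| (erProb_or_le h0 h1 _ _).trans <|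
      add_le_add ((erProb_or_le h0 h1 _ _).trans (add_le_add hjoined hdeg))
        ((erProb_or_le h0 h1 _ _).trans (add_le_add hroot hhall))
    contrapose!
    rintro ⟨⟨hG, hGdeg⟩, hGroot, hGhall⟩ r
    have hBr : 3 * k + t * m ≤ #(B.erase r) := by
      have := pred_card_le_card_erase (s := B) (a := r)
      omega
    exact hasISTs_of_isSegmentFamily
      (isSegmentFamily_segments (exists_isSegmentFamily_of_isKJoined hG hm hmk hBr))
      (hGdeg r) (hGroot r) (hGhall r)
  rw [erProb_not, ← add_div, ← add_div] at hfail
  norm_num at hfail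
  linarith

lemma one_sub_four_div_le_erProb_of_dense (h1 : p ≤ 1) (hε0 : 0 < ε) (hε1 : ε ≤ 1)
    (hlog : 1 ≤ Real.log n) (hnp : 100000 * Real.log n ≤ ε ^ 2 * (n * p))
    (ht : t ≤ (1 - ε) * (n * p)) (hp : ε / 40 ≤ p) :
    1 - 4 / n ≤ erProb n p (fun G => ∀ r : Fin n, HasISTs G r t) := by
  have h0 : 0 ≤ p := by linarith
  have hn : 0 < n := Nat.pos_of_ne_zero fun h => by norm_num [h] at hlog
  have hεnp : 100000 ≤ ε * (n * p) := by nlinarith [mul_nonneg (Nat.cast_nonneg (α := ℝ) n) h0]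
  have hεn : ε * (n * p) ≤ ε * n := by
    gcongr
    exact mul_le_of_le_one_right (Nat.cast_nonneg n) h1
  have ha : ε * (n * p) / 10 ≤ ⌈ε * (n * p) / 10⌉₊ := Nat.le_ceil _
  have ha' : (⌈ε * (n * p) / 10⌉₊ : ℝ) < ε * (n * p) / 10 + 1 :=
    Nat.ceil_lt_add_one (by positivity)
  have hpa : ε / 40 * (ε * (n * p) / 10) ≤ p * ⌈ε * (n * p) / 10⌉₊ := by gcongr
  calc (1 : ℝ) - 4 / n ≤ 1 - 2 / n := by gcongr; norm_num
    _ ≤ _ := one_sub_two_div_le_erProb_forall_hasISTs (a := ⌈ε * (n * p) / 10⌉₊) h0 h1 hε0.le hε1 hn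
        (by linarith) (by linarith) (by push_cast; linarith) (by linarith)

lemma exists_segment_length (hp0 : 0 < p) (hp : p ≤ ε / 40) :
    ∃ m : ℕ, 1 ≤ m ∧ p * m ≤ ε / 10 ∧ ε / 20 ≤ p * m := by
  have hratio : p * (ε / (10 * p)) = ε / 10 := by field_simp
  have hle : (⌊ε / (10 * p)⌋₊ : ℝ) ≤ ε / (10 * p) :=
    Nat.floor_le (div_nonneg (by linarith) (by positivity))
  have hlt := Nat.lt_floor_add_one (ε / (10 * p))
  refine ⟨⌊ε / (10 * p)⌋₊, ?_, by nlinarith, by nlinarith⟩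
  rw [Nat.one_le_floor_iff, one_le_div (by positivity)]
  linarith

lemma exists_reservoir (hε1 : ε ≤ 1) (hεn : 100000 ≤ ε * n) (htm : t * m ≤ ε * n / 10) :
    ∃ B : Finset (Fin n), #B + 2 ≤ ε / 3 * n ∧ 3 * ⌈ε * n / 40⌉₊ + t * m + 1 ≤ #B := by
  obtain ⟨B, -, hB⟩ := exists_subset_card_eq (s := (univ : Finset (Fin n)))
    (n := ⌊ε * n / 4⌋₊) (by
      rw [card_univ, Fintype.card_fin]
      exact Nat.floor_le_of_le (by nlinarith [Nat.cast_nonneg (α := ℝ) n]))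
  have hle : (⌊ε * n / 4⌋₊ : ℝ) ≤ ε * n / 4 := Nat.floor_le (by linarith)
  have hlt := Nat.lt_floor_add_one (ε * n / 4)
  have hk : (⌈ε * n / 40⌉₊ : ℝ) < ε * n / 40 + 1 := Nat.ceil_lt_add_one (by linarith)
  have hroom : (3 * ⌈ε * n / 40⌉₊ + t * m + 1 : ℝ) ≤ ⌊ε * n / 4⌋₊ := by linarith
  refine ⟨B, ?_, ?_⟩
  · rw [hB]
    linarith
  · rw [hB]
    exact_mod_cast hroom

lemma one_sub_four_div_le_erProb_of_sparse (hp0 : 0 < p) (hε0 : 0 < ε) (hε1 : ε ≤ 1)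
    (hlog : 1 ≤ Real.log n) (hnp : 100000 * Real.log n ≤ ε ^ 2 * (n * p))
    (ht : t ≤ (1 - ε) * (n * p)) (hp : p ≤ ε / 40) :
    1 - 4 / n ≤ erProb n p (fun G => ∀ r : Fin n, HasISTs G r t) := by
  have h1 : p ≤ 1 := by linarith
  have hn : 0 < n := Nat.pos_of_ne_zero fun h => by norm_num [h] at hlog
  have hlogn : Real.log n ≤ n := Real.log_le_self (Nat.cast_nonneg n)
  have hεnp : 100000 ≤ ε * (n * p) := by
    nlinarith [mul_nonneg (Nat.cast_nonneg (α := ℝ) n) hp0.le]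
  have hεn : ε * (n * p) ≤ ε * n := by
    gcongr
    exact mul_le_of_le_one_right (Nat.cast_nonneg n) h1
  have htnp : (t : ℝ) ≤ n * p := by nlinarith
  have htn : (t : ℝ) ≤ n := htnp.trans (mul_le_of_le_one_right (Nat.cast_nonneg n) h1)
  have ha : ε * (n * p) / 10 ≤ ⌈ε * (n * p) / 10⌉₊ := Nat.le_ceil _
  have ha' : (⌈ε * (n * p) / 10⌉₊ : ℝ) < ε * (n * p) / 10 + 1 :=
    Nat.ceil_lt_add_one (by positivity)
  obtain ⟨m, hm, hpm, hpm'⟩ := exists_segment_length hp0 hp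
  have hk : ε * n / 40 ≤ ⌈ε * n / 40⌉₊ := Nat.le_ceil _
  have hmk : (m : ℝ) ≤ ⌈ε * n / 40⌉₊ := by nlinarith
  have htm : (t : ℝ) * m ≤ ε * n / 10 := by
    calc (t : ℝ) * m ≤ n * p * m := by gcongr
      _ = n * (p * m) := by ring
      _ ≤ n * (ε / 10) := by gcongr
      _ = ε * n / 10 := by ring
  obtain ⟨B, hBn, hB⟩ := exists_reservoir hε1 (hεnp.trans hεn) htm
  have hpk : p * (ε * n / 40) ^ 2 ≤ p * (⌈ε * n / 40⌉₊ : ℝ) ^ 2 := by gcongr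
  have hpma : ε / 20 * (ε * (n * p) / 10) ≤ p * m * ⌈ε * (n * p) / 10⌉₊ := by gcongr
  refine one_sub_four_div_le_erProb_forall_hasISTs (a := ⌈ε * (n * p) / 10⌉₊) (m := m)
    (k := ⌈ε * n / 40⌉₊) hp0.le h1 hε0.le hε1 hn (by exact_mod_cast htn)
    hBn hm (by exact_mod_cast hmk) hB (by nlinarith) (by linarith)
    (by push_cast; linarith) (by linarith)

end Parameters

lemma one_sub_four_div_le_erProb_floor {n : ℕ} {p ε : ℝ} (h0 : 0 ≤ p) (h1 : p ≤ 1) (hε0 : 0 < ε)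
    (hε1 : ε ≤ 1) (hlog : 1 ≤ Real.log n) (hnp : 100000 / ε ^ 2 ≤ n * p / Real.log n) :
    1 - 4 / n ≤ erProb n p (fun G => ∀ r : Fin n, HasISTs G r ⌊(1 - ε) * n * p⌋₊) := by
  have hlog0 : 0 < Real.log n := by linarith
  have ht : (⌊(1 - ε) * n * p⌋₊ : ℝ) ≤ (1 - ε) * (n * p) := by
    rw [← mul_assoc]
    exact Nat.floor_le (mul_nonneg (mul_nonneg (sub_nonneg.2 hε1) (Nat.cast_nonneg n)) h0)
  rw [div_le_div_iff₀ (by positivity) hlog0, mul_comm (n * p)] at hnp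
  rcases le_total (ε / 40) p with hp | hp
  · exact one_sub_four_div_le_erProb_of_dense h1 hε0 hε1 hlog hnp ht hp
  · have hp0 : 0 < p := h0.lt_of_ne fun h => by
      rw [← h, mul_zero, mul_zero] at hnp
      linarith
    exact one_sub_four_div_le_erProb_of_sparse hp0 hε0 hε1 hlog hnp ht hp

lemma floor_one_sub_min_mul {ε x : ℝ} (hx : 0 ≤ x) :
    ⌊(1 - min ε 1) * x⌋₊ = ⌊(1 - ε) * x⌋₊ := by
  rcases le_total ε 1 with hε | hε
  · rw [min_eq_left hε]
  · rw [min_eq_right hε, sub_self, zero_mul, Nat.floor_zero,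
      Nat.floor_of_nonpos (mul_nonpos_of_nonpos_of_nonneg (sub_nonpos.2 hε) hx)]

/-- If `n p(n) / log n → ∞`, then for every `ε > 0`, with high probability `G(n, p(n))`
contains, for every vertex `r`, at least `⌊(1-ε) n p(n)⌋` independent spanning trees
rooted at `r`. -/
theorem stmt0 (p : ℕ → ℝ) (hp : ∀ n, 0 ≤ p n ∧ p n ≤ 1)
    (hgrow : Tendsto (fun n : ℕ => (n : ℝ) * p n / Real.log n) atTop atTop)
    (ε : ℝ) (hε : 0 < ε) :
    Tendsto
      (fun n : ℕ => erProb n (p n)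
        (fun G => ∀ r : Fin n, HasISTs G r ⌊(1 - ε) * n * p n⌋₊))
      atTop (nhds 1) := by
  have hlog : ∀ᶠ n : ℕ in atTop, 1 ≤ Real.log n :=
    (Real.tendsto_log_atTop.comp tendsto_natCast_atTop_atTop).eventually_ge_atTop 1
  have hlower : ∀ᶠ n : ℕ in atTop, 1 - 4 / (n : ℝ) ≤ erProb n (p n) (fun G =>
      ∀ r : Fin n, HasISTs G r ⌊(1 - ε) * n * p n⌋₊) := by
    filter_upwards [hlog, hgrow.eventually_ge_atTop (100000 / min ε 1 ^ 2)] with n hlog hnp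
    have hbound := one_sub_four_div_le_erProb_floor (hp n).1 (hp n).2 (lt_min hε one_pos)
      (min_le_right ε 1) hlog hnp
    rwa [mul_assoc, floor_one_sub_min_mul (mul_nonneg (Nat.cast_nonneg n) (hp n).1),
      ← mul_assoc] at hbound
  have hlim : Tendsto (fun n : ℕ => 1 - 4 / (n : ℝ)) atTop (nhds 1) := by
    simpa using (tendsto_const_div_atTop_nhds_zero_nat (4 : ℝ)).const_sub 1
  exact tendsto_of_tendsto_of_tendsto_of_le_of_le' hlim tendsto_const_nhds hlower
    (Eventually.of_forall fun n => erProb_le_one (hp n).1 (hp n).2 _)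
end

section
/- For every ε ∈ (0,1/2) there exists a constant C = C(ε) > 1 such that for every function p = p(n) with C·(log n)/n ≤ p(n) ≤ 1-ε for all n, with high probability the random graph G ~ G(n, p(n)) has the following property: for every vertex r of G, G contains at least ⌈(1-ε)·n·p(n)⌉ independent spanning trees rooted at r. -/
open Filter

/-!
Fix pairwise disjoint connected sets of about `δ / p` vertices with `δ = ε / 128`, the cores; when
`p ≥ δ`, single vertices do. To get `t` trees rooted at `r`, choose for each tree one neighbour
`u i` of `r` and one core containing or adjacent to `u i`; a vertex `v` away from the `i`-th core
joins the `i`-th tree by an edge to a neighbour that sees this core. Independence holds once these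
neighbours of `v` are distinct, so one needs a system of distinct representatives, and Hall's
condition follows from two facts. Each core is seen by a positive proportion of the neighbours of
`v`, which handles small families of cores; and all but a proportion `ε / 4` of the neighbours of
`v` see one of any `k = k(ε)` cores, which handles the large ones. Both facts hold with probability
`1 - O(1 / n)` by Chernoff and union bounds, as soon as `n p ≥ C log n`.

The cores are found inside a set `A` of `ε n / 16` vertices, in which any two disjoint sets of
linear size are joined by an edge. This uses only the edges inside `A`, so the edges leaving `A`,
which provide the links, remain independent of the choice of the cores.
-/

namespace IndependentSpanningTrees

open MeasureTheory ProbabilityTheory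
open scoped unitInterval SimpleGraph Classical Finset

section CountingIndependentEvents

lemma card_filter_mem_eq_sum_indicator {Ω ι : Type*} (W : Finset ι) (A : ι → Set Ω) :
    (fun ω => (#{i ∈ W | ω ∈ A i} : ℝ)) = ∑ i : W, (A i).indicator fun _ => (1 : ℝ) := by
  funext ω
  rw [Finset.sum_apply, Finset.sum_coe_sort W fun i => (A i).indicator (fun _ => (1 : ℝ)) ω,
    Finset.card_filter]
  simp [Set.indicator_apply]

variable {Ω ι : Type*} [MeasurableSpace Ω] {μ : Measure Ω}

lemma mgf_indicator_one_le [IsProbabilityMeasure μ] {A : Set Ω} (hA : MeasurableSet A) (l : ℝ) :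
    mgf (A.indicator fun _ => 1) μ l ≤ Real.exp ((Real.exp l - 1) * μ.real A) := by
  have hexp : (fun ω => Real.exp (l * A.indicator (fun _ => 1) ω)) =
      fun ω => 1 + A.indicator (fun _ => Real.exp l - 1) ω := by
    funext ω
    by_cases hω : ω ∈ A <;> simp [hω]
  have hmgf : mgf (A.indicator fun _ => 1) μ l = (Real.exp l - 1) * μ.real A + 1 := by
    rw [mgf, hexp, integral_add (integrable_const _) ((integrable_const _).indicator hA),
      integral_indicator_const _ hA]
    simp [mul_comm, add_comm]
  exact hmgf ▸ Real.add_one_le_exp _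

variable {W : Finset ι} {A : ι → Set Ω}

lemma integrable_exp_mul_card_filter_mem [IsProbabilityMeasure μ]
    (hA : ∀ i, MeasurableSet (A i)) (l : ℝ) :
    Integrable (fun ω => Real.exp (l * #{i ∈ W | ω ∈ A i})) μ := by
  have hcount : Measurable fun ω => (#{i ∈ W | ω ∈ A i} : ℝ) := by
    rw [card_filter_mem_eq_sum_indicator, Finset.sum_fn]
    exact Finset.measurable_sum _ fun i _ => (measurable_const (a := (1 : ℝ))).indicator (hA i)
  refine .of_bound (C := Real.exp (|l| * #W))
    (Real.measurable_exp.comp (hcount.const_mul l)).aestronglyMeasurable (.of_forall fun ω => ?_)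
  rw [Real.norm_eq_abs, Real.abs_exp, Real.exp_le_exp]
  refine (le_abs_self _).trans ?_
  rw [abs_mul, Nat.abs_cast]
  gcongr
  exact Finset.filter_subset _ _

lemma mgf_card_filter_mem_le [IsProbabilityMeasure μ] (hA : ∀ i, MeasurableSet (A i))
    (hindep : iIndepSet (fun i : W => A i) μ) (l : ℝ) :
    mgf (fun ω => (#{i ∈ W | ω ∈ A i} : ℝ)) μ l ≤
      Real.exp ((Real.exp l - 1) * ∑ i ∈ W, μ.real (A i)) := by
  rw [card_filter_mem_eq_sum_indicator, hindep.iIndepFun_indicator.mgf_sum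
    (fun i => measurable_const.indicator (hA i)), Finset.mul_sum, Real.exp_sum,
    ← Finset.prod_coe_sort W]
  exact Finset.prod_le_prod (fun _ _ => mgf_nonneg) fun i _ => mgf_indicator_one_le (hA i) l

-- Chernoff's method with weight `exp 1`, whose excess over `1` is at most `2`.
theorem measureReal_le_card_filter_mem_le [IsProbabilityMeasure μ]
    (hA : ∀ i, MeasurableSet (A i)) (hindep : iIndepSet (fun i : W => A i) μ)
    {m : ℝ} (hm : ∑ i ∈ W, μ.real (A i) ≤ m) (k : ℝ) :
    μ.real {ω | k ≤ #{i ∈ W | ω ∈ A i}} ≤ Real.exp (2 * m - k) := by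
  have hsum : 0 ≤ ∑ i ∈ W, μ.real (A i) := Finset.sum_nonneg fun _ _ => measureReal_nonneg
  calc μ.real {ω | k ≤ #{i ∈ W | ω ∈ A i}}
      ≤ Real.exp (-1 * k) * mgf (fun ω => (#{i ∈ W | ω ∈ A i} : ℝ)) μ 1 :=
        measure_ge_le_exp_mul_mgf k zero_le_one (integrable_exp_mul_card_filter_mem hA 1)
    _ ≤ Real.exp (-1 * k) * Real.exp ((Real.exp 1 - 1) * ∑ i ∈ W, μ.real (A i)) := by
        gcongr
        exact mgf_card_filter_mem_le hA hindep 1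
    _ ≤ Real.exp (2 * m - k) := by
        rw [← Real.exp_add, Real.exp_le_exp]
        nlinarith [Real.exp_one_lt_d9]

lemma exp_neg_le_quadratic {l : ℝ} (hl : 0 ≤ l) : Real.exp (-l) ≤ 1 - l + l ^ 2 / 2 := by
  rw [Real.exp_neg]
  refine (inv_anti₀ (by positivity) (Real.quadratic_le_exp_of_nonneg hl)).trans ?_
  rw [inv_le_iff_one_le_mul₀ (by positivity)]
  nlinarith [sq_nonneg (l ^ 2)]

theorem measureReal_card_filter_mem_le_le [IsProbabilityMeasure μ]
    (hA : ∀ i, MeasurableSet (A i)) (hindep : iIndepSet (fun i : W => A i) μ)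
    {m : ℝ} (hm : m ≤ ∑ i ∈ W, μ.real (A i)) {l : ℝ} (hl₀ : 0 ≤ l) (hl₂ : l ≤ 2) (k : ℝ) :
    μ.real {ω | #{i ∈ W | ω ∈ A i} ≤ k} ≤ Real.exp (l * k - (l - l ^ 2 / 2) * m) := by
  have hrate : Real.exp (-l) - 1 ≤ -(l - l ^ 2 / 2) := by linarith [exp_neg_le_quadratic hl₀]
  calc μ.real {ω | (#{i ∈ W | ω ∈ A i} : ℝ) ≤ k}
      ≤ Real.exp (-(-l) * k) * mgf (fun ω => (#{i ∈ W | ω ∈ A i} : ℝ)) μ (-l) :=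
        measure_le_le_exp_mul_mgf k (neg_nonpos.mpr hl₀) (integrable_exp_mul_card_filter_mem hA _)
    _ ≤ Real.exp (-(-l) * k) * Real.exp ((Real.exp (-l) - 1) * ∑ i ∈ W, μ.real (A i)) := by
        gcongr
        exact mgf_card_filter_mem_le hA hindep _
    _ ≤ Real.exp (-(-l) * k) * Real.exp (-(l - l ^ 2 / 2) * ∑ i ∈ W, μ.real (A i)) := by
        gcongr
    _ ≤ Real.exp (l * k - (l - l ^ 2 / 2) * m) := by
        rw [← Real.exp_add, Real.exp_le_exp]
        nlinarith [mul_nonneg hl₀ (sub_nonneg.mpr hl₂)]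

end CountingIndependentEvents

section RandomGraph

variable {V : Type*}

lemma measurable_mem_edgeSet :
    Measurable fun (G : SimpleGraph V) (e : Sym2 V) => e ∈ G.edgeSet := by
  fun_prop

section Countable
variable [Countable V]

/-- The law of the indicator of the potential edge `e` in `G(V, p)`. -/
noncomputable def edgeLaw (p : I) (e : Sym2 V) : Measure Prop :=
  unitInterval.toNNReal p • .dirac (e ∈ (Sym2.diagSetᶜ : Set (Sym2 V))) +
    unitInterval.toNNReal (σ p) • .dirac False

instance (p : I) (e : Sym2 V) : IsProbabilityMeasure (edgeLaw p e) := by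
  unfold edgeLaw; infer_instance

lemma map_mem_edgeSet (p : I) :
    G(V, p).map (fun G e => e ∈ G.edgeSet) = Measure.infinitePi (edgeLaw (V := V) p) := by
  have hmem : Measurable fun (S : Set (Sym2 V)) e => e ∈ S := by fun_prop
  calc G(V, p).map (fun G e => e ∈ G.edgeSet)
      = setBer(Sym2.diagSetᶜ, p).map fun S e => e ∈ (SimpleGraph.fromEdgeSet S).edgeSet := by
        rw [SimpleGraph.binomialRandom_eq_map,
          Measure.map_map measurable_mem_edgeSet (by fun_prop)]
        rfl
    _ = setBer(Sym2.diagSetᶜ, p).map fun S e => e ∈ S := by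
        refine Measure.map_congr ?_
        filter_upwards [setBernoulli_ae_subset] with S hS
        funext e
        simpa using fun he => hS he
    _ = Measure.infinitePi (edgeLaw p) := by
        rw [setBernoulli_eq_map, Measure.map_map hmem (by fun_prop)]
        exact Measure.map_id

lemma map_mem_edgeSet_apply (p : I) (e : Sym2 V) :
    G(V, p).map (fun G => e ∈ G.edgeSet) = edgeLaw p e := by
  rw [← Measure.infinitePi_map_eval (edgeLaw p) e, ← map_mem_edgeSet,
    Measure.map_map (by fun_prop) measurable_mem_edgeSet]
  rfl

lemma iIndepFun_mem_edgeSet (p : I) :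
    iIndepFun (fun (e : Sym2 V) (G : SimpleGraph V) => e ∈ G.edgeSet) G(V, p) := by
  rw [iIndepFun_iff_map_fun_eq_infinitePi_map (by fun_prop), map_mem_edgeSet]
  simp only [map_mem_edgeSet_apply]

lemma binomialRandom_real_mem_edgeSet (p : I) {e : Sym2 V} (he : ¬ e.IsDiag) :
    G(V, p).real {G | e ∈ G.edgeSet} = p := by
  have hpre : {G : SimpleGraph V | e ∈ G.edgeSet} = (fun G => e ∈ G.edgeSet) ⁻¹' {True} := by
    ext; simp
  rw [hpre, ← map_measureReal_apply (by fun_prop) .of_discrete, map_mem_edgeSet_apply]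
  simp [he, measureReal_def, edgeLaw]

theorem binomialRandom_real_cylinder (p : I) {E F : Finset (Sym2 V)} (hEF : Disjoint E F)
    (hE : ∀ e ∈ E, ¬ e.IsDiag) (hF : ∀ e ∈ F, ¬ e.IsDiag) :
    G(V, p).real {G | (∀ e ∈ E, e ∈ G.edgeSet) ∧ ∀ e ∈ F, e ∉ G.edgeSet} =
      p ^ #E * (1 - p : ℝ) ^ #F := by
  have hF' : ∀ e ∈ F, e ∉ E := fun e heF heE => Finset.disjoint_left.mp hEF heE heF
  have hcyl : {G : SimpleGraph V | (∀ e ∈ E, e ∈ G.edgeSet) ∧ ∀ e ∈ F, e ∉ G.edgeSet} =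
      ⋂ e ∈ E ∪ F, (fun G => e ∈ G.edgeSet) ⁻¹' {e ∈ E} := by
    ext G
    simp only [Set.mem_ofPred_eq, Finset.mem_union, Set.mem_iInter, Set.mem_preimage,
      Set.mem_singleton_iff, eq_iff_iff, or_imp, forall_and]
    exact and_congr (forall₂_congr fun e he => by simp [he])
      (forall₂_congr fun e he => by simp [hF' e he])
  have hmeas (e : Sym2 V) : MeasurableSet {G : SimpleGraph V | e ∈ G.edgeSet} :=
    measurableSet_setOfPred.mpr (by fun_prop)
  rw [hcyl, measureReal_def, (iIndepFun_mem_edgeSet p).measure_inter_preimage_eq_mul _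
    fun _ _ => .of_discrete, ENNReal.toReal_prod, Finset.prod_union hEF]
  congr 1
  · refine Finset.prod_eq_pow_card fun e he => ?_
    rw [← binomialRandom_real_mem_edgeSet p (hE e he), measureReal_def]
    congr 2; ext; simp [he]
  · refine Finset.prod_eq_pow_card fun e he => ?_
    rw [← binomialRandom_real_mem_edgeSet p (hF e he), ← probReal_compl_eq_one_sub (hmeas e),
      measureReal_def]
    congr 2; ext; simp [hF' e he]

end Countable

instance [Finite V] : DiscreteMeasurableSpace (SimpleGraph V) :=
  have : MeasurableSingletonClass (SimpleGraph V) := ⟨fun G => by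
    have hG : {G} = SimpleGraph.edgeSet ⁻¹' {G.edgeSet} := by
      ext; simp
    rw [hG]
    exact (by fun_prop : Measurable (SimpleGraph.edgeSet (V := V)))
      (Set.toFinite _).measurableSet⟩
  inferInstance

/-- `S` is a graph property that can be decided by inspecting only the potential edges in `E`. -/
def DependsOnEdges (E : Set (Sym2 V)) (S : Set (SimpleGraph V)) : Prop :=
  ∀ G H : SimpleGraph V, (∀ e ∈ E, e ∈ G.edgeSet ↔ e ∈ H.edgeSet) → (G ∈ S ↔ H ∈ S)

namespace DependsOnEdges
variable {E F : Set (Sym2 V)} {S T : Set (SimpleGraph V)}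

lemma mono (h : DependsOnEdges E S) (hEF : E ⊆ F) : DependsOnEdges F S :=
  fun G H hGH => h G H fun e he => hGH e (hEF he)

lemma biInter {ι : Type*} {s : Finset ι} {E : ι → Set (Sym2 V)} {S : ι → Set (SimpleGraph V)}
    (h : ∀ i ∈ s, DependsOnEdges (E i) (S i)) :
    DependsOnEdges (⋃ i ∈ s, E i) (⋂ i ∈ s, S i) := by
  intro G H hGH
  simp only [Set.mem_iInter]
  exact forall₂_congr fun i hi =>
    (h i hi).mono (Set.subset_biUnion_of_mem (Finset.mem_coe.mpr hi)) G H hGH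

lemma exists_preimage (h : DependsOnEdges E S) :
    ∃ P : Set (E → Prop), S = (fun G (e : E) => (e : Sym2 V) ∈ G.edgeSet) ⁻¹' P := by
  refine ⟨(fun G (e : E) => (e : Sym2 V) ∈ G.edgeSet) '' S,
    (Set.subset_preimage_image _ _).antisymm ?_⟩
  rintro G ⟨H, hH, hHG⟩
  exact (h H G fun e he => iff_of_eq (congrFun hHG ⟨e, he⟩)).mp hH

variable [Finite V]

theorem measureReal_inter (p : I) (hS : DependsOnEdges E S) (hT : DependsOnEdges F T)
    (hEF : Disjoint E F) : G(V, p).real (S ∩ T) = G(V, p).real S * G(V, p).real T := by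
  lift E to Finset (Sym2 V) using E.toFinite
  lift F to Finset (Sym2 V) using F.toFinite
  obtain ⟨P, rfl⟩ := hS.exists_preimage
  obtain ⟨Q, rfl⟩ := hT.exists_preimage
  have hindep := (iIndepFun_mem_edgeSet p).indepFun_finset E F (Finset.disjoint_coe.mp hEF)
    (fun e => by fun_prop)
  simp only [measureReal_def, ← ENNReal.toReal_mul]
  congr 1
  exact hindep.measure_inter_preimage_eq_mul P Q (Set.toFinite _).measurableSet
    (Set.toFinite _).measurableSet

theorem iIndepSet {ι : Type*} {E : ι → Set (Sym2 V)} {S : ι → Set (SimpleGraph V)} (p : I)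
    (hS : ∀ i, DependsOnEdges (E i) (S i)) (hE : Pairwise (Function.onFun Disjoint E)) :
    iIndepSet S G(V, p) := by
  rw [iIndepSet_iff_meas_biInter fun _ => .of_discrete]
  intro s
  induction s using Finset.induction_on with
  | empty => simp
  | insert i s his ih =>
    rw [Finset.set_biInter_insert, Finset.prod_insert his, ← ih]
    have hdisj : Disjoint (E i) (⋃ j ∈ s, E j) :=
      Set.disjoint_iUnion₂_right.mpr fun j hj => hE (ne_of_mem_of_not_mem hj his).symm
    rw [← ENNReal.toReal_eq_toReal_iff' (by finiteness) (by finiteness), ENNReal.toReal_mul]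
    exact (hS i).measureReal_inter p (biInter fun j _ => hS j) hdisj

end DependsOnEdges

end RandomGraph

section Stars

variable {V : Type*}

lemma binomialRandom_real_star [Countable V] (p : I) {w : V} {P Q : Finset V}
    (hPQ : Disjoint P Q) (hP : w ∉ P) (hQ : w ∉ Q) :
    G(V, p).real {G | (∀ x ∈ P, G.Adj w x) ∧ ∀ x ∈ Q, ¬ G.Adj w x} =
      p ^ #P * (1 - p : ℝ) ^ #Q := by
  have hinj : Function.Injective fun x => s(w, x) := fun x y h => Sym2.congr_right.mp h
  have hdiag {R : Finset V} (hR : w ∉ R) : ∀ e ∈ R.image (s(w, ·)), ¬ e.IsDiag := by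
    simp only [Finset.forall_mem_image, Sym2.mk_isDiag_iff]
    exact fun x hx hwx => hR (hwx ▸ hx)
  rw [← Finset.card_image_of_injective P hinj, ← Finset.card_image_of_injective Q hinj,
    ← binomialRandom_real_cylinder p ((Finset.disjoint_image hinj).mpr hPQ) (hdiag hP) (hdiag hQ)]
  simp only [Finset.forall_mem_image, SimpleGraph.mem_edgeSet]

lemma binomialRandom_real_adj [Countable V] (p : I) {v w : V} (hvw : v ≠ w) :
    G(V, p).real {G | G.Adj v w} = p := by
  simpa using binomialRandom_real_mem_edgeSet p (e := s(v, w)) (by simpa using hvw)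

lemma sum_binomialRandom_real_adj [Countable V] (p : I) {A : Finset V} {v : V} (hv : v ∉ A) :
    ∑ w ∈ A, G(V, p).real {G | G.Adj v w} = #A * (p : ℝ) := by
  rw [Finset.sum_congr rfl fun w hw => binomialRandom_real_adj p (ne_of_mem_of_not_mem hw hv).symm,
    Finset.sum_const, nsmul_eq_mul]

lemma binomialRandom_real_adj_and_not_adj [Countable V] (p : I) {X : Finset V} {v w : V}
    (hv : v ∉ X) (hw : w ∉ insert v X) :
    G(V, p).real {G | G.Adj v w ∧ ∀ x ∈ X, ¬ G.Adj w x} = p * (1 - p : ℝ) ^ #X := by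
  rw [Finset.mem_insert, not_or] at hw
  have hstar := binomialRandom_real_star p (w := w) (P := {v}) (Q := X) (by simpa)
    (by simpa using hw.1) hw.2
  simpa [SimpleGraph.adj_comm] using hstar

lemma binomialRandom_real_adj_and_not_adj_and_exists_adj [Finite V] (p : I)
    {X : Finset V} {v w r : V} (hvr : v ≠ r) (hv : v ∉ X) (hr : r ∉ X)
    (hw : w ∉ insert v (insert r X)) :
    G(V, p).real {G | G.Adj v w ∧ ¬ G.Adj r w ∧ ∃ x ∈ X, G.Adj w x} =
      p * (1 - p) * (1 - (1 - p : ℝ) ^ #X) := by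
  have hdiff : {G : SimpleGraph V | G.Adj v w ∧ ¬ G.Adj r w ∧ ∃ x ∈ X, G.Adj w x} =
      {G | G.Adj v w ∧ ∀ x ∈ ({r} : Finset V), ¬ G.Adj w x} \
        {G | G.Adj v w ∧ ∀ x ∈ insert r X, ¬ G.Adj w x} := by
    ext G
    simp only [Set.mem_ofPred_eq, Set.mem_sdiff, Finset.forall_mem_insert, Finset.mem_singleton,
      forall_eq, SimpleGraph.adj_comm G r]
    grind
  have hsub : {G : SimpleGraph V | G.Adj v w ∧ ∀ x ∈ insert r X, ¬ G.Adj w x} ⊆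
      {G | G.Adj v w ∧ ∀ x ∈ ({r} : Finset V), ¬ G.Adj w x} :=
    fun G hG => ⟨hG.1, fun x hx => hG.2 x (by simp_all)⟩
  rw [hdiff, measureReal_sdiff hsub .of_discrete,
    binomialRandom_real_adj_and_not_adj p (by simpa) (by grind),
    binomialRandom_real_adj_and_not_adj p (by grind) (by grind), Finset.card_insert_of_notMem hr]
  simp only [Finset.card_singleton, pow_one]
  ring

lemma DependsOnEdges.of_adj_star {w : V} {X : Set V} {S : Set (SimpleGraph V)}
    (h : ∀ G H : SimpleGraph V, (∀ x ∈ X, G.Adj w x ↔ H.Adj w x) → (G ∈ S ↔ H ∈ S)) :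
    DependsOnEdges ((s(w, ·)) '' X) S :=
  fun G H hGH => h G H fun _ hx => hGH _ ⟨_, hx, rfl⟩

lemma dependsOnEdges_adj (v w : V) : DependsOnEdges ((s(w, ·)) '' {v}) {G | G.Adj v w} :=
  .of_adj_star fun G H hGH => by simpa [SimpleGraph.adj_comm] using hGH v rfl

lemma pairwise_disjoint_star {W : Finset V} {X : Set V} (hWX : Disjoint ↑W X) :
    Pairwise (Function.onFun Disjoint fun w : W => (s(↑w, ·)) '' X) := by
  intro w w' hww'
  refine Set.disjoint_left.mpr ?_
  rintro _ ⟨x, -, rfl⟩ ⟨y, hy, hxy⟩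
  rcases Sym2.eq_iff.mp hxy with ⟨h, -⟩ | ⟨-, h⟩
  · exact hww' (Subtype.ext h.symm)
  · exact Set.disjoint_left.mp hWX w.2 (h ▸ hy)

variable [Finite V] {W : Finset V} {X : Set V} {P : SimpleGraph V → V → Prop}
  [∀ G, DecidablePred (P G)]

lemma measureReal_le_card_filter_star_le (p : I) (hWX : Disjoint ↑W X)
    (hP : ∀ w, DependsOnEdges ((s(w, ·)) '' X) {G | P G w}) {m : ℝ}
    (hm : ∑ w ∈ W, G(V, p).real {G | P G w} ≤ m) (k : ℝ) :
    G(V, p).real {G | k ≤ #{w ∈ W | P G w}} ≤ Real.exp (2 * m - k) := by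
  convert measureReal_le_card_filter_mem_le (fun _ => .of_discrete)
    (DependsOnEdges.iIndepSet p (fun w => hP w) (pairwise_disjoint_star hWX)) hm k
  rfl

lemma measureReal_card_filter_star_le_le (p : I) (hWX : Disjoint ↑W X)
    (hP : ∀ w, DependsOnEdges ((s(w, ·)) '' X) {G | P G w}) {m : ℝ}
    (hm : m ≤ ∑ w ∈ W, G(V, p).real {G | P G w}) {l : ℝ} (hl₀ : 0 ≤ l) (hl₂ : l ≤ 2) (k : ℝ) :
    G(V, p).real {G | (#{w ∈ W | P G w} : ℝ) ≤ k} ≤ Real.exp (l * k - (l - l ^ 2 / 2) * m) := by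
  convert measureReal_card_filter_mem_le_le (fun _ => .of_discrete)
    (DependsOnEdges.iIndepSet p (fun w => hP w) (pairwise_disjoint_star hWX)) hm hl₀ hl₂ k
  rfl

theorem measureReal_le_card_filter_adj_le (p : I) (A : Finset V) (v : V) (k : ℝ) :
    G(V, p).real {G | k ≤ #{w ∈ A | G.Adj v w}} ≤ Real.exp (2 * (#A * p) - k) := by
  have hcount (G : SimpleGraph V) :
      {w ∈ A | G.Adj v w} = ({w ∈ A.erase v | G.Adj v w} : Finset V) := by
    ext w
    simpa using fun h : G.Adj v w => fun _ => h.ne'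
  simp only [hcount]
  refine measureReal_le_card_filter_star_le (X := {v}) p (by simp) (dependsOnEdges_adj v)
    ((sum_binomialRandom_real_adj p (Finset.notMem_erase v _)).trans_le ?_) k
  gcongr
  · exact p.2.1
  · exact Finset.erase_subset _ _

end Stars

section Neighbors

variable {V : Type*} [Fintype V]

/-- The neighbours of `v` outside `A ∪ X` that have no neighbour in `X`. -/
noncomputable def uncoveredNeighbors (G : SimpleGraph V) (A X : Finset V) (v : V) : Finset V :=
  {w ∈ (insert v (A ∪ X))ᶜ | G.Adj v w ∧ ∀ x ∈ X, ¬ G.Adj w x}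

/-- The neighbours of `v` outside `A ∪ X` that have a neighbour in `X` and are not adjacent to
the root `r`. -/
noncomputable def coveredNeighbors (G : SimpleGraph V) (r : V) (A X : Finset V) (v : V) :
    Finset V :=
  {w ∈ (insert v (insert r (A ∪ X)))ᶜ | G.Adj v w ∧ ¬ G.Adj r w ∧ ∃ x ∈ X, G.Adj w x}

theorem measureReal_degree_le_le (p : I) (v : V) {η : ℝ} (hη₀ : 0 ≤ η) (hη₁ : η ≤ 1) :
    G(V, p).real {G | (G.degree v : ℝ) ≤ (1 - η) * (Fintype.card V * p)} ≤
      Real.exp (1 - η ^ 2 / 2 * (Fintype.card V * p)) := by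
  have hcount (G : SimpleGraph V) : G.degree v = #{w ∈ Finset.univ.erase v | G.Adj v w} := by
    rw [← G.card_neighborFinset_eq_degree]
    congr 1; ext w
    simpa using fun h : G.Adj v w => h.ne'
  have hcard : ((#(Finset.univ.erase v) : ℕ) : ℝ) = Fintype.card V - 1 := by
    rw [Finset.card_erase_of_mem (Finset.mem_univ v), Finset.card_univ,
      Nat.cast_pred (Fintype.card_pos_iff.mpr ⟨v⟩)]
  simp only [hcount]
  refine (measureReal_card_filter_star_le_le (X := {v}) p (by simp) (dependsOnEdges_adj v)
    (sum_binomialRandom_real_adj p (Finset.notMem_erase v _)).ge hη₀ (by linarith) _).trans ?_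
  rw [hcard, Real.exp_le_exp]
  nlinarith [mul_le_one₀ p.2.2 hη₀ hη₁, mul_nonneg p.2.1 (sq_nonneg η)]

theorem measureReal_le_card_uncoveredNeighbors_le (p : I) (A : Finset V) {X : Finset V} {v : V}
    (hv : v ∉ X) (k : ℝ) :
    G(V, p).real {G | k ≤ #(uncoveredNeighbors G A X v)} ≤
      Real.exp (2 * (Fintype.card V * (p * (1 - p : ℝ) ^ #X)) - k) := by
  have hprob : ∀ w ∈ (insert v (A ∪ X))ᶜ, G(V, p).real {G | G.Adj v w ∧ ∀ x ∈ X, ¬ G.Adj w x} =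
      p * (1 - p : ℝ) ^ #X := fun w hw =>
    binomialRandom_real_adj_and_not_adj p hv (by grind [Finset.mem_compl])
  refine measureReal_le_card_filter_star_le (X := (insert v (A ∪ X) : Finset V)) p ?_
    (fun w => .of_adj_star ?_) ?_ k
  · rw [Finset.disjoint_coe]
    exact disjoint_compl_left
  · intro G H hGH
    simp only [Set.mem_ofPred_eq, SimpleGraph.adj_comm _ v]
    exact and_congr (hGH v (by simp)) (forall₂_congr fun x hx => not_congr (hGH x (by simp [hx])))
  · rw [Finset.sum_congr rfl hprob, Finset.sum_const, nsmul_eq_mul]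
    have := p.2.1
    have := sub_nonneg.mpr p.2.2
    gcongr
    exact Finset.card_le_univ _

theorem measureReal_card_coveredNeighbors_le_le (p : I) (A : Finset V) {X : Finset V} {v r : V}
    (hvr : v ≠ r) (hv : v ∉ X) (hr : r ∉ X) {m : ℝ}
    (hm : m ≤ #(insert v (insert r (A ∪ X)))ᶜ * (p * (1 - p) * (1 - (1 - p : ℝ) ^ #X))) (k : ℝ) :
    G(V, p).real {G | (#(coveredNeighbors G r A X v) : ℝ) ≤ k} ≤ Real.exp (k - m / 2) := by
  have hprob : ∀ w ∈ (insert v (insert r (A ∪ X)))ᶜ,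
      G(V, p).real {G | G.Adj v w ∧ ¬ G.Adj r w ∧ ∃ x ∈ X, G.Adj w x} =
        p * (1 - p) * (1 - (1 - p : ℝ) ^ #X) := fun w hw =>
    binomialRandom_real_adj_and_not_adj_and_exists_adj p hvr hv hr (by grind [Finset.mem_compl])
  refine (measureReal_card_filter_star_le_le (X := (insert v (insert r (A ∪ X)) : Finset V))
    (l := 1) (m := m) p ?_ (fun w => .of_adj_star ?_) ?_ zero_le_one one_le_two k).trans_eq
    (by ring_nf)
  · rw [Finset.disjoint_coe]
    exact disjoint_compl_left
  · intro G H hGH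
    simp only [Set.mem_ofPred_eq, SimpleGraph.adj_comm _ v, SimpleGraph.adj_comm _ r]
    exact and_congr (hGH v (by simp)) (and_congr (not_congr (hGH r (by simp)))
      (exists_congr fun x => and_congr_right fun hx => hGH x (by simp [hx])))
  · rwa [Finset.sum_congr rfl hprob, Finset.sum_const, nsmul_eq_mul]

end Neighbors

section Conditioning

variable {V : Type*} [Finite V]

/-- Revealing the edges in `E` first, one may condition on the choice of a `c` with `G ∈ S c`. -/
theorem measureReal_exists_forall_bad_le {ι : Type*} [Finite ι] (p : I) {E F : Set (Sym2 V)}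
    (hEF : Disjoint E F) {S B : ι → Set (SimpleGraph V)} (hS : ∀ c, DependsOnEdges E (S c))
    (hB : ∀ c, DependsOnEdges F (B c)) {b : ℝ} (hb : 0 ≤ b)
    (hle : ∀ c, (S c).Nonempty → G(V, p).real (B c) ≤ b) :
    G(V, p).real {G | (∃ c, G ∈ S c) ∧ ∀ c, G ∈ S c → G ∈ B c} ≤ b := by
  cases nonempty_fintype ι
  rcases isEmpty_or_nonempty ι with hι | hι
  · simpa using hb
  let chosen (G : SimpleGraph V) : ι := Classical.epsilon fun c => G ∈ S c
  have hchosen {G : SimpleGraph V} (hG : ∃ c, G ∈ S c) : G ∈ S (chosen G) :=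
    Classical.epsilon_spec hG
  let Q (c : ι) : Set (SimpleGraph V) := {G | G ∈ S c ∧ chosen G = c}
  have hQ (c : ι) : DependsOnEdges E (Q c) := fun G H hGH => by
    have hGHS (c' : ι) : G ∈ S c' ↔ H ∈ S c' := hS c' G H hGH
    simp only [Q, chosen, Set.mem_ofPred_eq, hGHS]
  have hdisj : Pairwise (Function.onFun Disjoint Q) := fun c c' hcc' =>
    Set.disjoint_left.mpr fun G hG hG' => hcc' (hG.2.symm.trans hG'.2)
  have hterm (c : ι) : G(V, p).real (Q c ∩ B c) ≤ G(V, p).real (Q c) * b := by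
    rw [(hQ c).measureReal_inter p (hB c) hEF]
    rcases (S c).eq_empty_or_nonempty with hc | hc
    · have : Q c = ∅ := by simp [Q, hc]
      simp [this]
    · exact mul_le_mul_of_nonneg_left (hle c hc) measureReal_nonneg
  calc G(V, p).real {G | (∃ c, G ∈ S c) ∧ ∀ c, G ∈ S c → G ∈ B c}
      ≤ G(V, p).real (⋃ c, Q c ∩ B c) := measureReal_mono fun G hG =>
        Set.mem_iUnion.mpr ⟨chosen G, ⟨hchosen hG.1, rfl⟩, hG.2 _ (hchosen hG.1)⟩
    _ ≤ ∑ c, G(V, p).real (Q c) * b :=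
        (measureReal_iUnion_fintype_le _).trans (Finset.sum_le_sum fun c _ => hterm c)
    _ = G(V, p).real (⋃ c, Q c) * b := by
        rw [← Finset.sum_mul, measureReal_iUnion_fintype hdisj fun _ => .of_discrete]
    _ ≤ b := mul_le_of_le_one_left hb measureReal_le_one

end Conditioning

lemma erProb_eq_binomialRandom_real (n : ℕ) (p : I) (A : SimpleGraph (Fin n) → Prop) :
    erProb n p A = G(Fin n, p).real {G | A G} := by
  have hsingleton (G : SimpleGraph (Fin n)) : G(Fin n, p).real {G} =
      (p : ℝ) ^ Nat.card G.edgeSet * (1 - p : ℝ) ^ (n.choose 2 - Nat.card G.edgeSet) := by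
    simp only [Nat.card_coe_set_eq]
    simp [measureReal_def]
  rw [erProb, ← Finset.sum_filter, ← Finset.sum_congr rfl fun G _ => hsingleton G,
    sum_measureReal_singleton]
  simp

section Trees

variable {V : Type*}

/-- The graph joining every vertex `v ≠ r` to `parent v`. -/
def parentGraph (r : V) (parent : V → V) : SimpleGraph V :=
  .fromRel fun v w => v ≠ r ∧ parent v = w

lemma parentGraph_adj {r : V} {parent : V → V} {v w : V} :
    (parentGraph r parent).Adj v w ↔
      v ≠ w ∧ (v ≠ r ∧ parent v = w ∨ w ≠ r ∧ parent w = v) :=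
  SimpleGraph.fromRel_adj _ _ _

section ParentGraph

variable {r : V} {parent : V → V} {α : Type*} [Preorder α] [WellFoundedLT α] {rank : V → α}

lemma exists_walk_parentGraph (hrank : ∀ v, v ≠ r → rank (parent v) < rank v) {Q : Set V}
    (hQ : ∀ v ∈ Q, v ≠ r → parent v ∈ Q) {v : V} (hv : v ∈ Q) :
    ∃ w : (parentGraph r parent).Walk v r, ∀ x ∈ w.support, x ∈ Q := by
  induction h : rank v using WellFoundedLT.induction generalizing v with
  | ind _ ih =>
    subst h
    by_cases hvr : v = r
    · subst hvr
      exact ⟨.nil, by simpa⟩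
    · obtain ⟨w, hw⟩ := ih _ (hrank v hvr) (hQ v hv hvr) rfl
      have hadj : (parentGraph r parent).Adj v (parent v) := by
        refine parentGraph_adj.mpr ⟨fun hv' => ?_, .inl ⟨hvr, rfl⟩⟩
        exact (hrank v hvr).ne (congrArg rank hv'.symm)
      exact ⟨.cons hadj w, by simpa [hv] using hw⟩

lemma card_edgeSet_parentGraph_lt [Finite V] :
    Nat.card (parentGraph r parent).edgeSet < Nat.card V := by
  cases nonempty_fintype V
  have hsub : (parentGraph r parent).edgeSet ⊆
      ((Finset.univ.erase r).image fun v => s(v, parent v) : Finset (Sym2 V)) := by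
    intro e he
    induction e using Sym2.ind with | _ v w =>
    rcases (parentGraph_adj.mp (SimpleGraph.mem_edgeSet _ |>.mp he)).2 with ⟨hr, rfl⟩ | ⟨hr, rfl⟩
    · simpa using ⟨v, hr, .inl ⟨rfl, rfl⟩⟩
    · simpa using ⟨w, hr, .inr ⟨rfl, rfl⟩⟩
  calc Nat.card (parentGraph r parent).edgeSet
      ≤ #((Finset.univ.erase r).image fun v => s(v, parent v)) := by
        rw [Nat.card_coe_set_eq, ← Set.ncard_coe_finset]
        exact Set.ncard_le_ncard hsub
    _ ≤ #(Finset.univ.erase r) := Finset.card_image_le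
    _ < Nat.card V := by
        rw [Nat.card_eq_fintype_card]
        exact Finset.card_erase_lt_of_mem (Finset.mem_univ r)

lemma isTree_parentGraph [Finite V] (hrank : ∀ v, v ≠ r → rank (parent v) < rank v) :
    (parentGraph r parent).IsTree := by
  have hreach (v : V) : (parentGraph r parent).Reachable v r :=
    (exists_walk_parentGraph hrank (fun _ _ _ => Set.mem_univ _) (Set.mem_univ v)).nonempty
  have hconn : (parentGraph r parent).Connected :=
    have : Nonempty V := ⟨r⟩
    ⟨fun v w => (hreach v).trans (hreach w).symm⟩
  exact SimpleGraph.isTree_iff_connected_and_card.mpr ⟨hconn,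
    le_antisymm card_edgeSet_parentGraph_lt hconn.card_vert_le_card_edgeSet_add_one⟩

lemma support_subset_of_isPath_parentGraph [Finite V]
    (hrank : ∀ v, v ≠ r → rank (parent v) < rank v) {Q : Set V}
    (hQ : ∀ v ∈ Q, v ≠ r → parent v ∈ Q) {v : V} (hv : v ∈ Q)
    {q : (parentGraph r parent).Walk v r} (hq : q.IsPath) : ∀ x ∈ q.support, x ∈ Q := by
  obtain ⟨w, hw⟩ := exists_walk_parentGraph hrank hQ hv
  have hunique := (isTree_parentGraph hrank).isAcyclic.subsingleton_path v r
  have hqw : q = w.toPath := congrArg Subtype.val (hunique.elim ⟨q, hq⟩ w.toPath)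
  exact fun x hx => hw x (w.support_toPath_subset_support (hqw ▸ hx))

end ParentGraph

/-- `v` lies outside `B` and has no neighbour in `B`. -/
def IsFar (G : SimpleGraph V) (B : Set V) (v : V) : Prop :=
  v ∉ B ∧ ∀ b ∈ B, ¬ G.Adj v b

/-- The rank by which parents are chosen in a tree with core `B` attached to the root `r` at `u`:
vertices of `B` are ordered by their distance to `u`, and come after the root and before the
vertices at distance one and two from `B`. -/
noncomputable def coreRank (G : SimpleGraph V) (r : V) (B : Set V) (u : B) (v : V) : ℕ ×ₗ ℕ :=
  if v = r then toLex (0, 0)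
  else if h : v ∈ B then toLex (1, (G.induce B).dist ⟨v, h⟩ u)
  else if IsFar G B v then toLex (3, 0)
  else toLex (2, 0)

lemma exists_adj_dist_lt {G : SimpleGraph V} (hG : G.Connected) {u v : V} (huv : v ≠ u) :
    ∃ w, G.Adj v w ∧ G.dist w u < G.dist v u := by
  obtain ⟨p, hp⟩ := hG.exists_walk_length_eq_dist v u
  cases p with
  | nil => exact absurd rfl huv
  | cons h q =>
    refine ⟨_, h, (SimpleGraph.dist_le q).trans_lt ?_⟩
    rw [← hp, SimpleGraph.Walk.length_cons]
    exact Nat.lt_succ_self _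

section Core

variable {G : SimpleGraph V} {r : V} {B : Set V} {u : B} {link : V → V}

/-- The parent of `v` is next to it on a shortest path to `u` inside `B` if `v ∈ B`, in `B` if
`v` has a neighbour there, and `link v` otherwise. -/
lemma exists_adj_coreRank_lt (hB : (G.induce B).Connected) (hr : r ∉ B) (hru : G.Adj r u)
    (hlink : ∀ v, v ≠ r → IsFar G B v → G.Adj v (link v) ∧ ∃ b ∈ B, G.Adj (link v) b)
    {v : V} (hv : v ≠ r) :
    ∃ w, G.Adj v w ∧ coreRank G r B u w < coreRank G r B u v ∧
      (w = r ∨ w ∈ B ∨ IsFar G B v ∧ w = link v) := by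
  have hne {b : V} (hb : b ∈ B) : b ≠ r := ne_of_mem_of_not_mem hb hr
  by_cases hvB : v ∈ B
  · by_cases hvu : (⟨v, hvB⟩ : B) = u
    · subst hvu
      refine ⟨r, hru.symm, ?_, .inl rfl⟩
      simp [coreRank, hv, hvB, Prod.Lex.toLex_lt_toLex]
    · obtain ⟨w, hvw, hlt⟩ := exists_adj_dist_lt hB hvu
      refine ⟨w, hvw, ?_, .inr (.inl w.2)⟩
      simpa [coreRank, hv, hvB, hne w.2, Prod.Lex.toLex_lt_toLex] using hlt
  by_cases hfar : IsFar G B v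
  · obtain ⟨hadj, b, hb, hlb⟩ := hlink v hv hfar
    have hnear : ¬ IsFar G B (link v) := fun h => h.2 b hb hlb
    refine ⟨link v, hadj, ?_, .inr (.inr ⟨hfar, rfl⟩)⟩
    unfold coreRank
    split_ifs <;> simp_all [Prod.Lex.toLex_lt_toLex]
  · obtain ⟨b, hb, hvb⟩ : ∃ b ∈ B, G.Adj v b := by simpa [IsFar, hvB] using hfar
    refine ⟨b, hvb, ?_, .inr (.inl hb)⟩
    simp [coreRank, hv, hvB, hfar, hb, hne hb, Prod.Lex.toLex_lt_toLex]

theorem exists_isTree_of_core [Finite V] (hB : (G.induce B).Connected) (hr : r ∉ B)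
    (hru : G.Adj r u)
    (hlink : ∀ v, v ≠ r → IsFar G B v → G.Adj v (link v) ∧ ∃ b ∈ B, G.Adj (link v) b) :
    ∃ T ≤ G, T.IsTree ∧ ∀ v, v ≠ r → ∀ q : T.Walk v r, q.IsPath → ∀ x ∈ q.support,
      x = v ∨ x = r ∨ x ∈ B ∨ IsFar G B v ∧ x = link v := by
  have hparent (v : V) : ∃ w, v ≠ r → G.Adj v w ∧ coreRank G r B u w < coreRank G r B u v ∧
      (w = r ∨ w ∈ B ∨ IsFar G B v ∧ w = link v) := by
    by_cases hv : v = r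
    · exact ⟨v, fun h => absurd hv h⟩
    · exact (exists_adj_coreRank_lt hB hr hru hlink hv).imp fun w hw _ => hw
  choose parent hparent using hparent
  have hrank (v : V) (hv : v ≠ r) := (hparent v hv).2.1
  refine ⟨parentGraph r parent, fun v w hvw => ?_, isTree_parentGraph hrank, fun v hv q hq => ?_⟩
  · rcases (parentGraph_adj.mp hvw).2 with ⟨hv, rfl⟩ | ⟨hw, rfl⟩
    exacts [(hparent v hv).1, (hparent w hw).1.symm]
  · refine support_subset_of_isPath_parentGraph hrank
      (Q := {x | x = v ∨ x = r ∨ x ∈ B ∨ IsFar G B v ∧ x = link v}) ?_ (.inl rfl) hq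
    intro x hx hxr
    have hnear (h : IsFar G B v) : ¬ IsFar G B (link v) := fun h' =>
      have ⟨_, b, hb, hlb⟩ := hlink v hv h
      h'.2 b hb hlb
    have := (hparent x hxr).2.2
    have hBnear (h : x ∈ B) : ¬ IsFar G B x := fun h' => h'.1 h
    simp only [Set.mem_ofPred_eq] at hx ⊢
    grind

end Core

end Trees

theorem hasISTs_of_cores {n t : ℕ} {G : SimpleGraph (Fin n)} {r : Fin n}
    {B : Fin t → Set (Fin n)} (hB : ∀ i, (G.induce (B i)).Connected)
    (hdisj : Pairwise (Function.onFun Disjoint B)) (hr : ∀ i, r ∉ B i)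
    (hroot : ∀ i, ∃ u ∈ B i, G.Adj r u) {link : Fin n → Fin t → Fin n}
    (hlink : ∀ v, v ≠ r → ∀ i, IsFar G (B i) v → G.Adj v (link v i) ∧
      (∀ j, link v i ∉ B j) ∧ ∃ b ∈ B i, G.Adj (link v i) b)
    (hinj : ∀ v, v ≠ r → Set.InjOn (link v) {i | IsFar G (B i) v}) :
    HasISTs G r t := by
  have htree (i : Fin t) : ∃ T ≤ G, T.IsTree ∧ ∀ v, v ≠ r → ∀ q : T.Walk v r, q.IsPath →
      ∀ x ∈ q.support, x = v ∨ x = r ∨ x ∈ B i ∨ IsFar G (B i) v ∧ x = link v i := by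
    obtain ⟨u, hu, hru⟩ := hroot i
    exact exists_isTree_of_core (u := ⟨u, hu⟩) (hB i) (hr i) hru fun v hv hfar =>
      have h := hlink v hv i hfar
      ⟨h.1, h.2.2⟩
  choose T hTG hT hpath using htree
  refine ⟨T, fun i => ⟨hTG i, hT i⟩, fun v hv i j hij p q hp hq x hxp hxq => ?_⟩
  have hxi := hpath i v hv p hp x hxp
  have hxj := hpath j v hv q hq x hxq
  have hxB : ¬ (x ∈ B i ∧ x ∈ B j) := fun h => Set.disjoint_left.mp (hdisj hij) h.1 h.2
  have hli (h : IsFar G (B i) v) := (hlink v hv i h).2.1 j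
  have hlj (h : IsFar G (B j) v) := (hlink v hv j h).2.1 i
  have hneq (h : IsFar G (B i) v) (h' : IsFar G (B j) v) : link v i ≠ link v j :=
    fun h'' => hij (hinj v hv h h' h'')
  grind

section Hall

variable {ι V : Type*} [Nonempty V] {J : Finset ι} {W : Finset V} {rel : ι → V → Prop}
  [∀ j, DecidablePred (rel j)] {k slack : ℕ}

theorem exists_injOn_of_card_add_slack_le (hcard : #J + slack ≤ #W)
    (hfew : ∀ S ⊆ J, #S = k → #{w ∈ W | ∀ j ∈ S, ¬ rel j w} ≤ slack)
    (hmany : ∀ j ∈ J, k ≤ #{w ∈ W | rel j w}) :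
    ∃ f : ι → V, Set.InjOn f J ∧ ∀ j ∈ J, f j ∈ W ∧ rel j (f j) := by
  let N : J → Finset V := fun j => {w ∈ W | rel j w}
  have hall (s : Finset J) : #s ≤ #(s.biUnion N) := by
    rcases le_or_gt k #s with hk | hk
    · obtain ⟨s', hs', hs'k⟩ := Finset.exists_subset_card_eq hk
      let S := s'.map (.subtype _)
      have hfewS : #{w ∈ W | ∀ j ∈ S, ¬ rel j w} ≤ slack :=
        hfew S (Finset.map_subtype_subset s') (by rw [Finset.card_map, hs'k])
      have hcover : W ⊆ s.biUnion N ∪ {w ∈ W | ∀ j ∈ S, ¬ rel j w} := by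
        intro w hw
        by_cases h : ∃ j ∈ s', rel j w
        · obtain ⟨j, hj, hjw⟩ := h
          exact Finset.mem_union_left _
            (Finset.mem_biUnion.mpr ⟨j, hs' hj, Finset.mem_filter.mpr ⟨hw, hjw⟩⟩)
        · exact Finset.mem_union_right _ (by simpa [S, hw] using h)
      have hsJ : #s ≤ #J := by simpa using Finset.card_le_univ s
      have := (Finset.card_le_card hcover).trans (Finset.card_union_le _ _)
      omega
    · rcases s.eq_empty_or_nonempty with rfl | ⟨j, hj⟩
      · simp
      · exact hk.le.trans <| (hmany j j.2).trans <|
          Finset.card_le_card (Finset.subset_biUnion_of_mem N hj)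
  obtain ⟨g, hg, hgN⟩ := (Finset.all_card_le_biUnion_card_iff_exists_injective N).mp hall
  have hext (j : J) : Function.extend Subtype.val g (fun _ => Classical.arbitrary V) j = g j :=
    Subtype.val_injective.extend_apply g _ j
  refine ⟨Function.extend Subtype.val g fun _ => Classical.arbitrary V, ?_, fun j hj => ?_⟩
  · intro i hi j hj hij
    rw [hext ⟨i, hi⟩, hext ⟨j, hj⟩] at hij
    exact congrArg Subtype.val (hg hij)
  · rw [hext ⟨j, hj⟩]
    exact Finset.mem_filter.mp (hgN ⟨j, hj⟩)

end Hall

section Joined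

variable {V : Type*} {G : SimpleGraph V} {R R' : Finset V} {a s : ℕ}

/-- Any two disjoint subsets of `R` with at least `a` vertices each are joined by an edge: the
pseudorandomness that makes connected subsets of prescribed size easy to find. -/
def IsJoined (G : SimpleGraph V) (R : Finset V) (a : ℕ) : Prop :=
  ∀ X ⊆ R, ∀ Y ⊆ R, Disjoint X Y → a ≤ #X → a ≤ #Y → ∃ x ∈ X, ∃ y ∈ Y, G.Adj x y

lemma IsJoined.mono (h : IsJoined G R a) (hR : R' ⊆ R) : IsJoined G R' a :=
  fun X hX Y hY => h X (hX.trans hR) Y (hY.trans hR)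

/-- Every nonempty subset of `R` with fewer than `a` vertices sends an edge to the rest of `R`. -/
def IsExpanding (G : SimpleGraph V) (R : Finset V) (a : ℕ) : Prop :=
  ∀ Y ⊆ R, Y.Nonempty → #Y < a → ∃ y ∈ Y, ∃ z ∈ R \ Y, G.Adj y z

-- `R'` is the complement of a maximal set of fewer than `a` vertices sending no edge to the rest.
lemma IsJoined.exists_isExpanding (h : IsJoined G R a) (ha : 0 < a) (hR : 3 * a ≤ #R) :
    ∃ R' ⊆ R, R'.Nonempty ∧ IsExpanding G R' a := by
  let isolated : Finset (Finset V) :=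
    {X ∈ R.powerset | #X < a ∧ ∀ x ∈ X, ∀ y ∈ R \ X, ¬ G.Adj x y}
  obtain ⟨X, hX, hmax⟩ := isolated.exists_max_image Finset.card ⟨∅, by simp [isolated, ha]⟩
  simp only [isolated, Finset.mem_filter, Finset.mem_powerset] at hX hmax
  obtain ⟨hXR, hXa, hXiso⟩ := hX
  refine ⟨R \ X, Finset.sdiff_subset, ?_, fun Y hY hYne hYa => ?_⟩
  · exact Finset.card_pos.mp (by have := Finset.le_card_sdiff X R; omega)
  by_contra! hYiso
  have hXYR : X ∪ Y ⊆ R := Finset.union_subset hXR (hY.trans Finset.sdiff_subset)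
  have hXYiso : ∀ x ∈ X ∪ Y, ∀ y ∈ R \ (X ∪ Y), ¬ G.Adj x y := by
    intro x hx y hy
    rcases Finset.mem_union.mp hx with hx | hx
    · exact hXiso x hx y (by grind)
    · exact hYiso x hx y (by grind)
  have hcard : #(X ∪ Y) = #X + #Y :=
    Finset.card_union_of_disjoint (Finset.disjoint_of_subset_right hY Finset.disjoint_sdiff)
  have hYpos : 0 < #Y := Finset.card_pos.mpr hYne
  rcases lt_or_ge #(X ∪ Y) a with hlt | hge
  · have := hmax _ ⟨hXYR, hlt, hXYiso⟩
    omega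
  · obtain ⟨x, hx, y, hy, hxy⟩ := h _ hXYR _ Finset.sdiff_subset Finset.disjoint_sdiff hge
      (by rw [Finset.card_sdiff_of_subset hXYR]; omega)
    exact hXYiso x hx y hy hxy

lemma connected_induce_insert {D : Set V} {x z : V} (hD : (G.induce D).Connected) (hx : x ∈ D)
    (hxz : G.Adj x z) : (G.induce (insert z D)).Connected := by
  rw [Set.insert_eq]
  exact SimpleGraph.connected_induce_union
    SimpleGraph.Connected.of_subsingleton.preconnected hD.preconnected rfl hx hxz.symm

lemma IsExpanding.exists_connected (h : IsExpanding G R a) (hR : R.Nonempty) (hs : 0 < s)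
    (hsa : s ≤ a) : ∃ D ⊆ R, #D = s ∧ (G.induce (D : Set V)).Connected := by
  induction s, hs using Nat.le_induction with
  | base =>
    obtain ⟨x, hx⟩ := hR
    exact ⟨{x}, by simpa, rfl, by simpa using SimpleGraph.Connected.of_subsingleton⟩
  | succ s hs ih =>
    obtain ⟨D, hDR, hDs, hD⟩ := ih (by omega)
    obtain ⟨x, hx, z, hz, hxz⟩ := h D hDR (Finset.card_pos.mp (by omega)) (by omega)
    obtain ⟨hzR, hzD⟩ := Finset.mem_sdiff.mp hz
    refine ⟨insert z D, Finset.insert_subset hzR hDR, ?_, ?_⟩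
    · rw [Finset.card_insert_of_notMem hzD, hDs]
    · rw [Finset.coe_insert]
      exact connected_induce_insert hD hx hxz

/-- `D` is a family of disjoint connected `s`-element subsets of `A`. -/
structure IsCoreFamily {ι : Type*} (G : SimpleGraph V) (A : Finset V) (s : ℕ)
    (D : ι → Finset V) : Prop where
  subset : ∀ j, D j ⊆ A
  card : ∀ j, #(D j) = s
  connected : ∀ j, (G.induce (D j : Set V)).Connected
  disjoint : Pairwise (Function.onFun Disjoint D)

theorem IsJoined.exists_isCoreFamily {A : Finset V} (h : IsJoined G A a) (hs : 0 < s)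
    (hsa : s ≤ a) {m : ℕ} (hA : m * s + 3 * a ≤ #A) :
    ∃ D : Fin m → Finset V, IsCoreFamily G A s D := by
  induction m with
  | zero => exact ⟨Fin.elim0, fun j => j.elim0, fun j => j.elim0, fun j => j.elim0,
      fun j => j.elim0⟩
  | succ m ih =>
    obtain ⟨D, hD⟩ := ih (by lia)
    let used : Finset V := Finset.univ.biUnion D
    have hused : #used ≤ m * s := by
      simpa using Finset.card_biUnion_le_card_mul Finset.univ D s fun j _ => (hD.card j).le
    obtain ⟨R, hR, hRne, hRexp⟩ := (h.mono (Finset.sdiff_subset (t := used))).exists_isExpanding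
      (hs.trans_le hsa) (by have := Finset.le_card_sdiff used A; lia)
    obtain ⟨Y, hY, hYs, hYconn⟩ := hRexp.exists_connected hRne hs hsa
    have hYD (j : Fin m) : Disjoint Y (D j) :=
      Finset.disjoint_of_subset_right (Finset.subset_biUnion_of_mem D (Finset.mem_univ j))
        (Finset.disjoint_of_subset_left (hY.trans hR) Finset.sdiff_disjoint)
    refine ⟨Fin.cons Y D, ?_, ?_, ?_, ?_⟩
    · exact Fin.cases ((hY.trans hR).trans Finset.sdiff_subset) hD.subset
    · exact Fin.cases hYs hD.card
    · exact Fin.cases hYconn hD.connected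
    · intro i j hij
      cases i using Fin.cases <;> cases j using Fin.cases
      · exact absurd rfl hij
      · exact hYD _
      · exact (hYD _).symm
      · exact hD.disjoint fun h => hij (congrArg _ h)

end Joined

section Links

variable {V ι : Type*} [Fintype V] {G : SimpleGraph V} {A : Finset V} {X : ι → Finset V}
  {k slack : ℕ}

/-- Every vertex has at most `slack` neighbours outside `A` that see none of `k` given members of
the family `X`. -/
def FewUncovered (G : SimpleGraph V) (A : Finset V) (X : ι → Finset V) (k slack : ℕ) : Prop :=
  ∀ v, ∀ S : Finset ι, #S = k → (∀ j ∈ S, v ∉ X j) →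
    #(uncoveredNeighbors G A (S.biUnion X) v) ≤ slack

/-- Whatever the root `r`, every other vertex has at least `k` neighbours outside `A` that see a
given member of the family `X` but not `r`. -/
def ManyCovered (G : SimpleGraph V) (A : Finset V) (X : ι → Finset V) (k : ℕ) : Prop :=
  ∀ v r, ∀ j, v ≠ r → v ∉ X j → r ∉ X j → k ≤ #(coveredNeighbors G r A (X j) v)

/-- Every vertex has at least `d` neighbours outside `A`. -/
def HasDegreeOutside (G : SimpleGraph V) (A : Finset V) (d : ℕ) : Prop :=
  ∀ v, d + #{w ∈ A | G.Adj v w} ≤ G.degree v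

lemma FewUncovered.comp {κ : Type*} (h : FewUncovered G A X k slack) {e : κ → ι}
    (he : Function.Injective e) : FewUncovered G A (X ∘ e) k slack := by
  intro v S hS hv
  have := h v (S.image e) (by rw [Finset.card_image_of_injective _ he, hS]) (by simpa using hv)
  rwa [Finset.image_biUnion] at this

lemma ManyCovered.comp {κ : Type*} (h : ManyCovered G A X k) (e : κ → ι) :
    ManyCovered G A (X ∘ e) k :=
  fun v r j => h v r (e j)

/-- The neighbours of `v` outside `A ∪ U`: the candidates for links out of `v`. -/
noncomputable def linkCandidates (G : SimpleGraph V) (A U : Finset V) (v : V) : Finset V :=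
  {w | G.Adj v w ∧ w ∉ A ∧ w ∉ U}

lemma degree_le_card_linkCandidates (G : SimpleGraph V) (A U : Finset V) (v : V) :
    G.degree v ≤ #(linkCandidates G A U v) + #{w ∈ U | G.Adj v w} + #{w ∈ A | G.Adj v w} := by
  have hsub : G.neighborFinset v ⊆
      linkCandidates G A U v ∪ {w ∈ U | G.Adj v w} ∪ {w ∈ A | G.Adj v w} := by
    intro w hw
    simp only [SimpleGraph.mem_neighborFinset] at hw
    simp only [linkCandidates, Finset.mem_union, Finset.mem_filter, Finset.mem_univ, true_and]
    tauto
  rw [← SimpleGraph.card_neighborFinset_eq_degree]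
  refine (Finset.card_le_card hsub).trans ((Finset.card_union_le _ _).trans ?_)
  gcongr
  exact Finset.card_union_le _ _

lemma filter_linkCandidates_subset_uncoveredNeighbors {U : Finset V} (hX : ∀ j, X j ⊆ A ∪ U)
    (S : Finset ι) (v : V) :
    {w ∈ linkCandidates G A U v | ∀ j ∈ S, ¬ ∃ x ∈ X j, G.Adj w x} ⊆
      uncoveredNeighbors G A (S.biUnion X) v := by
  intro w hw
  simp only [linkCandidates, Finset.mem_filter, Finset.mem_univ, true_and] at hw
  obtain ⟨⟨hvw, hwA, hwU⟩, hwX⟩ := hw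
  have hwSX (j : ι) (hj : w ∈ X j) : False := (Finset.mem_union.mp (hX j hj)).elim hwA hwU
  have hwv : w ≠ v := hvw.ne'
  simp only [uncoveredNeighbors, Finset.mem_filter, Finset.mem_compl, Finset.mem_insert,
    Finset.mem_union, Finset.mem_biUnion]
  grind

lemma coveredNeighbors_subset_filter_linkCandidates {U Y : Finset V} {r : V}
    (hU : ∀ u ∈ U, G.Adj r u) (v : V) :
    coveredNeighbors G r A Y v ⊆ {w ∈ linkCandidates G A U v | ∃ x ∈ Y, G.Adj w x} := by
  intro w hw
  simp only [coveredNeighbors, Finset.mem_filter, Finset.mem_compl, Finset.mem_insert,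
    Finset.mem_union, not_or] at hw
  simp only [linkCandidates, Finset.mem_filter, Finset.mem_univ, true_and]
  exact ⟨⟨hw.2.1, hw.1.2.2.1, fun h => hw.2.2.1 (hU w h)⟩, hw.2.2.2⟩

theorem FewUncovered.exists_injOn_link (hfew : FewUncovered G A X k slack) {U : Finset V}
    (hX : ∀ j, X j ⊆ A ∪ U) {v : V} {J : Finset ι} (hv : ∀ j ∈ J, v ∉ X j)
    (hmany : ∀ j ∈ J, ∃ r, (∀ u ∈ U, G.Adj r u) ∧ k ≤ #(coveredNeighbors G r A (X j) v))
    (hcard : #J + #{w ∈ U | G.Adj v w} + slack + #{w ∈ A | G.Adj v w} ≤ G.degree v) :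
    ∃ f : ι → V, Set.InjOn f J ∧
      ∀ j ∈ J, f j ∈ linkCandidates G A U v ∧ ∃ x ∈ X j, G.Adj (f j) x := by
  have : Nonempty V := ⟨v⟩
  refine exists_injOn_of_card_add_slack_le (k := k) (slack := slack)
    (W := linkCandidates G A U v) (rel := fun j w => ∃ x ∈ X j, G.Adj w x) ?_ ?_ ?_
  · have := degree_le_card_linkCandidates G A U v
    omega
  · intro S hS hSk
    exact (Finset.card_le_card (filter_linkCandidates_subset_uncoveredNeighbors hX S v)).trans
      (hfew v S hSk fun j hj => hv j (hS hj))
  · intro j hj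
    obtain ⟨r, hU, hk⟩ := hmany j hj
    exact hk.trans (Finset.card_le_card (coveredNeighbors_subset_filter_linkCandidates hU v))

theorem FewUncovered.exists_injOn_link_of_root_neighbors [Fintype ι]
    (hfew : FewUncovered G A X k slack) (hdeg : HasDegreeOutside G A (Fintype.card ι + slack))
    {r v : V} {u : ι → V} (hu : Function.Injective u) (hru : ∀ j, G.Adj r (u j))
    (hX : ∀ j, ∀ x ∈ X j, x = u j ∨ x ∈ A)
    (hmany : ∀ j, v ∉ X j → k ≤ #(coveredNeighbors G r A (X j) v)) :
    ∃ f : ι → V, Set.InjOn f {j | v ∉ X j ∧ ¬ G.Adj v (u j)} ∧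
      ∀ j, v ∉ X j → ¬ G.Adj v (u j) →
        G.Adj v (f j) ∧ f j ∉ A ∧ (∀ i, f j ≠ u i) ∧ ∃ x ∈ X j, G.Adj (f j) x := by
  let U : Finset V := Finset.univ.image u
  let J : Finset ι := {j | v ∉ X j ∧ ¬ G.Adj v (u j)}
  have hJcard : #J + #{w ∈ U | G.Adj v w} ≤ Fintype.card ι := by
    rw [Finset.filter_image, Finset.card_image_of_injective _ hu, ← Finset.card_union_of_disjoint]
    · exact Finset.card_le_univ _
    · exact Finset.disjoint_filter.mpr fun j _ h => h.2
  have hvX : ∀ j ∈ J, v ∉ X j := fun j hj => (Finset.mem_filter.mp hj).2.1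
  obtain ⟨f, hinj, hf⟩ := hfew.exists_injOn_link (U := U) (v := v) (J := J)
    (fun j x hx => by have := hX j x hx; grind) hvX
    (fun j hj => ⟨r, by simpa [U] using hru, hmany j (hvX j hj)⟩) (by have := hdeg v; omega)
  refine ⟨f, by simpa [J] using hinj, fun j hj hj' => ?_⟩
  simpa [linkCandidates, U, J, hj, hj', eq_comm, and_assoc] using hf j

end Links

section CoreSystems

variable {n t k slack : ℕ} {G : SimpleGraph (Fin n)} {r : Fin n} {A : Finset (Fin n)}

lemma pairwise_disjoint_insert {V ι : Type*} {A : Finset V} {u : ι → V} {X : ι → Finset V}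
    (hu : Function.Injective u) (huA : ∀ j, u j ∉ A) (hX : ∀ j, ∀ x ∈ X j, x = u j ∨ x ∈ A)
    (hXdisj : Pairwise (Function.onFun Disjoint X)) :
    Pairwise (Function.onFun Disjoint fun j => (insert (u j) (X j) : Set V)) := by
  intro i j hij
  have hne : u i ≠ u j := hu.ne hij
  have hdisj := Finset.disjoint_left.mp (hXdisj hij)
  rw [Function.onFun, Set.disjoint_left]
  simp only [Set.mem_insert_iff, Finset.mem_coe]
  grind

theorem hasISTs_of_root_neighbors {u : Fin t → Fin n} {X : Fin t → Finset (Fin n)}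
    (hu : Function.Injective u) (hru : ∀ j, G.Adj r (u j)) (huA : ∀ j, u j ∉ A)
    (hX : ∀ j, ∀ x ∈ X j, x = u j ∨ x ∈ A) (hrX : ∀ j, r ∉ X j)
    (hXdisj : Pairwise (Function.onFun Disjoint X))
    (hconn : ∀ j, (G.induce (insert (u j) (X j) : Set (Fin n))).Connected)
    (hdeg : HasDegreeOutside G A (t + slack)) (hfew : FewUncovered G A X k slack)
    (hmany : ManyCovered G A X k) : HasISTs G r t := by
  have hlink (v : Fin n) : ∃ f : Fin t → Fin n, v ≠ r →
      Set.InjOn f {j | v ∉ X j ∧ ¬ G.Adj v (u j)} ∧ ∀ j, v ∉ X j → ¬ G.Adj v (u j) →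
        G.Adj v (f j) ∧ f j ∉ A ∧ (∀ i, f j ≠ u i) ∧ ∃ x ∈ X j, G.Adj (f j) x := by
    by_cases hv : v = r
    · exact ⟨u, fun h => absurd hv h⟩
    · obtain ⟨f, hf⟩ := hfew.exists_injOn_link_of_root_neighbors (by simpa using hdeg) hu hru hX
        fun j hj => hmany v r j hv hj (hrX j)
      exact ⟨f, fun _ => hf⟩
  choose link hlink using hlink
  have hfar {v : Fin n} {j : Fin t} (h : IsFar G (insert (u j) (X j)) v) :
      v ∉ X j ∧ ¬ G.Adj v (u j) := ⟨fun hv => h.1 (.inr hv), h.2 _ (.inl rfl)⟩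
  refine hasISTs_of_cores hconn (pairwise_disjoint_insert hu huA hX hXdisj) ?_
    (fun j => ⟨u j, .inl rfl, hru j⟩) (link := link) (fun v hv i hi => ?_) fun v hv => ?_
  · rintro j (rfl | h)
    exacts [(hru j).ne rfl, hrX j h]
  · obtain ⟨hadj, hA, hlu, x, hx, hlx⟩ := (hlink v hv).2 i (hfar hi).1 (hfar hi).2
    refine ⟨hadj, fun j hj => ?_, x, .inr hx, hlx⟩
    exact hj.elim (hlu j) fun h => (hX j _ h).elim (hlu j) hA
  · exact (hlink v hv).1.mono fun i hi => hfar hi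

theorem hasISTs_of_singletons (hdeg : HasDegreeOutside G ∅ (t + slack))
    (hfew : FewUncovered G ∅ (fun x : Fin n => {x}) k slack)
    (hmany : ManyCovered G ∅ (fun x : Fin n => {x}) k) (r : Fin n) : HasISTs G r t := by
  obtain ⟨U, hU, hUcard⟩ := Finset.exists_subset_card_eq (s := G.neighborFinset r) (n := t)
    (by have := hdeg r; rw [SimpleGraph.card_neighborFinset_eq_degree]; omega)
  let u : Fin t → Fin n := fun j => (U.equivFinOfCardEq hUcard).symm j
  have hu : Function.Injective u := Subtype.val_injective.comp (Equiv.injective _)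
  have hru (j : Fin t) : G.Adj r (u j) :=
    (SimpleGraph.mem_neighborFinset _ _ _).mp (hU (Subtype.property _))
  refine hasISTs_of_root_neighbors (X := fun j => {u j}) hu hru (by simp) (by simp)
    (by simpa using fun j => (hru j).ne) ?_ ?_ hdeg (hfew.comp hu) (hmany.comp u)
  · exact fun i j hij => by simpa [Function.onFun] using hu.ne hij
  · intro j
    rw [Finset.coe_singleton, Set.pair_eq_singleton]
    exact SimpleGraph.Connected.of_subsingleton

lemma exists_injective_forall_notMem {V : Type*} {D : Fin (t + 1) → Finset V}
    (hD : Pairwise (Function.onFun Disjoint D)) (r : V) :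
    ∃ e : Fin t → Fin (t + 1), Function.Injective e ∧ ∀ j, r ∉ D (e j) := by
  by_cases h : ∃ i, r ∈ D i
  · obtain ⟨i, hi⟩ := h
    exact ⟨i.succAbove, Fin.succAbove_right_injective, fun j hj =>
      Finset.disjoint_left.mp (hD (Fin.succAbove_ne i j)) hj hi⟩
  · push Not at h
    exact ⟨Fin.castSucc, Fin.castSucc_injective t, fun j => h _⟩

-- One of the `t + 1` cores is sacrificed in case it contains the root.
theorem hasISTs_of_isCoreFamily {s : ℕ} {D : Fin (t + 1) → Finset (Fin n)}
    (hD : IsCoreFamily G A s D) (hs : s + 2 ≤ n) (hdeg : HasDegreeOutside G A (t + slack))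
    (hfew : FewUncovered G A D k slack) (hmany : ManyCovered G A D k) (r : Fin n) :
    HasISTs G r t := by
  obtain ⟨e, he, hre⟩ := exists_injective_forall_notMem hD.disjoint r
  have hsub (j : Fin (t + 1)) : ∀ x ∈ D j, x ∈ A := fun x hx => hD.subset j hx
  obtain ⟨u, hu, hru, huA, huD⟩ : ∃ u : Fin t → Fin n, Function.Injective u ∧
      (∀ j, G.Adj r (u j)) ∧ (∀ j, u j ∉ A) ∧ ∀ j, ∃ x ∈ D (e j), G.Adj (u j) x := by
    have hother (j : Fin t) : ∃ v, v ≠ r ∧ v ∉ D (e j) := by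
      have hcard := Finset.card_insert_le r (D (e j))
      rw [hD.card] at hcard
      simpa using Finset.exists_mem_notMem_of_card_lt_card (s := insert r (D (e j)))
        (t := Finset.univ) (by rw [Finset.card_univ, Fintype.card_fin]; omega)
    have hroot (j : Fin t) : ∃ v, k ≤ #(coveredNeighbors G v A (D (e j)) r) := by
      obtain ⟨v, hvr, hvD⟩ := hother j
      exact ⟨v, hmany r v (e j) hvr.symm (hre j) hvD⟩
    obtain ⟨u, hu, huD⟩ := (hfew.comp he).exists_injOn_link (U := ∅) (v := r) (J := Finset.univ)
      (by simpa using fun j => hD.subset (e j)) (fun j _ => hre j) (by simpa using hroot)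
      (by
        have := hdeg r
        simp only [Finset.card_univ, Fintype.card_fin, Finset.filter_empty, Finset.card_empty]
        omega)
    simp only [linkCandidates, Finset.mem_filter, Finset.mem_univ, true_and] at huD
    exact ⟨u, by simpa using hu, fun j => (huD j trivial).1.1, fun j => (huD j trivial).1.2.1,
      fun j => (huD j trivial).2⟩
  refine hasISTs_of_root_neighbors (X := D ∘ e) hu hru huA (fun j x hx => .inr (hsub _ x hx)) hre
    (fun i j hij => hD.disjoint (he.ne hij)) (fun j => ?_) hdeg (hfew.comp he) (hmany.comp e)
  obtain ⟨x, hx, hux⟩ := huD j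
  exact connected_induce_insert (hD.connected (e j)) hx hux.symm

end CoreSystems

section UnionBounds

lemma measureReal_le_card_mul_of_imp_exists {Ω ι : Type*} [MeasurableSpace Ω] {μ : Measure Ω}
    [IsFiniteMeasure μ] {P : Ω → Prop} {T : Finset ι} {Q : ι → Ω → Prop} {b : ℝ}
    (hP : ∀ ω, P ω → ∃ c ∈ T, Q c ω) (hQ : ∀ c ∈ T, μ.real {ω | Q c ω} ≤ b) :
    μ.real {ω | P ω} ≤ #T * b :=
  calc μ.real {ω | P ω} ≤ μ.real (⋃ c ∈ T, {ω | Q c ω}) :=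
        measureReal_mono (fun ω hω => by simpa using hP ω hω) (measure_ne_top _ _)
    _ ≤ ∑ c ∈ T, μ.real {ω | Q c ω} := measureReal_biUnion_finset_le T _
    _ ≤ #T * b := by simpa using Finset.sum_le_sum hQ

lemma binomialRandom_real_forall_not_adj {V : Type*} [Countable V] (p : I) {X Y : Finset V}
    (hXY : Disjoint X Y) :
    G(V, p).real {G | ∀ x ∈ X, ∀ y ∈ Y, ¬ G.Adj x y} = (1 - p : ℝ) ^ (#X * #Y) := by
  have hne : ∀ x ∈ X, ∀ y ∈ Y, x ≠ y := fun x hx y hy => Finset.disjoint_iff_ne.mp hXY x hx y hy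
  have hinj : Set.InjOn (fun z : V × V => s(z.1, z.2)) (X ×ˢ Y : Finset (V × V)) := by
    rintro ⟨x, y⟩ hxy ⟨x', y'⟩ hxy' h
    simp only [Finset.coe_product, Set.mem_prod, Finset.mem_coe] at hxy hxy'
    rcases Sym2.eq_iff.mp h with ⟨rfl, rfl⟩ | ⟨rfl, -⟩
    · rfl
    · exact absurd rfl (hne x hxy.1 x hxy'.2)
  have := binomialRandom_real_cylinder p (E := ∅) (F := (X ×ˢ Y).image fun z => s(z.1, z.2))
    (by simp) (by simp) (by
      simpa only [Finset.forall_mem_image, Finset.mem_product, Prod.forall, and_imp,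
        Sym2.mk_isDiag_iff] using fun x y hx hy => hne x hx y hy)
  rw [Finset.card_image_of_injOn hinj, Finset.card_product] at this
  rw [Finset.card_empty, pow_zero, one_mul] at this
  rw [← this]
  congr 1
  ext G
  simp only [Finset.forall_mem_image, Finset.mem_product, Prod.forall, SimpleGraph.mem_edgeSet]
  grind

theorem measureReal_not_isJoined_le {V : Type*} [Finite V] (p : I) (R : Finset V) (a : ℕ) :
    G(V, p).real {G | ¬ IsJoined G R a} ≤ 4 ^ #R * (1 - p : ℝ) ^ (a * a) := by
  let pairs : Finset (Finset V × Finset V) :=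
    {c ∈ R.powerset ×ˢ R.powerset | Disjoint c.1 c.2 ∧ a ≤ #c.1 ∧ a ≤ #c.2}
  have hcard : (#pairs : ℝ) ≤ 4 ^ #R := by
    have : #pairs ≤ 4 ^ #R := (Finset.card_filter_le _ _).trans_eq (by
      rw [Finset.card_product, Finset.card_powerset, ← mul_pow]; norm_num)
    exact_mod_cast this
  have hp : 0 ≤ 1 - (p : ℝ) := sub_nonneg.mpr p.2.2
  refine (measureReal_le_card_mul_of_imp_exists (T := pairs)
    (Q := fun c G => ∀ x ∈ c.1, ∀ y ∈ c.2, ¬ G.Adj x y) ?_ ?_).trans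
    (mul_le_mul_of_nonneg_right hcard (pow_nonneg hp _))
  · intro G hG
    simp only [IsJoined] at hG
    push Not at hG
    obtain ⟨X, hX, Y, hY, hXY, hXa, hYa, hG⟩ := hG
    exact ⟨(X, Y), by simp [pairs, *], hG⟩
  · rintro ⟨X, Y⟩ hXY
    obtain ⟨-, hXY, hXa, hYa⟩ := Finset.mem_filter.mp hXY
    rw [binomialRandom_real_forall_not_adj p hXY]
    exact pow_le_pow_of_le_one hp (sub_le_self _ p.2.1) (Nat.mul_le_mul hXa hYa)

variable {V ι : Type*} [Fintype V] [Fintype ι]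

theorem measureReal_not_hasDegreeOutside_le (p : I) (A : Finset V) {d : ℕ} {η κ : ℝ}
    (hη₀ : 0 ≤ η) (hη₁ : η ≤ 1) (hd : d + κ ≤ (1 - η) * (Fintype.card V * p)) :
    G(V, p).real {G | ¬ HasDegreeOutside G A d} ≤ Fintype.card V *
      (Real.exp (1 - η ^ 2 / 2 * (Fintype.card V * p)) + Real.exp (2 * (#A * p) - κ)) := by
  refine measureReal_le_card_mul_of_imp_exists (T := Finset.univ)
    (Q := fun v G => (G.degree v : ℝ) ≤ (1 - η) * (Fintype.card V * p) ∨
      κ ≤ #{w ∈ A | G.Adj v w}) (fun G hG => ?_) fun v _ => ?_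
  · simp only [HasDegreeOutside, not_forall, not_le] at hG
    obtain ⟨v, hv⟩ := hG
    have hv : (G.degree v : ℝ) < d + #{w ∈ A | G.Adj v w} := mod_cast hv
    refine ⟨v, Finset.mem_univ v, ?_⟩
    by_contra! hcon
    linarith [hcon.1, hcon.2]
  · rw [Set.ofPred_or]
    exact (measureReal_union_le _ _).trans (add_le_add (measureReal_degree_le_le p v hη₀ hη₁)
      (measureReal_le_card_filter_adj_le p A v κ))

theorem measureReal_not_fewUncovered_le (p : I) (A : Finset V) {X : ι → Finset V} {k : ℕ} {q : ℝ}
    (hq : ∀ S : Finset ι, #S = k → (1 - p : ℝ) ^ #(S.biUnion X) ≤ q) (slack : ℕ) :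
    G(V, p).real {G | ¬ FewUncovered G A X k slack} ≤ Fintype.card V * Fintype.card ι ^ k *
      Real.exp (2 * (Fintype.card V * (p * q)) - (slack + 1)) := by
  let choices : Finset (V × Finset ι) := {c | #c.2 = k ∧ ∀ j ∈ c.2, c.1 ∉ X j}
  have hcard : (#choices : ℝ) ≤ Fintype.card V * Fintype.card ι ^ k := by
    have hsub : choices ⊆ Finset.univ ×ˢ Finset.univ.powersetCard k := fun c hc => by
      simp_all [choices]
    have : #choices ≤ Fintype.card V * Fintype.card ι ^ k := (Finset.card_le_card hsub).trans (by
      rw [Finset.card_product, Finset.card_powersetCard]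
      exact Nat.mul_le_mul_left _ (Nat.choose_le_pow _ _))
    exact_mod_cast this
  refine (measureReal_le_card_mul_of_imp_exists (T := choices)
    (Q := fun c G => ((slack + 1 : ℕ) : ℝ) ≤ #(uncoveredNeighbors G A (c.2.biUnion X) c.1))
    ?_ ?_).trans (mul_le_mul_of_nonneg_right hcard (Real.exp_pos _).le)
  · intro G hG
    simp only [FewUncovered] at hG
    push Not at hG
    obtain ⟨v, S, hS, hv, hG⟩ := hG
    exact ⟨(v, S), by simpa [choices] using ⟨hS, hv⟩, Nat.cast_le.mpr (Nat.succ_le_of_lt hG)⟩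
  · rintro ⟨v, S⟩ hvS
    obtain ⟨-, hS, hv⟩ := Finset.mem_filter.mp hvS
    refine (measureReal_le_card_uncoveredNeighbors_le p A (by simpa using hv) _).trans
      (Real.exp_le_exp.mpr ?_)
    have := p.2.1
    push_cast
    gcongr
    exact hq S hS

theorem measureReal_not_manyCovered_le (p : I) (A : Finset V) {X : ι → Finset V} {m : ℝ}
    (hm : ∀ j, m ≤ (Fintype.card V - (#(A ∪ X j) + 2)) *
      (p * (1 - p) * (1 - (1 - p : ℝ) ^ #(X j)))) (k : ℕ) :
    G(V, p).real {G | ¬ ManyCovered G A X k} ≤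
      Fintype.card V ^ 2 * Fintype.card ι * Real.exp (k - m / 2) := by
  let choices : Finset (V × V × ι) := {c | c.1 ≠ c.2.1 ∧ c.1 ∉ X c.2.2 ∧ c.2.1 ∉ X c.2.2}
  have hcard : (#choices : ℝ) ≤ Fintype.card V ^ 2 * Fintype.card ι := by
    have : #choices ≤ Fintype.card V ^ 2 * Fintype.card ι := (Finset.card_le_univ _).trans_eq (by
      simp only [Fintype.card_prod]; ring)
    exact_mod_cast this
  refine (measureReal_le_card_mul_of_imp_exists (T := choices)
    (Q := fun c G => (#(coveredNeighbors G c.2.1 A (X c.2.2) c.1) : ℝ) ≤ k)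
    ?_ ?_).trans (mul_le_mul_of_nonneg_right hcard (Real.exp_pos _).le)
  · intro G hG
    simp only [ManyCovered] at hG
    push Not at hG
    obtain ⟨v, r, j, hvr, hv, hr, hG⟩ := hG
    exact ⟨(v, r, j), by simpa [choices] using ⟨hvr, hv, hr⟩, Nat.cast_le.mpr hG.le⟩
  · rintro ⟨v, r, j⟩ hc
    obtain ⟨-, hvr, hv, hr⟩ := Finset.mem_filter.mp hc
    refine measureReal_card_coveredNeighbors_le_le p A hvr hv hr ((hm j).trans ?_) k
    have hcompl : (Fintype.card V : ℝ) - (#(A ∪ X j) + 2) ≤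
        #(insert v (insert r (A ∪ X j)))ᶜ := by
      have h₁ := Finset.card_compl_add_card (insert v (insert r (A ∪ X j)))
      have h₂ := Finset.card_insert_le v (insert r (A ∪ X j))
      have h₃ := Finset.card_insert_le r (A ∪ X j)
      rw [sub_le_iff_le_add]
      exact_mod_cast (show Fintype.card V ≤ _ by lia)
    have hp₀ := p.2.1
    have hp₁ : 0 ≤ 1 - (p : ℝ) := sub_nonneg.mpr p.2.2
    exact mul_le_mul_of_nonneg_right hcompl (mul_nonneg (mul_nonneg hp₀ hp₁)
      (sub_nonneg.mpr (pow_le_one₀ hp₁ (sub_le_self _ hp₀))))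

end UnionBounds

section Regime

/-- The requirements on the number `n` of vertices and on the edge probability `p` under which each
of the bad events has probability `O(1 / n)`. Here `ε` is the proportion of the average degree that
may be lost and `1 - η` is the upper bound on `p`. The connected sets through which the trees are
routed will have at least `ε / (128 p)` vertices, which is what the third condition refers to: only
a proportion `ε / 16` of all vertices see none of `k` such sets. -/
structure IsRegime (ε η : ℝ) (k n : ℕ) (p : I) : Prop where
  pos : 0 < ε
  lt_one : ε < 1
  exp_neg_mul_le : Real.exp (-(k * (ε / 128))) ≤ ε / 16
  le_one_sub : (p : ℝ) ≤ 1 - η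
  le_mul_card : 256 ≤ ε * n
  le_sq_mul_mean : 768 * 16 ^ 2 ≤ ε ^ 2 * (n * p)
  exp_degree_le : Real.exp (1 - ε ^ 2 / 32 * (n * p)) ≤ ((n : ℝ) ^ 2)⁻¹
  exp_uncovered_le : Real.exp (-(ε / 8 * (n * p))) ≤ ((n : ℝ) ^ (k + 2))⁻¹
  exp_covered_le : Real.exp (k - η * ε / 1024 * (n * p)) ≤ ((n : ℝ) ^ 4)⁻¹

lemma one_sub_pow_le_exp_neg {x p : ℝ} (hp : p ≤ 1) {m : ℕ} (hx : x ≤ p * m) :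
    (1 - p) ^ m ≤ Real.exp (-x) :=
  calc (1 - p) ^ m ≤ Real.exp (-p) ^ m :=
        pow_le_pow_left₀ (sub_nonneg.mpr hp) (Real.one_sub_le_exp_neg p) m
    _ ≤ Real.exp (-x) := by
        rw [← Real.exp_nat_mul, Real.exp_le_exp]
        linarith

namespace IsRegime

variable {ε η : ℝ} {k n : ℕ} {p : I}

lemma le_card (h : IsRegime ε η k n p) : (256 : ℝ) ≤ n := by
  nlinarith [h.le_mul_card, h.lt_one, h.pos]

lemma le_mul_mean (h : IsRegime ε η k n p) : 768 * 16 ^ 2 ≤ ε * (n * p) :=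
  h.le_sq_mul_mean.trans (mul_le_mul_of_nonneg_right (by nlinarith [h.pos, h.lt_one])
    (mul_nonneg n.cast_nonneg p.2.1))

lemma le_mean (h : IsRegime ε η k n p) : 768 * 16 ^ 2 ≤ n * (p : ℝ) :=
  h.le_mul_mean.trans (mul_le_of_le_one_left (mul_nonneg n.cast_nonneg p.2.1) h.lt_one.le)

lemma ceil_le (h : IsRegime ε η k n p) :
    (⌈(1 - ε) * n * p⌉₊ : ℝ) ≤ (1 - ε) * (n * p) + 1 := by
  rw [← mul_assoc]
  have := sub_nonneg.mpr h.lt_one.le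
  have := p.2.1
  exact (Nat.ceil_lt_add_one (by positivity)).le

lemma ceil_add_one_le (h : IsRegime ε η k n p) : (⌈(1 - ε) * n * p⌉₊ : ℝ) + 1 ≤ n * p := by
  linarith [h.ceil_le, h.le_mul_mean]

variable {V ι : Type*} [Fintype V] [Fintype ι] {A : Finset V} {X : ι → Finset V}

theorem measureReal_not_hasDegreeOutside_le (h : IsRegime ε η k n p) (hV : Fintype.card V = n)
    (hA : (#A : ℝ) ≤ ε / 16 * n) :
    G(V, p).real {G | ¬ HasDegreeOutside G A (⌈(1 - ε) * n * p⌉₊ + ⌊ε / 4 * (n * p)⌋₊)} ≤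
      2 / n := by
  have hn := h.le_card
  have hε := h.pos
  have hfloor : (⌊ε / 4 * (n * p)⌋₊ : ℝ) ≤ ε / 4 * (n * p) :=
    Nat.floor_le (mul_nonneg (by linarith) (mul_nonneg n.cast_nonneg p.2.1))
  have hdegree := IndependentSpanningTrees.measureReal_not_hasDegreeOutside_le p A
    (d := ⌈(1 - ε) * n * p⌉₊ + ⌊ε / 4 * (n * p)⌋₊) (η := ε / 4) (κ := ε / 4 * (n * p))
    (by linarith) (by linarith [h.lt_one])
    (by rw [hV]; push_cast; linarith [h.ceil_le, h.le_mul_mean])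
  rw [hV] at hdegree
  have hinside : Real.exp (2 * (#A * p) - ε / 4 * (n * p)) ≤ ((n : ℝ) ^ 2)⁻¹ :=
    calc Real.exp (2 * (#A * p) - ε / 4 * (n * p)) ≤ Real.exp (-(ε / 8 * (n * p))) := by
          rw [Real.exp_le_exp]
          linarith [mul_le_mul_of_nonneg_right hA p.2.1]
      _ ≤ ((n : ℝ) ^ (k + 2))⁻¹ := h.exp_uncovered_le
      _ ≤ ((n : ℝ) ^ 2)⁻¹ :=
          inv_anti₀ (by positivity) (pow_le_pow_right₀ (by linarith) (by lia))
  calc G(V, p).real {G | ¬ HasDegreeOutside G A (⌈(1 - ε) * n * p⌉₊ + ⌊ε / 4 * (n * p)⌋₊)}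
      ≤ n * (((n : ℝ) ^ 2)⁻¹ + ((n : ℝ) ^ 2)⁻¹) := by
        refine hdegree.trans ?_
        gcongr
        exact (le_of_eq (by ring_nf)).trans h.exp_degree_le
    _ = 2 / n := by field_simp; norm_num

theorem measureReal_not_fewUncovered_le (h : IsRegime ε η k n p) (hV : Fintype.card V = n)
    (A : Finset V) (hι : Fintype.card ι ≤ n) (hdisj : Pairwise (Function.onFun Disjoint X))
    (hX : ∀ j, ε / 128 ≤ p * #(X j)) :
    G(V, p).real {G | ¬ FewUncovered G A X k ⌊ε / 4 * (n * p)⌋₊} ≤ 1 / n := by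
  have hn := h.le_card
  have hbiUnion (S : Finset ι) (hS : #S = k) : k * (ε / 128) ≤ p * #(S.biUnion X) := by
    rw [Finset.card_biUnion fun i _ j _ hij => hdisj hij, Nat.cast_sum, Finset.mul_sum, ← hS,
      ← nsmul_eq_mul]
    exact Finset.card_nsmul_le_sum S _ _ fun j _ => hX j
  have huncovered := IndependentSpanningTrees.measureReal_not_fewUncovered_le p A (q := ε / 16)
    (fun S hS => (one_sub_pow_le_exp_neg p.2.2 (hbiUnion S hS)).trans h.exp_neg_mul_le)
    ⌊ε / 4 * (n * p)⌋₊
  rw [hV] at huncovered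
  have hfloor := Nat.lt_floor_add_one (ε / 4 * (n * p))
  calc G(V, p).real {G | ¬ FewUncovered G A X k ⌊ε / 4 * (n * p)⌋₊}
      ≤ n * (n : ℝ) ^ k * Real.exp (-(ε / 8 * (n * p))) := by
        refine huncovered.trans ?_
        gcongr
        linarith
    _ ≤ n * (n : ℝ) ^ k * ((n : ℝ) ^ (k + 2))⁻¹ := by
        gcongr
        exact h.exp_uncovered_le
    _ = 1 / n := by rw [pow_add]; field_simp

theorem measureReal_not_manyCovered_le (h : IsRegime ε η k n p) (hV : Fintype.card V = n)
    (hι : Fintype.card ι ≤ n) (hX : ∀ j, ε / 128 ≤ p * #(X j))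
    (hAX : ∀ j, (#(A ∪ X j) : ℝ) + 2 ≤ n / 2) :
    G(V, p).real {G | ¬ ManyCovered G A X k} ≤ 1 / n := by
  have hn := h.le_card
  have hε := h.pos
  have hp := p.2.1
  have hp' : 0 ≤ 1 - (p : ℝ) := sub_nonneg.mpr p.2.2
  have hpow (j : ι) : (1 - p : ℝ) ^ #(X j) ≤ 1 - ε / 256 := by
    have hexp := abs_le.mp (Real.abs_exp_sub_one_sub_id_le (x := -(ε / 128))
      (by rw [abs_le]; constructor <;> linarith [h.lt_one]))
    nlinarith [one_sub_pow_le_exp_neg p.2.2 (hX j), h.lt_one]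
  have hcovered := IndependentSpanningTrees.measureReal_not_manyCovered_le p A
    (m := n / 2 * (p * η * (ε / 256))) (X := X) (fun j => ?_) k
  · rw [hV] at hcovered
    calc G(V, p).real {G | ¬ ManyCovered G A X k}
        ≤ (n : ℝ) ^ 2 * n * Real.exp (k - η * ε / 1024 * (n * p)) := by
          refine hcovered.trans ?_
          gcongr
          exact le_of_eq (by ring)
      _ ≤ (n : ℝ) ^ 2 * n * ((n : ℝ) ^ 4)⁻¹ := by
          gcongr
          exact h.exp_covered_le
      _ = 1 / n := by field_simp
  · rw [hV]
    have hprob : p * η * (ε / 256) ≤ p * (1 - p) * (1 - (1 - p : ℝ) ^ #(X j)) :=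
      mul_le_mul (mul_le_mul_of_nonneg_left (by linarith [h.le_one_sub]) hp)
        (by linarith [hpow j]) (by linarith) (mul_nonneg hp hp')
    have hprob₀ : 0 ≤ p * (1 - p) * (1 - (1 - p : ℝ) ^ #(X j)) :=
      mul_nonneg (mul_nonneg hp hp') (by linarith [hpow j])
    exact (mul_le_mul_of_nonneg_left hprob (by positivity)).trans
      (mul_le_mul_of_nonneg_right (by linarith [hAX j]) hprob₀)

theorem measureReal_not_fewUncovered_and_manyCovered_le (h : IsRegime ε η k n p)
    (hV : Fintype.card V = n) (hι : Fintype.card ι ≤ n)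
    (hdisj : Pairwise (Function.onFun Disjoint X)) (hX : ∀ j, ε / 128 ≤ p * #(X j))
    (hAX : ∀ j, (#(A ∪ X j) : ℝ) + 2 ≤ n / 2) :
    G(V, p).real {G | ¬ (FewUncovered G A X k ⌊ε / 4 * (n * p)⌋₊ ∧ ManyCovered G A X k)} ≤
      2 / n := by
  simp only [not_and_or, Set.ofPred_or]
  exact (measureReal_union_le _ _).trans ((add_le_add
    (h.measureReal_not_fewUncovered_le hV A hι hdisj hX)
    (h.measureReal_not_manyCovered_le hV hι hX hAX)).trans_eq (by ring))

end IsRegime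

end Regime

section Exposure

variable {V : Type*} {A : Finset V}

lemma dependsOnEdges_isCoreFamily {ι : Type*} (s : ℕ) (D : ι → Finset V) :
    DependsOnEdges {e | ∀ x ∈ e, x ∈ A} {G | IsCoreFamily G A s D} := by
  intro G H hGH
  have hinduce (hD : ∀ j, D j ⊆ A) (j : ι) :
      G.induce (D j : Set V) = H.induce (D j : Set V) := by
    ext x y
    exact hGH s(↑x, ↑y) (by simpa using ⟨hD j x.2, hD j y.2⟩)
  exact ⟨fun h => ⟨h.subset, h.card, fun j => hinduce h.subset j ▸ h.connected j, h.disjoint⟩,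
    fun h => ⟨h.subset, h.card, fun j => hinduce h.subset j ▸ h.connected j, h.disjoint⟩⟩

variable [Fintype V] {G H : SimpleGraph V}

lemma uncoveredNeighbors_congr (h : ∀ w ∉ A, ∀ x, G.Adj w x ↔ H.Adj w x) (X : Finset V) (v : V) :
    uncoveredNeighbors G A X v = uncoveredNeighbors H A X v := by
  refine Finset.filter_congr fun w hw => ?_
  have hwA : w ∉ A := by simp_all
  simp only [SimpleGraph.adj_comm _ v, h w hwA]

lemma coveredNeighbors_congr (h : ∀ w ∉ A, ∀ x, G.Adj w x ↔ H.Adj w x) (r : V) (X : Finset V)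
    (v : V) : coveredNeighbors G r A X v = coveredNeighbors H r A X v := by
  refine Finset.filter_congr fun w hw => ?_
  have hwA : w ∉ A := by simp_all
  simp only [SimpleGraph.adj_comm _ v, SimpleGraph.adj_comm _ r, h w hwA]

lemma dependsOnEdges_not_fewUncovered_and_manyCovered {ι : Type*} (D : ι → Finset V)
    (k slack : ℕ) :
    DependsOnEdges {e | ∀ x ∈ e, x ∈ A}ᶜ
      {G | ¬ (FewUncovered G A D k slack ∧ ManyCovered G A D k)} := by
  intro G H hGH
  have hadj (w : V) (hw : w ∉ A) (x : V) : G.Adj w x ↔ H.Adj w x :=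
    hGH s(w, x) fun h => hw (h w (Sym2.mem_mk_left w x))
  simp only [FewUncovered, ManyCovered, Set.mem_ofPred_eq, uncoveredNeighbors_congr hadj,
    coveredNeighbors_congr hadj]

end Exposure

namespace IsRegime

variable {ε η : ℝ} {k n : ℕ} {p : I}

theorem measureReal_not_hasISTs_le_of_dense (h : IsRegime ε η k n p) (hp : ε / 128 ≤ p) :
    G(Fin n, p).real {G | ¬ ∀ r, HasISTs G r ⌈(1 - ε) * n * p⌉₊} ≤ 4 / n := by
  have hn := h.le_card
  have hdegree := h.measureReal_not_hasDegreeOutside_le (Fintype.card_fin n) (A := ∅)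
    (by simpa using mul_nonneg (by linarith [h.pos]) n.cast_nonneg)
  have hlinks := h.measureReal_not_fewUncovered_and_manyCovered_le (Fintype.card_fin n)
    (A := ∅) (X := fun x : Fin n => {x}) (Fintype.card_fin n).le
    (fun x y hxy => Finset.disjoint_singleton.mpr hxy) (by simpa using fun _ => hp)
    (fun x => by
      simp only [Finset.empty_union, Finset.card_singleton, Nat.cast_one]
      linarith)
  refine (measureReal_mono (fun G hG => ?_)).trans ((measureReal_union_le _ _).trans
    ((add_le_add hdegree hlinks).trans_eq (by ring)))
  by_contra hgood
  simp only [Set.mem_union, Set.mem_ofPred_eq, not_or, not_not] at hG hgood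
  exact hG (hasISTs_of_singletons hgood.1 hgood.2.1 hgood.2.2)

-- The cores are found by inspecting only the edges inside `A`; the links to them leave `A`.
theorem measureReal_forall_isCoreFamily_not_linked_le {V : Type*} [Fintype V]
    (h : IsRegime ε η k n p) (hV : Fintype.card V = n) {A : Finset V}
    (hA : (#A : ℝ) ≤ ε / 16 * n) {s m : ℕ} (hs : ε / 128 ≤ p * s) (hm : m ≤ n) :
    G(V, p).real {G | (∃ D : Fin m → Finset V, IsCoreFamily G A s D) ∧
      ∀ D : Fin m → Finset V, IsCoreFamily G A s D →
        ¬ (FewUncovered G A D k ⌊ε / 4 * (n * p)⌋₊ ∧ ManyCovered G A D k)} ≤ 2 / n := by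
  have hn := h.le_card
  refine measureReal_exists_forall_bad_le p disjoint_compl_right
    (S := fun D : Fin m → Finset V => {G | IsCoreFamily G A s D})
    (fun D => dependsOnEdges_isCoreFamily s D)
    (fun D => dependsOnEdges_not_fewUncovered_and_manyCovered D k _) (by positivity) ?_
  rintro D ⟨G, hD : IsCoreFamily G A s D⟩
  refine h.measureReal_not_fewUncovered_and_manyCovered_le hV (by simpa using hm) hD.disjoint
    (fun j => by rwa [hD.card j]) fun j => ?_
  rw [Finset.union_eq_left.mpr (hD.subset j)]
  nlinarith [h.lt_one]

theorem measureReal_not_hasISTs_le_of_isJoined (h : IsRegime ε η k n p) {A : Finset (Fin n)}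
    (hA : (#A : ℝ) ≤ ε / 16 * n) {s a : ℕ} (hs₀ : 0 < s) (hsa : s ≤ a) (hs : ε / 128 ≤ p * s)
    (hsA : (⌈(1 - ε) * n * p⌉₊ + 1) * s + 3 * a ≤ #A)
    (hjoined : G(Fin n, p).real {G | ¬ IsJoined G A a} ≤ 1 / n) :
    G(Fin n, p).real {G | ¬ ∀ r, HasISTs G r ⌈(1 - ε) * n * p⌉₊} ≤ 5 / n := by
  have hAn : #A + 2 ≤ n := by
    have : (#A : ℝ) + 2 ≤ n := by nlinarith [h.le_card, h.lt_one]
    exact_mod_cast this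
  have hdegree := h.measureReal_not_hasDegreeOutside_le (Fintype.card_fin n) hA
  have hlinks := h.measureReal_forall_isCoreFamily_not_linked_le (Fintype.card_fin n) hA hs
    (m := ⌈(1 - ε) * n * p⌉₊ + 1) (by nlinarith)
  refine (measureReal_mono (fun G hG => ?_)).trans ((measureReal_union_le _ _).trans
    ((add_le_add hjoined ((measureReal_union_le _ _).trans (add_le_add hdegree hlinks))).trans_eq
      (by ring)))
  by_contra hgood
  simp only [Set.mem_union, Set.mem_ofPred_eq, not_or, not_not, not_and, not_forall] at hG hgood
  obtain ⟨hG_joined, hG_degree, hG_links⟩ := hgood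
  obtain ⟨D, hD, hfew, hmany⟩ := hG_links (hG_joined.exists_isCoreFamily hs₀ hsa hsA)
  obtain ⟨r, hr⟩ := hG
  exact hr (hasISTs_of_isCoreFamily hD (by nlinarith) hG_degree hfew hmany r)

lemma measureReal_not_isJoined_floor_le (h : IsRegime ε η k n p) {A : Finset (Fin n)}
    (hA : (#A : ℝ) ≤ ε / 16 * n) :
    G(Fin n, p).real {G | ¬ IsJoined G A ⌊ε / 128 * n⌋₊} ≤ 1 / n := by
  have hn := h.le_card
  have hfloor : ε / 256 * n ≤ ⌊ε / 128 * n⌋₊ := by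
    linarith [Nat.lt_floor_add_one (ε / 128 * n), h.le_mul_card]
  have hsq : (ε / 256 * n) ^ 2 ≤ (⌊ε / 128 * n⌋₊ : ℝ) * ⌊ε / 128 * n⌋₊ := by
    rw [← sq]
    have := h.pos
    gcongr
  have hpow : (1 - p : ℝ) ^ (⌊ε / 128 * n⌋₊ * ⌊ε / 128 * n⌋₊) ≤ Real.exp (-(3 * n)) := by
    refine one_sub_pow_le_exp_neg p.2.2 ?_
    push_cast
    calc (3 * n : ℝ) ≤ n * (ε ^ 2 * (n * p)) / 256 ^ 2 := by nlinarith [h.le_sq_mul_mean]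
      _ = p * (ε / 256 * n) ^ 2 := by ring
      _ ≤ p * (⌊ε / 128 * n⌋₊ * ⌊ε / 128 * n⌋₊) := mul_le_mul_of_nonneg_left hsq p.2.1
  have hfour : (4 : ℝ) ^ #A ≤ Real.exp (2 * n) :=
    calc (4 : ℝ) ^ #A ≤ Real.exp 2 ^ #A := by
          gcongr
          have : (2 : ℝ) ≤ Real.exp 1 := by linarith [Real.add_one_le_exp 1]
          calc (4 : ℝ) = 2 * 2 := by norm_num
            _ ≤ Real.exp 1 * Real.exp 1 := by gcongr
            _ = Real.exp 2 := by rw [← Real.exp_add]; norm_num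
      _ ≤ Real.exp (2 * n) := by
          rw [← Real.exp_nat_mul, Real.exp_le_exp]
          nlinarith [h.lt_one]
  calc G(Fin n, p).real {G | ¬ IsJoined G A ⌊ε / 128 * n⌋₊}
      ≤ Real.exp (2 * n) * Real.exp (-(3 * n)) :=
        (measureReal_not_isJoined_le p A _).trans (mul_le_mul hfour hpow
          (pow_nonneg (sub_nonneg.mpr p.2.2) _) (Real.exp_pos _).le)
    _ = (Real.exp n)⁻¹ := by rw [← Real.exp_add, ← Real.exp_neg]; ring_nf
    _ ≤ 1 / n := by
        rw [one_div]
        exact inv_anti₀ (by linarith) (by linarith [Real.add_one_le_exp (n : ℝ)])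

theorem measureReal_not_hasISTs_le_of_sparse (h : IsRegime ε η k n p) (hp : p < ε / 128) :
    G(Fin n, p).real {G | ¬ ∀ r, HasISTs G r ⌈(1 - ε) * n * p⌉₊} ≤ 5 / n := by
  have hε := h.pos
  have hmean := h.le_mean
  have hp₀ : (0 : ℝ) < p := pos_of_mul_pos_right (by linarith) n.cast_nonneg
  have hquot : p * (ε / 128 / p) = ε / 128 := by field_simp
  set s := ⌈ε / 128 / p⌉₊
  have hs : ε / 128 ≤ p * s := hquot.symm.trans_le (by gcongr; exact Nat.le_ceil _)
  have hs_lt : (s : ℝ) < ε / 128 / p + 1 := Nat.ceil_lt_add_one (by positivity)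
  have hps : (p : ℝ) * s ≤ ε / 64 := by nlinarith
  obtain ⟨A, -, hA⟩ := Finset.exists_subset_card_eq (s := (Finset.univ : Finset (Fin n)))
    (n := ⌊ε / 16 * n⌋₊) (by
      rw [Finset.card_univ, Fintype.card_fin]
      exact Nat.floor_le_of_le (by nlinarith [h.lt_one, h.le_card]))
  have hA' : (#A : ℝ) ≤ ε / 16 * n := by rw [hA]; exact Nat.floor_le (by positivity)
  have hmul_s (y : ℝ) (hy : y ≤ n * p) : y * s ≤ ε / 64 * n := by
    calc y * s ≤ n * p * s := by gcongr
      _ ≤ ε / 64 * n := by nlinarith [h.le_card]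
  refine h.measureReal_not_hasISTs_le_of_isJoined hA' (Nat.ceil_pos.mpr (by positivity)) ?_ hs ?_
    (h.measureReal_not_isJoined_floor_le hA')
  · exact Nat.le_floor (by linarith [hmul_s 2 (by linarith)])
  · have : ((⌈(1 - ε) * n * p⌉₊ : ℝ) + 1) * s + 3 * ⌊ε / 128 * n⌋₊ ≤ #A := by
      rw [hA]
      linarith [hmul_s _ h.ceil_add_one_le, Nat.floor_le (a := ε / 128 * n) (by positivity),
        Nat.lt_floor_add_one (ε / 16 * n), h.le_mul_card]
    exact_mod_cast this

theorem measureReal_not_hasISTs_le (h : IsRegime ε η k n p) :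
    G(Fin n, p).real {G | ¬ ∀ r, HasISTs G r ⌈(1 - ε) * n * p⌉₊} ≤ 5 / n := by
  rcases lt_or_ge (p : ℝ) (ε / 128) with hp | hp
  · exact h.measureReal_not_hasISTs_le_of_sparse hp
  · exact (h.measureReal_not_hasISTs_le_of_dense hp).trans (by gcongr; norm_num)

end IsRegime

section Threshold

lemma exp_le_inv_natCast_pow {x : ℝ} {n : ℕ} (hn : 0 < n) {m : ℕ} (h : x ≤ -(m * Real.log n)) :
    Real.exp x ≤ ((n : ℝ) ^ m)⁻¹ := by
  refine (Real.exp_le_exp.mpr h).trans_eq ?_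
  rw [Real.exp_neg, Real.exp_nat_mul, Real.exp_log (Nat.cast_pos.mpr hn)]

lemma exists_nat_exp_neg_mul_le {δ q : ℝ} (hδ : 0 < δ) (hq : 0 < q) :
    ∃ k : ℕ, Real.exp (-(k * δ)) ≤ q := by
  obtain ⟨k, hk⟩ := exists_nat_ge (-Real.log q / δ)
  rw [div_le_iff₀ hδ] at hk
  exact ⟨k, (Real.le_log_iff_exp_le hq).mp (by linarith)⟩

lemma exists_forall_isRegime {ε η : ℝ} (hε₀ : 0 < ε) (hε₁ : ε < 1) (hη : 0 < η) :
    ∃ k : ℕ, ∃ C : ℝ, 1 < C ∧ ∀ᶠ n : ℕ in atTop, ∀ p : I,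
      C * Real.log n / n ≤ p → (p : ℝ) ≤ 1 - η → IsRegime ε η k n p := by
  obtain ⟨k, hk⟩ := exists_nat_exp_neg_mul_le (δ := ε / 128) (q := ε / 16) (by positivity)
    (by positivity)
  obtain ⟨C, hC, hC_mean, hC_degree, hC_uncovered, hC_covered⟩ :=
    ((eventually_gt_atTop (1 : ℝ)).and <| (eventually_ge_atTop (768 * 16 ^ 2 / ε ^ 2)).and <|
      (eventually_ge_atTop (3 / (ε ^ 2 / 32))).and <|
      (eventually_ge_atTop ((k + 2) / (ε / 8))).and <|
      eventually_ge_atTop ((k + 4) / (η * ε / 1024))).exists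
  refine ⟨k, C, hC, ?_⟩
  filter_upwards [eventually_ge_atTop 3,
    tendsto_natCast_atTop_atTop.eventually_ge_atTop (256 / ε)] with n hn₃ hn p hCp hp
  have hn₀ : (0 : ℝ) < n := by positivity
  have hlog : 1 ≤ Real.log n := by
    have : (3 : ℝ) ≤ n := mod_cast hn₃
    rw [Real.le_log_iff_exp_le hn₀]
    linarith [Real.exp_one_lt_d9]
  have hmean {x c : ℝ} (hc : 0 < c) (hx : x / c ≤ C) : x * Real.log n ≤ c * (n * p) := by
    rw [div_le_iff₀ hc] at hx
    rw [div_le_iff₀ hn₀] at hCp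
    calc x * Real.log n ≤ C * c * Real.log n := by gcongr
      _ = c * (C * Real.log n) := by ring
      _ ≤ c * (n * p) := by rw [mul_comm (n : ℝ)]; gcongr
  have hk₀ : (k : ℝ) ≤ k * Real.log n := le_mul_of_one_le_right k.cast_nonneg hlog
  refine ⟨hε₀, hε₁, hk, hp, by rw [div_le_iff₀ hε₀] at hn; linarith, ?_, ?_, ?_, ?_⟩
  · linarith [hmean (by positivity) hC_mean]
  · refine exp_le_inv_natCast_pow (by lia) ?_
    push_cast
    linarith [hmean (by positivity) hC_degree]
  · refine exp_le_inv_natCast_pow (by lia) ?_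
    push_cast
    linarith [hmean (by positivity) hC_uncovered]
  · refine exp_le_inv_natCast_pow (by lia) ?_
    push_cast
    linarith [hmean (by positivity) hC_covered]

end Threshold

lemma erProb_le_one (n : ℕ) (p : I) (P : SimpleGraph (Fin n) → Prop) : erProb n p P ≤ 1 :=
  (erProb_eq_binomialRandom_real n p P).trans_le measureReal_le_one

lemma IsRegime.one_sub_le_erProb {ε η : ℝ} {k n : ℕ} {p : I} (h : IsRegime ε η k n p) :
    1 - 5 / n ≤ erProb n p fun G => ∀ r, HasISTs G r ⌈(1 - ε) * n * p⌉₊ := by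
  rw [erProb_eq_binomialRandom_real, sub_le_comm, ← probReal_compl_eq_one_sub .of_discrete]
  exact h.measureReal_not_hasISTs_le

end IndependentSpanningTrees

open IndependentSpanningTrees in
theorem stmt3_general {ε η : ℝ} (hε₀ : 0 < ε) (hε₁ : ε < 1) (hη : 0 < η) :
    ∃ C : ℝ, 1 < C ∧ ∀ p : ℕ → ℝ,
      (∀ᶠ n : ℕ in atTop, C * Real.log n / n ≤ p n ∧ p n ≤ 1 - η) →
      Tendsto (fun n : ℕ => erProb n (p n) fun G => ∀ r : Fin n, HasISTs G r ⌈(1 - ε) * n * p n⌉₊)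
        atTop (nhds 1) := by
  obtain ⟨k, C, hC, hregime⟩ := exists_forall_isRegime hε₀ hε₁ hη
  refine ⟨C, hC, fun p hp => ?_⟩
  have hlim : Tendsto (fun n : ℕ => 1 - (5 : ℝ) / n) atTop (nhds 1) := by
    simpa using (tendsto_const_div_atTop_nhds_zero_nat (5 : ℝ)).const_sub 1
  have hunit : ∀ᶠ n : ℕ in atTop, p n ∈ Set.Icc (0 : ℝ) 1 := by
    filter_upwards [hp] with n hpn
    exact ⟨le_trans (by positivity) hpn.1, by linarith [hpn.2]⟩
  refine tendsto_of_tendsto_of_tendsto_of_le_of_le' hlim tendsto_const_nhds ?_ ?_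
  · filter_upwards [hregime, hp, hunit] with n hregime hpn hpn'
    exact (hregime ⟨p n, hpn'⟩ hpn.1 hpn.2).one_sub_le_erProb
  · filter_upwards [hunit] with n hpn
    exact erProb_le_one n ⟨p n, hpn⟩ _

/-- For every `ε ∈ (0,1/2)` there is a constant `C > 1` such that whenever
`C log n / n ≤ p(n) ≤ 1 - ε`, with high probability `G(n, p(n))` contains, for every
vertex `r`, at least `⌈(1-ε) n p(n)⌉` independent spanning trees rooted at `r`. -/
theorem stmt3 (ε : ℝ) (hε₀ : 0 < ε) (hε₁ : ε < 1/2) :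
    ∃ C : ℝ, 1 < C ∧ ∀ p : ℕ → ℝ,
      (∀ᶠ n : ℕ in Filter.atTop, C * Real.log n / n ≤ p n ∧ p n ≤ 1 - ε) →
      Filter.Tendsto
        (fun n : ℕ => erProb n (p n)
          (fun G => ∀ r : Fin n, HasISTs G r ⌈(1 - ε) * n * p n⌉₊))
        Filter.atTop (nhds 1) :=
  stmt3_general hε₀ (hε₁.trans one_half_lt_one) hε₀
end
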